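/- arXiv:2311.01121 — 6 statements merged into one kernel-verified Lean document; each statement's English description precedes it below -/
import Mathlib

section
/- Let x : ℝ → ℝ² be a C^∞ curve. For every integer m ≥ 2 and every s₀ ∈ ℝ, one has the Taylor expansion ω(x(t) − x(s₀), x'(t)) = Σ_{l=2}^{m} c_l · (t − s₀)^l + o((t − s₀)^m) as t → s₀, where c_l = Σ_{1 ≤ j < h, j + h − 1 = l} ((h − j)/(j!·h!)) · ω(x^{(j)}(s₀), x^{(h)}(s₀)). -/
open Filter
open scoped Topology

/-- The standard area form on the plane: `ω(u,v) = u₁v₂ − u₂v₁`. -/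
noncomputable def om (u v : ℝ × ℝ) : ℝ := u.1 * v.2 - u.2 * v.1

lemma aux_clm (g : ℝ × ℝ →L[ℝ] ℝ) (x : ℝ → ℝ × ℝ) (hx : ContDiff ℝ (⊤ : ℕ∞) x) (n : ℕ) (s : ℝ) :
    iteratedDeriv n (fun t => g (x t)) s = g (iteratedDeriv n x s) := by
  have h := g.iteratedFDeriv_comp_left (x := s) hx.contDiffAt (i := n) (by exact_mod_cast le_top)
  rw [iteratedDeriv_eq_iteratedFDeriv, iteratedDeriv_eq_iteratedFDeriv]
  change (iteratedFDeriv ℝ n (g ∘ x) s) _ = _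
  rw [h]
  rfl

lemma aux_prod (u v : ℝ → ℝ) (hu : ContDiff ℝ (⊤ : ℕ∞) u) (hv : ContDiff ℝ (⊤ : ℕ∞) v)
    (l : ℕ) (s : ℝ) :
    iteratedDeriv l (fun t => (u t - u s) * deriv v t) s =
      ∑ j ∈ Finset.Icc 1 l, (l.choose j : ℝ) *
        (iteratedDeriv j u s * iteratedDeriv (l + 1 - j) v s) := by
  have hv' : ContDiff ℝ (⊤ : ℕ∞) (deriv v) := by
    have := (contDiff_infty_iff_deriv (f := v)).1 hv
    exact this.2
  have hle : ((l : ℕ) : WithTop ℕ∞) ≤ ((⊤ : ℕ∞) : WithTop ℕ∞) := by exact_mod_cast le_top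
  rw [iteratedDeriv_fun_mul ((hu.sub contDiff_const).of_le hle).contDiffAt
    (hv'.of_le hle).contDiffAt]
  rw [Finset.sum_range_succ']
  simp only [iteratedDeriv_zero, sub_self, mul_zero, zero_mul, add_zero]
  rw [Finset.range_eq_Ico, Finset.sum_Ico_add' (fun j => (l.choose j : ℝ) *
    iteratedDeriv j (fun t => u t - u s) s * iteratedDeriv (l - j) (deriv v) s) 0 l 1]
  refine Finset.sum_congr (by ext; simp) ?_
  intro j hj
  have hj' := Finset.mem_Icc.1 hj
  have hd : deriv (fun t => u t - u s) = deriv u := by ext t; simp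
  obtain ⟨k, rfl⟩ : ∃ k, j = k + 1 := ⟨j - 1, by omega⟩
  rw [iteratedDeriv_succ', hd, ← iteratedDeriv_succ', ← iteratedDeriv_succ',
    show l - (k + 1) + 1 = l + 1 - (k + 1) by omega]
  ring

lemma aux_sum (l : ℕ) (f : ℕ → ℝ) (h0 : ∀ j, j + j = l + 1 → f j = 0) :
    ∑ j ∈ Finset.Icc 1 l, f j =
      ∑ j ∈ (Finset.Icc 1 l).filter (fun j => j < l + 1 - j), (f j + f (l + 1 - j)) := by
  rw [Finset.sum_add_distrib, ← Finset.sum_filter_add_sum_filter_not _ (fun j => j < l + 1 - j)]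
  congr 1
  have : ∑ j ∈ (Finset.Icc 1 l).filter (fun j => ¬ j < l + 1 - j), f j =
      ∑ j ∈ (Finset.Icc 1 l).filter (fun j => l + 1 - j < j), f j := by
    symm
    apply Finset.sum_subset
    · intro j; simp only [Finset.mem_filter, Finset.mem_Icc]; omega
    · intro j h1 h2
      simp only [Finset.mem_filter, Finset.mem_Icc] at h1 h2
      exact h0 j (by omega)
  rw [this]
  refine Finset.sum_nbij' (fun j => l + 1 - j) (fun j => l + 1 - j) ?_ ?_ ?_ ?_ ?_
  · intro j; simp only [Finset.mem_filter, Finset.mem_Icc]; omega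
  · intro j; simp only [Finset.mem_filter, Finset.mem_Icc]; omega
  · intro j; simp only [Finset.mem_filter, Finset.mem_Icc]; omega
  · intro j; simp only [Finset.mem_filter, Finset.mem_Icc]; omega
  · intro j hj
    simp only [Finset.mem_filter, Finset.mem_Icc] at hj
    rw [show l + 1 - (l + 1 - j) = j by omega]

lemma aux_coeff (x : ℝ → ℝ × ℝ) (hx : ContDiff ℝ (⊤ : ℕ∞) x) (l : ℕ) (s : ℝ) :
    ((l.factorial : ℝ))⁻¹ * iteratedDeriv l (fun t => om (x t - x s) (deriv x t)) s =
      ∑ j ∈ (Finset.Icc 1 l).filter (fun j => j < l + 1 - j),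
          (((l + 1 - j) - j : ℕ) : ℝ) / (Nat.factorial j * Nat.factorial (l + 1 - j)) *
            om (iteratedDeriv j x s) (iteratedDeriv (l + 1 - j) x s) := by
  have e1 : ∀ n t, iteratedDeriv n (fun t => (x t).1) t = (iteratedDeriv n x t).1 :=
    fun n t => aux_clm (ContinuousLinearMap.fst ℝ ℝ ℝ) x hx n t
  have e2 : ∀ n t, iteratedDeriv n (fun t => (x t).2) t = (iteratedDeriv n x t).2 :=
    fun n t => aux_clm (ContinuousLinearMap.snd ℝ ℝ ℝ) x hx n t
  have h1 : ContDiff ℝ (⊤ : ℕ∞) (fun t => (x t).1) := hx.fst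
  have h2 : ContDiff ℝ (⊤ : ℕ∞) (fun t => (x t).2) := hx.snd
  have hF : (fun t => om (x t - x s) (deriv x t)) =
      fun t => ((x t).1 - (x s).1) * deriv (fun t => (x t).2) t -
        ((x t).2 - (x s).2) * deriv (fun t => (x t).1) t := by
    ext t
    have a1 := e1 1 t
    have a2 := e2 1 t
    rw [iteratedDeriv_one, iteratedDeriv_one] at a1 a2
    rw [a1, a2]
    simp [om]
  have hle : ((l : ℕ) : WithTop ℕ∞) ≤ ((⊤ : ℕ∞) : WithTop ℕ∞) := by exact_mod_cast le_top
  have d1 := (contDiff_infty_iff_deriv.1 h1).2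
  have d2 := (contDiff_infty_iff_deriv.1 h2).2
  rw [hF, iteratedDeriv_fun_sub
    (((h1.sub contDiff_const).mul d2).of_le hle).contDiffAt
    (((h2.sub contDiff_const).mul d1).of_le hle).contDiffAt,
    aux_prod _ _ h1 h2, aux_prod _ _ h2 h1, ← Finset.sum_sub_distrib, Finset.mul_sum]
  simp only [e1, e2]
  rw [aux_sum]
  · refine Finset.sum_congr rfl ?_
    intro j hj
    simp only [Finset.mem_filter, Finset.mem_Icc] at hj
    obtain ⟨⟨hj1, hjl⟩, hlt⟩ := hj
    rw [show l + 1 - (l + 1 - j) = j by omega]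
    obtain ⟨k, rfl⟩ : ∃ k, j = k + 1 := ⟨j - 1, by omega⟩
    obtain ⟨i, rfl⟩ : ∃ i, l = k + 1 + i := ⟨l - (k + 1), by omega⟩
    rw [show k + 1 + i + 1 - (k + 1) = i + 1 by omega] at *
    have c1 : ((k + 1 + i).choose (k + 1) : ℝ) =
        (k + 1 + i).factorial / ((k + 1).factorial * i.factorial) := by
      rw [Nat.cast_choose ℝ (by omega), show k + 1 + i - (k + 1) = i by omega]
    have c2 : ((k + 1 + i).choose (i + 1) : ℝ) =
        (k + 1 + i).factorial / ((i + 1).factorial * k.factorial) := by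
      rw [Nat.cast_choose ℝ (by omega), show k + 1 + i - (i + 1) = k by omega]
    rw [c1, c2, Nat.cast_sub (by omega), Nat.factorial_succ k, Nat.factorial_succ i]
    have p1 := Nat.cast_ne_zero (R := ℝ).2 (Nat.factorial_ne_zero k)
    have p2 := Nat.cast_ne_zero (R := ℝ).2 (Nat.factorial_ne_zero i)
    have p3 := Nat.cast_ne_zero (R := ℝ).2 (Nat.factorial_ne_zero (k + 1 + i))
    have p4 : (k : ℝ) + 1 ≠ 0 := by positivity
    have p5 : (i : ℝ) + 1 ≠ 0 := by positivity
    simp only [om]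
    push_cast
    field_simp
    ring
  · intro j hj
    rw [show l + 1 - j = j by omega]
    ring

theorem stmt_1 (x : ℝ → ℝ × ℝ) (hx : ContDiff ℝ (⊤ : ℕ∞) x) (m : ℕ) (hm : 2 ≤ m) (s₀ : ℝ) :
    (fun t : ℝ => om (x t - x s₀) (deriv x t) -
      ∑ l ∈ Finset.Icc 2 m,
        (∑ j ∈ (Finset.Icc 1 l).filter (fun j => j < l + 1 - j),
          (((l + 1 - j) - j : ℕ) : ℝ) / (Nat.factorial j * Nat.factorial (l + 1 - j)) *
            om (iteratedDeriv j x s₀) (iteratedDeriv (l + 1 - j) x s₀)) * (t - s₀) ^ l)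
      =o[𝓝 s₀] fun t : ℝ => (t - s₀) ^ m := by
  have hle : ((m : ℕ) : WithTop ℕ∞) ≤ ((⊤ : ℕ∞) : WithTop ℕ∞) := by exact_mod_cast le_top
  have hd : ContDiff ℝ (⊤ : ℕ∞) (deriv x) := (contDiff_infty_iff_deriv.1 hx).2
  have hs : ContDiff ℝ (⊤ : ℕ∞) (fun t => x t - x s₀) := hx.sub contDiff_const
  have hF : ContDiff ℝ (⊤ : ℕ∞) (fun t => om (x t - x s₀) (deriv x t)) :=
    (hs.fst.mul hd.snd).sub (hs.snd.mul hd.fst)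
  have key := taylor_isLittleO_univ (x₀ := s₀) (hF.of_le hle)
  refine key.congr_left (fun t => Eq.symm ?_)
  rw [taylor_within_apply]
  have : ∀ l, ((l.factorial : ℝ)⁻¹ * (t - s₀) ^ l) •
      iteratedDerivWithin l (fun t => om (x t - x s₀) (deriv x t)) Set.univ s₀ =
      (∑ j ∈ (Finset.Icc 1 l).filter (fun j => j < l + 1 - j),
          (((l + 1 - j) - j : ℕ) : ℝ) / (Nat.factorial j * Nat.factorial (l + 1 - j)) *
            om (iteratedDeriv j x s₀) (iteratedDeriv (l + 1 - j) x s₀)) * (t - s₀) ^ l := by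
    intro l
    rw [← aux_coeff x hx, iteratedDerivWithin_univ, smul_eq_mul]
    ring
  rw [Finset.sum_congr rfl (fun l _ => this l)]
  refine congrArg (fun z => om (x t - x s₀) (deriv x t) - z) ?_
  apply Finset.sum_subset
  · intro l; simp only [Finset.mem_range, Finset.mem_Icc]; omega
  · intro l h1 h2
    simp only [Finset.mem_range, Finset.mem_Icc] at h1 h2
    rw [Finset.filter_eq_empty_iff.2, Finset.sum_empty, zero_mul]
    intro j hj
    simp only [Finset.mem_Icc] at hj
    omega
end

section
/- Let x : ℝ → ℝ² be a C^∞ curve parametrized by affine arc length with affine curvature k. Then for every s₀ ∈ ℝ, as t → s₀: ω(x(t) − x(s₀), x'(t)) = (t−s₀)²/2 − (k(s₀)/24)(t−s₀)⁴ − (3k'(s₀)/120)(t−s₀)⁵ + (k(s₀)²/720 − k''(s₀)/120)(t−s₀)⁶ + o((t−s₀)⁶). -/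
open Filter
open scoped Topology

theorem om_hasDerivAt {f g : ℝ → ℝ × ℝ} {f' g' : ℝ × ℝ} {t : ℝ} (hf : HasDerivAt f f' t)
    (hg : HasDerivAt g g' t) :
    HasDerivAt (fun t => om (f t) (g t)) (om f' (g t) + om (f t) g') t := by
  have f1 : HasDerivAt (fun t => (f t).1) f'.1 t :=
    (hasFDerivAt_fst (𝕜 := ℝ) (p := f t)).comp_hasDerivAt t hf
  have f2 : HasDerivAt (fun t => (f t).2) f'.2 t :=
    (hasFDerivAt_snd (𝕜 := ℝ) (p := f t)).comp_hasDerivAt t hf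
  have g1 : HasDerivAt (fun t => (g t).1) g'.1 t :=
    (hasFDerivAt_fst (𝕜 := ℝ) (p := g t)).comp_hasDerivAt t hg
  have g2 : HasDerivAt (fun t => (g t).2) g'.2 t :=
    (hasFDerivAt_snd (𝕜 := ℝ) (p := g t)).comp_hasDerivAt t hg
  unfold om
  refine ((f1.mul g2).sub (f2.mul g1)).congr_deriv ?_
  ring

theorem om_contDiff {f g : ℝ → ℝ × ℝ} (hf : ContDiff ℝ (⊤ : ℕ∞) f)
    (hg : ContDiff ℝ (⊤ : ℕ∞) g) : ContDiff ℝ (⊤ : ℕ∞) (fun t => om (f t) (g t)) := by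
  unfold om
  fun_prop

theorem smooth_hasDerivAt {E : Type*} [NormedAddCommGroup E] [NormedSpace ℝ E] {f : ℝ → E}
    (hf : ContDiff ℝ (⊤ : ℕ∞) f) (n : ℕ) (t : ℝ) :
    HasDerivAt (iteratedDeriv n f) (iteratedDeriv (n + 1) f t) t := by
  rw [iteratedDeriv_succ]
  exact ((hf.differentiable_iteratedDeriv n (by exact_mod_cast WithTop.coe_lt_top _)) t).hasDerivAt

theorem smooth_iter {E : Type*} [NormedAddCommGroup E] [NormedSpace ℝ E] {f : ℝ → E}
    (hf : ContDiff ℝ (⊤ : ℕ∞) f) (n : ℕ) : ContDiff ℝ (⊤ : ℕ∞) (iteratedDeriv n f) := by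
  rw [iteratedDeriv_eq_iterate]
  exact hf.iterate_deriv n

theorem stmt_2 (x : ℝ → ℝ × ℝ) (hx : ContDiff ℝ (⊤ : ℕ∞) x)
    (haff : ∀ s : ℝ, om (deriv x s) (iteratedDeriv 2 x s) = 1)
    (k : ℝ → ℝ) (hk : ∀ s : ℝ, k s = om (iteratedDeriv 2 x s) (iteratedDeriv 3 x s))
    (s₀ : ℝ) :
    (fun t : ℝ => om (x t - x s₀) (deriv x t) -
        ((t - s₀) ^ 2 / 2 - k s₀ / 24 * (t - s₀) ^ 4 - 3 * deriv k s₀ / 120 * (t - s₀) ^ 5 +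
          ((k s₀) ^ 2 / 720 - deriv (deriv k) s₀ / 120) * (t - s₀) ^ 6))
      =o[𝓝 s₀] fun t : ℝ => (t - s₀) ^ 6 := by
  have hks : ContDiff ℝ (⊤ : ℕ∞) k := by
    rw [show k = _ from funext hk]
    exact om_contDiff (smooth_iter hx 2) (smooth_iter hx 3)
  have e1 : deriv x = iteratedDeriv 1 x := iteratedDeriv_one.symm
  have ek1 : deriv k = iteratedDeriv 1 k := iteratedDeriv_one.symm
  have ek2 : deriv (deriv k) = iteratedDeriv 2 k := by
    rw [iteratedDeriv_succ, iteratedDeriv_one]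
  rw [ek2, ek1]
  rw [e1] at haff ⊢
  have hX := smooth_hasDerivAt hx
  have hK := smooth_hasDerivAt hks
  have hK0 : ∀ t, HasDerivAt k (iteratedDeriv 1 k t) t := by simpa using hK 0
  have hX0 : ∀ t, HasDerivAt (fun t => x t - x s₀) (iteratedDeriv 1 x t) t := by
    intro t
    have := hX 0 t
    rw [iteratedDeriv_zero] at this
    exact this.sub_const _
  have h13 : ∀ t, om (iteratedDeriv 1 x t) (iteratedDeriv 3 x t) = 0 := by
    intro t
    have h := om_hasDerivAt (hX 1 t) (hX 2 t)
    rw [show (fun t => om (iteratedDeriv 1 x t) (iteratedDeriv 2 x t)) = fun _ => (1 : ℝ) from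
      funext haff] at h
    have h2 := h.unique (hasDerivAt_const t (1 : ℝ))
    simp only [om] at h2 ⊢
    rw [show 1 + 1 = 2 from rfl, show 2 + 1 = 3 from rfl] at h2
    linarith
  set F : ℝ → ℝ := fun t => om (x t - x s₀) (iteratedDeriv 1 x t) with hF
  set G : ℝ → ℝ := fun t => om (x t - x s₀) (iteratedDeriv 2 x t) with hG
  have hFs : ContDiff ℝ (⊤ : ℕ∞) F := om_contDiff (hx.sub contDiff_const) (smooth_iter hx 1)
  have dF : ∀ t, HasDerivAt F (G t) t := by
    intro t
    refine (om_hasDerivAt (hX0 t) (hX 1 t)).congr_deriv ?_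
    simp only [hG, om]
    ring
  have dG : ∀ t, HasDerivAt G (1 - k t * F t) t := by
    intro t
    refine (om_hasDerivAt (hX0 t) (hX 2 t)).congr_deriv ?_
    have a1 := haff t
    have a2 := h13 t
    have a3 := hk t
    simp only [hF]
    rw [a1, a3]
    simp only [om] at *
    generalize iteratedDeriv 1 x t = p at *
    generalize iteratedDeriv 2 x t = q at *
    norm_num at *
    generalize iteratedDeriv 3 x t = r at *
    generalize (x t).1 - (x s₀).1 = y1
    generalize (x t).2 - (x s₀).2 = y2
    linear_combination (-(y1 * r.2 - y2 * r.1)) * a1 + (y1 * q.2 - y2 * q.1) * a2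
  have F0 : F s₀ = 0 := by simp [hF, om]
  have G0 : G s₀ = 0 := by simp [hG, om]
  have i1 : iteratedDeriv 1 F = G := by
    rw [iteratedDeriv_one]; exact funext fun t => (dF t).deriv
  have i2 : iteratedDeriv 2 F = fun t => 1 - k t * F t := by
    rw [iteratedDeriv_succ, i1]; exact funext fun t => (dG t).deriv
  have i3 : iteratedDeriv 3 F = fun t => -(iteratedDeriv 1 k t * F t + k t * G t) := by
    rw [iteratedDeriv_succ, i2]
    exact funext fun t => (((hK0 t).mul (dF t)).const_sub 1).deriv
  have i4 : iteratedDeriv 4 F = fun t => -(iteratedDeriv 2 k t * F t + 2 * (iteratedDeriv 1 k t * G t)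
      + k t * (1 - k t * F t)) := by
    rw [iteratedDeriv_succ, i3]
    refine funext fun t => ?_
    refine ((((hK 1 t).mul (dF t)).add ((hK0 t).mul (dG t))).neg).deriv.trans ?_
    ring
  have d2 : ∀ t, HasDerivAt (fun t => 1 - k t * F t) _ t :=
    fun t => (((hK0 t).mul (dF t)).const_sub 1)
  have i5 : iteratedDeriv 5 F = fun t => -(iteratedDeriv 3 k t * F t + 3 * (iteratedDeriv 2 k t * G t)
      + 3 * (iteratedDeriv 1 k t * (1 - k t * F t))
      - k t * (iteratedDeriv 1 k t * F t + k t * G t)) := by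
    rw [iteratedDeriv_succ, i4]
    refine funext fun t => ?_
    refine (((((hK 2 t).mul (dF t)).add (((hK 1 t).mul (dG t)).const_mul 2)).add
      ((hK0 t).mul (d2 t))).neg).deriv.trans ?_
    ring
  have i6 : iteratedDeriv 6 F s₀ = k s₀ ^ 2 - 6 * iteratedDeriv 2 k s₀ := by
    rw [iteratedDeriv_succ, i5]
    refine ((((((hK 3 s₀).mul (dF s₀)).add (((hK 2 s₀).mul (dG s₀)).const_mul 3)).add
      (((hK 1 s₀).mul (d2 s₀)).const_mul 3)).sub
      ((hK0 s₀).mul (((hK 1 s₀).mul (dF s₀)).add ((hK0 s₀).mul (dG s₀))))).neg).deriv.trans ?_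
    simp only [Pi.add_apply, Pi.mul_apply, F0, G0]
    ring
  have T := taylor_isLittleO_univ (n := 6) (x₀ := s₀) (contDiff_infty.mp hFs 6)
  refine T.congr_left fun t => ?_
  rw [taylor_within_apply]
  simp only [Finset.sum_range_succ, Finset.sum_range_zero, iteratedDerivWithin_univ, i1, i2, i3, i4,
    i5, i6, iteratedDeriv_zero, F0, G0, Nat.factorial, smul_eq_mul]
  push_cast
  ring
end

section
/- Let x : ℝ → ℝ² be a C^∞, λ-periodic curve parametrized by affine arc length with affine curvature k, and for r ≤ s let F(r,s) := (1/2)∫_r^s ω(x(t) − x(r), x'(t)) dt. Then there exists a function ε : (0, λ] → ℝ with ε(h)/h⁷ → 0 as h → 0⁺ such that for every r ∈ ℝ and every h ∈ (0, λ]: | F(r, r+h) − (1/2)·( h³/6 − k(r)·h⁵/120 − 3k'(r)·h⁶/720 − k''(r)·h⁷/840 + k(r)²·h⁷/5040 ) | ≤ ε(h). In other words, F(r,s) = (1/2)( (s−r)³/3! − k(r)(s−r)⁵/5! − 3k'(r)(s−r)⁶/6! − k''(r)(s−r)⁷/(7·5!) + k(r)²(s−r)⁷/7! ) + o((s−r)⁷)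 uniformly in r as s − r → 0. -/
open Filter
open scoped Topology

theorem aux_int (f f' : ℝ → ℝ) (L C : ℝ) (n : ℕ) (hC : 0 ≤ C) (h0 : f 0 = 0)
    (hd : ∀ t, HasDerivAt f (f' t) t)
    (hb : ∀ t, 0 ≤ t → t ≤ L → |f' t| ≤ C * t ^ n) :
    ∀ t, 0 ≤ t → t ≤ L → |f t| ≤ C * t ^ (n + 1) := by
  intro t ht htL
  have := norm_image_sub_le_of_norm_deriv_le_segment' (f := f) (f' := f') (a := 0) (b := t)
    (C := C * t ^ n) (fun y _ => (hd y).hasDerivWithinAt)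
    (fun y hy => by
      rw [Real.norm_eq_abs]
      refine (hb y hy.1 (hy.2.le.trans htL)).trans ?_
      have := pow_le_pow_left₀ hy.1 hy.2.le n
      gcongr) t ⟨ht, le_rfl⟩
  rw [h0, sub_zero, sub_zero, Real.norm_eq_abs] at this
  rw [pow_succ]; linarith

theorem aux_int2 (f f' f'' : ℝ → ℝ) (L C : ℝ) (n : ℕ) (hC : 0 ≤ C) (h0 : f 0 = 0)
    (h0' : f' 0 = 0)
    (hd : ∀ t, HasDerivAt f (f' t) t) (hd' : ∀ t, HasDerivAt f' (f'' t) t)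
    (hb : ∀ t, 0 ≤ t → t ≤ L → |f'' t| ≤ C * t ^ n) :
    ∀ t, 0 ≤ t → t ≤ L → |f t| ≤ C * t ^ (n + 2) :=
  aux_int f f' L C (n + 1) hC h0 hd (aux_int f' f'' L C n hC h0' hd' hb)

theorem aux_poly (a : ℝ) (n : ℕ) (t : ℝ) :
    HasDerivAt (fun s : ℝ => a * s ^ n) (a * (n * t ^ (n - 1))) t :=
  (hasDerivAt_pow n t).const_mul a

theorem aux_main (K0 K1 K2 K3 p p1 g : ℝ → ℝ) (B L : ℝ) (hB : 0 ≤ B) (hL : 0 ≤ L)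
    (hK0 : ∀ t, HasDerivAt K0 (K1 t) t) (hK1 : ∀ t, HasDerivAt K1 (K2 t) t)
    (hK2 : ∀ t, HasDerivAt K2 (K3 t) t)
    (hg : ∀ t, HasDerivAt g (p t) t) (hp : ∀ t, HasDerivAt p (p1 t) t)
    (hp1 : ∀ t, HasDerivAt p1 (1 - K0 t * p t) t)
    (g0 : g 0 = 0) (p0 : p 0 = 0) (p10 : p1 0 = 0)
    (bK0 : ∀ t, |K0 t| ≤ B) (bK1 : ∀ t, |K1 t| ≤ B) (bK2 : ∀ t, |K2 t| ≤ B)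
    (bK3 : ∀ t, |K3 t| ≤ B) (bp : ∀ t, |p t| ≤ B) :
    ∀ t, 0 ≤ t → t ≤ L →
      |g t - (t ^ 3 / 6 - K0 0 * t ^ 5 / 120 - 3 * K1 0 * t ^ 6 / 720 -
            K2 0 * t ^ 7 / 840 + (K0 0) ^ 2 * t ^ 7 / 5040)| ≤
        (B + B * (B * (1 + B * B)) +
          B * (B * (1 + B * B) + B * (B * (1 + B * B)) * L)) * t ^ 8 := by
  set C1 := 1 + B * B with hC1
  set C2 := B * C1 with hC2
  set C3 := B * C1 + B * C2 * L with hC3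
  have C1n : 0 ≤ C1 := by positivity
  have C2n : 0 ≤ C2 := by positivity
  have C3n : 0 ≤ C3 := by positivity
  have e1 : ∀ t, 0 ≤ t → t ≤ L → |p t| ≤ C1 * t ^ 2 := by
    refine aux_int2 p p1 _ L C1 0 C1n p0 p10 hp hp1 ?_
    intro t _ _
    rw [pow_zero, mul_one]
    calc |1 - K0 t * p t| ≤ |1| + |K0 t * p t| := abs_sub _ _
      _ ≤ 1 + B * B := by
        rw [abs_one, abs_mul]
        have := mul_le_mul (bK0 t) (bp t) (abs_nonneg _) hB
        linarith
  have e2 : ∀ t, 0 ≤ t → t ≤ L → |p t - 1 / 2 * t ^ 2| ≤ C2 * t ^ 4 := by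
    refine aux_int2 (fun t => p t - 1 / 2 * t ^ 2) (fun t => p1 t - 1 * t ^ 1)
      (fun t => - (K0 t * p t)) L C2 2 C2n (by simp [p0]) (by simp [p10]) ?_ ?_ ?_
    · intro t
      refine HasDerivAt.congr_deriv ((hp t).sub (aux_poly (1/2) 2 t)) ?_
      norm_num <;> ring
    · intro t
      refine HasDerivAt.congr_deriv ((hp1 t).sub (aux_poly 1 1 t)) ?_
      norm_num <;> ring
    · intro t h1 h2
      rw [abs_neg, abs_mul]
      have := mul_le_mul (bK0 t) (e1 t h1 h2) (abs_nonneg _) hB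
      linarith
  have d1 : ∀ t, 0 ≤ t → t ≤ L → |K0 t - K0 0| ≤ B * t ^ 1 := by
    refine aux_int (fun t => K0 t - K0 0) K1 L B 0 hB (by simp) ?_ ?_
    · intro t; exact (hK0 t).sub_const _
    · intro t _ _; simpa using bK1 t
  have d3 : ∀ t, 0 ≤ t → t ≤ L →
      |K0 t - K0 0 - K1 0 * t ^ 1 - K2 0 / 2 * t ^ 2| ≤ B * t ^ 3 := by
    refine aux_int2 (fun t => K0 t - K0 0 - K1 0 * t ^ 1 - K2 0 / 2 * t ^ 2)
      (fun t => K1 t - K1 0 - K2 0 * t ^ 1) (fun t => K2 t - K2 0) L B 1 hB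
      (by simp) (by simp) ?_ ?_ ?_
    · intro t
      refine HasDerivAt.congr_deriv ((((hK0 t).sub_const (K0 0)).sub (aux_poly (K1 0) 1 t)).sub
        (aux_poly (K2 0 / 2) 2 t)) ?_
      norm_num <;> ring
    · intro t
      refine HasDerivAt.congr_deriv (((hK1 t).sub_const (K1 0)).sub (aux_poly (K2 0) 1 t)) ?_
      norm_num <;> ring
    · refine aux_int (fun t => K2 t - K2 0) K3 L B 0 hB (by simp) ?_ ?_
      · intro t; exact (hK2 t).sub_const _
      · intro t _ _; simpa using bK3 t
  have e3 : ∀ t, 0 ≤ t → t ≤ L →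
      |p t - 1 / 2 * t ^ 2 + K0 0 / 24 * t ^ 4| ≤ C3 * t ^ 5 := by
    refine aux_int2 (fun t => p t - 1 / 2 * t ^ 2 + K0 0 / 24 * t ^ 4)
      (fun t => p1 t - 1 * t ^ 1 + K0 0 / 6 * t ^ 3)
      (fun t => - ((K0 t - K0 0) * p t + K0 0 * (p t - 1 / 2 * t ^ 2)))
      L C3 3 C3n (by simp [p0]) (by simp [p10]) ?_ ?_ ?_
    · intro t
      refine HasDerivAt.congr_deriv (((hp t).sub (aux_poly (1/2) 2 t)).add (aux_poly (K0 0 / 24) 4 t)) ?_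
      norm_num <;> ring
    · intro t
      refine HasDerivAt.congr_deriv (((hp1 t).sub (aux_poly 1 1 t)).add (aux_poly (K0 0 / 6) 3 t)) ?_
      norm_num <;> ring
    · intro t h1 h2
      rw [abs_neg]
      refine (abs_add_le _ _).trans ?_
      rw [abs_mul, abs_mul]
      have a1 := mul_le_mul (d1 t h1 h2) (e1 t h1 h2) (abs_nonneg _) (by positivity)
      have a2 := mul_le_mul (bK0 0) (e2 t h1 h2) (abs_nonneg _) hB
      have a3 : B * C2 * t ^ 3 * t ≤ B * C2 * t ^ 3 * L := by gcongr
      rw [hC3]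
      linarith
  have C4n : 0 ≤ B + B * C2 + B * C3 := by positivity
  have e4 : ∀ t, 0 ≤ t → t ≤ L →
      |p t - 1 / 2 * t ^ 2 + K0 0 / 24 * t ^ 4 + K1 0 / 40 * t ^ 5
        + (K2 0 / 120 - K0 0 ^ 2 / 720) * t ^ 6| ≤ (B + B * C2 + B * C3) * t ^ 7 := by
    refine aux_int2 (fun t => p t - 1 / 2 * t ^ 2 + K0 0 / 24 * t ^ 4 + K1 0 / 40 * t ^ 5
        + (K2 0 / 120 - K0 0 ^ 2 / 720) * t ^ 6)
      (fun t => p1 t - 1 * t ^ 1 + K0 0 / 6 * t ^ 3 + K1 0 / 8 * t ^ 4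
        + (K2 0 / 20 - K0 0 ^ 2 / 120) * t ^ 5)
      (fun t => - ((K0 t - K0 0 - K1 0 * t ^ 1 - K2 0 / 2 * t ^ 2) * (1 / 2 * t ^ 2)
        + (K0 t - K0 0) * (p t - 1 / 2 * t ^ 2)
        + K0 0 * (p t - 1 / 2 * t ^ 2 + K0 0 / 24 * t ^ 4)))
      L _ 5 C4n (by simp [p0]) (by simp [p10]) ?_ ?_ ?_
    · intro t
      refine HasDerivAt.congr_deriv (((((hp t).sub (aux_poly (1/2) 2 t)).add (aux_poly (K0 0 / 24) 4 t)).add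
        (aux_poly (K1 0 / 40) 5 t)).add
        (aux_poly (K2 0 / 120 - K0 0 ^ 2 / 720) 6 t)) ?_
      norm_num <;> ring
    · intro t
      refine HasDerivAt.congr_deriv (((((hp1 t).sub (aux_poly 1 1 t)).add (aux_poly (K0 0 / 6) 3 t)).add
        (aux_poly (K1 0 / 8) 4 t)).add
        (aux_poly (K2 0 / 20 - K0 0 ^ 2 / 120) 5 t)) ?_
      norm_num <;> ring
    · intro t h1 h2
      rw [abs_neg]
      refine (abs_add_three _ _ _).trans ?_
      rw [abs_mul _ (1 / 2 * t ^ 2), abs_mul (K0 t - K0 0), abs_mul (K0 0)]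
      have a0 : |1 / 2 * t ^ 2| ≤ t ^ 2 := by
        rw [abs_of_nonneg (by positivity)]; nlinarith [sq_nonneg t]
      have a1 := mul_le_mul (d3 t h1 h2) a0 (abs_nonneg _) (by positivity)
      have a2 := mul_le_mul (d1 t h1 h2) (e2 t h1 h2) (abs_nonneg _) (by positivity)
      have a3 := mul_le_mul (bK0 0) (e3 t h1 h2) (abs_nonneg _) hB
      linarith
  have e5 := aux_int (fun t => g t - 1 / 6 * t ^ 3 + K0 0 / 120 * t ^ 5 + K1 0 / 240 * t ^ 6
        + (K2 0 / 840 - K0 0 ^ 2 / 5040) * t ^ 7) _ L _ 7 C4n (by simp [g0]) (by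
      intro t
      refine HasDerivAt.congr_deriv (((((hg t).sub (aux_poly (1/6) 3 t)).add (aux_poly (K0 0 / 120) 5 t)).add
        (aux_poly (K1 0 / 240) 6 t)).add
        (aux_poly (K2 0 / 840 - K0 0 ^ 2 / 5040) 7 t)) ?_
      norm_num <;> ring) e4
  intro t h1 h2
  convert e5 t h1 h2 using 2
  ring

theorem aux_bdd (f : ℝ → ℝ) (c : ℝ) (hc : 0 < c) (hf : Continuous f)
    (hp : ∀ s, f (s + c) = f s) : ∃ B, 0 ≤ B ∧ ∀ s, |f s| ≤ B := by
  obtain ⟨B, hB⟩ := (isCompact_Icc (a := (0:ℝ)) (b := c)).exists_bound_of_continuousOn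
    hf.continuousOn
  refine ⟨B, (norm_nonneg _).trans (hB 0 ⟨le_rfl, hc.le⟩), fun s => ?_⟩
  obtain ⟨y, hy, he⟩ := Function.Periodic.exists_mem_Ico₀ (f := f) hp hc s
  rw [he]
  exact hB y ⟨hy.1, hy.2.le⟩

theorem aux_perderiv {E : Type*} [NormedAddCommGroup E] [NormedSpace ℝ E]
    (f : ℝ → E) (c : ℝ) (hp : ∀ s, f (s + c) = f s) :
    ∀ s, deriv f (s + c) = deriv f s := by
  intro s
  rw [← deriv_comp_add_const]
  congr 1
  exact funext hp

theorem aux_om {u v : ℝ → ℝ × ℝ} {u' v' : ℝ × ℝ} {t : ℝ} (hu : HasDerivAt u u' t)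
    (hv : HasDerivAt v v' t) :
    HasDerivAt (fun s => om (u s) (v s)) (om u' (v t) + om (u t) v') t := by
  have h1 := (hasFDerivAt_fst (𝕜 := ℝ) (p := u t)).comp_hasDerivAt t hu
  have h2 := (hasFDerivAt_snd (𝕜 := ℝ) (p := u t)).comp_hasDerivAt t hu
  have h3 := (hasFDerivAt_fst (𝕜 := ℝ) (p := v t)).comp_hasDerivAt t hv
  have h4 := (hasFDerivAt_snd (𝕜 := ℝ) (p := v t)).comp_hasDerivAt t hv
  refine HasDerivAt.congr_deriv ((h1.mul h4).sub (h2.mul h3)) ?_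
  simp [om]; ring

theorem stmt_3 (x : ℝ → ℝ × ℝ) (lam : ℝ) (hlam : 0 < lam) (hx : ContDiff ℝ (⊤ : ℕ∞) x)
    (haff : ∀ s : ℝ, om (deriv x s) (iteratedDeriv 2 x s) = 1)
    (hper : ∀ s : ℝ, x (s + lam) = x s)
    (k : ℝ → ℝ) (hk : ∀ s : ℝ, k s = om (iteratedDeriv 2 x s) (iteratedDeriv 3 x s))
    (F : ℝ → ℝ → ℝ)
    (hF : ∀ r s : ℝ, F r s = (1 / 2) * ∫ t in r..s, om (x t - x r) (deriv x t)) :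
    ∃ ε : ℝ → ℝ,
      Tendsto (fun h => ε h / h ^ 7) (𝓝[>] 0) (𝓝 0) ∧
      ∀ r : ℝ, ∀ h ∈ Set.Ioc 0 lam,
        |F r (r + h) -
          (1 / 2) * (h ^ 3 / 6 - k r * h ^ 5 / 120 - 3 * deriv k r * h ^ 6 / 720 -
            deriv (deriv k) r * h ^ 7 / 840 + (k r) ^ 2 * h ^ 7 / 5040)| ≤ ε h := by
  have i2 : iteratedDeriv 2 x = deriv (deriv x) := by
    rw [iteratedDeriv_succ, iteratedDeriv_one]
  have i3 : iteratedDeriv 3 x = deriv (deriv (deriv x)) := by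
    rw [iteratedDeriv_succ, i2]
  rw [i2] at haff hk
  rw [i3] at hk
  have cd : ∀ {E : Type} [NormedAddCommGroup E] [NormedSpace ℝ E] (f : ℝ → E),
      ContDiff ℝ (⊤ : ℕ∞) f → ContDiff ℝ (⊤ : ℕ∞) (deriv f) := fun f hf =>
    (contDiff_infty_iff_deriv.1 hf).2
  have hd : ∀ {E : Type} [NormedAddCommGroup E] [NormedSpace ℝ E] (f : ℝ → E),
      ContDiff ℝ (⊤ : ℕ∞) f → ∀ t, HasDerivAt f (deriv f t) t := fun f hf t =>
    ((contDiff_infty_iff_deriv.1 hf).1 t).hasDerivAt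
  have hx1 := cd _ hx
  have hx2 := cd _ hx1
  have hx3 := cd _ hx2
  have px1 := aux_perderiv _ _ hper
  have px2 := aux_perderiv _ _ px1
  have px3 := aux_perderiv _ _ px2
  have ck : ContDiff ℝ (⊤ : ℕ∞) k := by
    rw [funext hk]
    unfold om
    fun_prop
  have pk : ∀ s, k (s + lam) = k s := fun s => by rw [hk, hk, px2, px3]
  have ck1 := cd _ ck
  have ck2 := cd _ ck1
  have ck3 := cd _ ck2
  have pk1 := aux_perderiv _ _ pk
  have pk2 := aux_perderiv _ _ pk1
  have pk3 := aux_perderiv _ _ pk2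
  obtain ⟨B0, hB0, b0⟩ := aux_bdd _ lam hlam ck.continuous pk
  obtain ⟨B1, hB1, b1⟩ := aux_bdd _ lam hlam ck1.continuous pk1
  obtain ⟨B2, hB2, b2⟩ := aux_bdd _ lam hlam ck2.continuous pk2
  obtain ⟨B3, hB3, b3⟩ := aux_bdd _ lam hlam ck3.continuous pk3
  obtain ⟨A1, hA1, a1⟩ := aux_bdd (fun s => (x s).1) lam hlam (by have := hx.continuous; fun_prop)
    (fun s => by simp only [hper])
  obtain ⟨A2, hA2, a2⟩ := aux_bdd (fun s => (x s).2) lam hlam (by have := hx.continuous; fun_prop)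
    (fun s => by simp only [hper])
  obtain ⟨A3, hA3, a3⟩ := aux_bdd (fun s => (deriv x s).1) lam hlam
    (by have := hx1.continuous; fun_prop) (fun s => by simp only [px1])
  obtain ⟨A4, hA4, a4⟩ := aux_bdd (fun s => (deriv x s).2) lam hlam
    (by have := hx1.continuous; fun_prop) (fun s => by simp only [px1])
  have bp : ∀ r t, |om (x t - x r) (deriv x t)| ≤ (A1 + A1) * A4 + (A2 + A2) * A3 := by
    intro r t
    unfold om
    refine (abs_sub _ _).trans ?_
    rw [abs_mul, abs_mul]
    have h1 : |(x t - x r).1| ≤ A1 + A1 := (abs_sub _ _).trans (add_le_add (a1 t) (a1 r))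
    have h2 : |(x t - x r).2| ≤ A2 + A2 := (abs_sub _ _).trans (add_le_add (a2 t) (a2 r))
    exact add_le_add (mul_le_mul h1 (a4 t) (abs_nonneg _) (by positivity))
      (mul_le_mul h2 (a3 t) (abs_nonneg _) (by positivity))
  set Ap := (A1 + A1) * A4 + (A2 + A2) * A3 with hAp
  have hAp0 : 0 ≤ Ap := by positivity
  set B := B0 + B1 + B2 + B3 + Ap with hBdef
  have hB : 0 ≤ B := by positivity
  -- x''' = -k x'
  have hom1 : ∀ t, om (deriv x t) (deriv (deriv (deriv x)) t) = 0 := by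
    intro t
    have h1 := aux_om (hd _ hx1 t) (hd _ hx2 t)
    rw [funext haff] at h1
    have h2 := h1.unique (hasDerivAt_const t (1:ℝ))
    have h3 : om (deriv (deriv x) t) (deriv (deriv x) t) = 0 := by unfold om; ring
    rw [h3, zero_add] at h2
    exact h2
  have key : ∀ r t, om (x t - x r) (deriv (deriv (deriv x)) t) =
      - (k t * om (x t - x r) (deriv x t)) := by
    intro r t
    have e1 := haff t
    have e2 := hom1 t
    rw [hk t]
    generalize x t - x r = u at *
    generalize deriv (deriv (deriv x)) t = w at *
    generalize deriv (deriv x) t = v at *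
    generalize deriv x t = z at *
    unfold om at *
    linear_combination (-(u.1 * w.2 - u.2 * w.1)) * e1 + (u.1 * v.2 - u.2 * v.1) * e2
  obtain ⟨C, hC⟩ : ∃ C, C = (B + B * (B * (1 + B * B)) +
          B * (B * (1 + B * B) + B * (B * (1 + B * B)) * lam)) := ⟨_, rfl⟩
  refine ⟨fun h => (1 / 2) * (C * h ^ 8), ?_, ?_⟩
  · have h1 : Tendsto (fun h : ℝ => (1 / 2) * C * h) (𝓝[>] 0) (𝓝 0) := by
      have : Tendsto (fun h : ℝ => (1 / 2) * C * h) (𝓝 0) (𝓝 ((1 / 2) * C * 0)) :=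
        (continuous_const.mul continuous_id).tendsto 0
      rw [mul_zero] at this
      exact this.mono_left nhdsWithin_le_nhds
    refine h1.congr' ?_
    filter_upwards [self_mem_nhdsWithin] with h hh
    have : h ≠ 0 := ne_of_gt hh
    field_simp
  · intro r h hh
    have dx : ∀ t, HasDerivAt (fun t => x t - x r) (deriv x t) t :=
      fun t => (hd _ hx t).sub_const _
    have dp : ∀ t, HasDerivAt (fun t => om (x t - x r) (deriv x t))
        (om (x t - x r) (deriv (deriv x) t)) t := by
      intro t
      refine HasDerivAt.congr_deriv (aux_om (dx t) (hd _ hx1 t)) ?_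
      simp only [om]; ring
    have dp1 : ∀ t, HasDerivAt (fun t => om (x t - x r) (deriv (deriv x) t))
        (1 - k t * om (x t - x r) (deriv x t)) t := by
      intro t
      refine HasDerivAt.congr_deriv (aux_om (dx t) (hd _ hx2 t)) ?_
      rw [haff, key]; ring
    have cp : Continuous (fun t => om (x t - x r) (deriv x t)) :=
      continuous_iff_continuousAt.2 fun t => (dp t).continuousAt
    have dg : ∀ s, HasDerivAt (fun s => ∫ t in r..s, om (x t - x r) (deriv x t))
        (om (x s - x r) (deriv x s)) s := fun s =>
      intervalIntegral.integral_hasDerivAt_right (cp.intervalIntegrable _ _)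
        (cp.stronglyMeasurableAtFilter _ _) cp.continuousAt
    have main := aux_main (fun t => k (r + t)) (fun t => deriv k (r + t))
      (fun t => deriv (deriv k) (r + t)) (fun t => deriv (deriv (deriv k)) (r + t))
      (fun t => om (x (r + t) - x r) (deriv x (r + t)))
      (fun t => om (x (r + t) - x r) (deriv (deriv x) (r + t)))
      (fun s => ∫ t in r..(r + s), om (x t - x r) (deriv x t)) B lam hB hlam.le
      (fun t => (hd _ ck (r + t)).comp_const_add r t)
      (fun t => (hd _ ck1 (r + t)).comp_const_add r t)
      (fun t => (hd _ ck2 (r + t)).comp_const_add r t)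
      (fun t => (dg (r + t)).comp_const_add r t)
      (fun t => (dp (r + t)).comp_const_add r t)
      (fun t => (dp1 (r + t)).comp_const_add r t)
      (by simp) (by simp [om]) (by simp [om])
      (fun t => (b0 _).trans (by linarith)) (fun t => (b1 _).trans (by linarith))
      (fun t => (b2 _).trans (by linarith)) (fun t => (b3 _).trans (by linarith))
      (fun t => (bp _ _).trans (by linarith)) h hh.1.le hh.2
    simp only [add_zero] at main
    rw [← hC] at main
    rw [hF, ← mul_sub, abs_mul, abs_of_pos (by norm_num : (0:ℝ) < 1 / 2)]
    exact mul_le_mul_of_nonneg_left main (by norm_num)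
end

section
/- Let x : ℝ → ℝ² be a C^∞ curve parametrized by affine arc length with affine curvature k, and fix s₀ ∈ ℝ. Then there exist δ > 0 and a C^∞ function τ : (s₀ − δ, s₀ + δ) → ℝ with τ(s₀) = s₀ and τ'(s₀) = −1 such that ω(x(s) − x(τ(s)), x'(s₀)) = 0 for all |s − s₀| < δ (i.e. the chord from x(τ(s)) to x(s) is parallel to the tangent direction x'(s₀)), and moreover τ(s) = 2s₀ − s + (1/30)·k'(s₀)·(s − s₀)⁴ + o((s − s₀)⁵) as s → s₀. -/
open Filter
open scoped Topology

lemma par_hasDeriv (w φ : ℝ → ℝ) (hw : Continuous w) (hφ : ContDiff ℝ (⊤ : ℕ∞) φ) (t₀ : ℝ) :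
    HasDerivAt (fun t => ∫ u in (0:ℝ)..1, w u * φ (t * u))
      (∫ u in (0:ℝ)..1, (w u * u) * deriv φ (t₀ * u)) t₀ := by
  have hd : Differentiable ℝ φ := (contDiff_infty_iff_deriv.1 hφ).1
  have hc : Continuous φ := hφ.continuous
  have hc' : Continuous (deriv φ) := (contDiff_infty_iff_deriv.1 hφ).2.continuous
  have hK : IsCompact (Set.Icc (t₀ - 1) (t₀ + 1) ×ˢ Set.Icc (0:ℝ) 1) :=
    isCompact_Icc.prod isCompact_Icc
  obtain ⟨C, hC⟩ := hK.exists_bound_of_continuousOn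
    (f := fun p : ℝ × ℝ => (w p.2 * p.2) * deriv φ (p.1 * p.2)) (by fun_prop)
  refine (intervalIntegral.hasDerivAt_integral_of_dominated_loc_of_deriv_le
    (F := fun t u => w u * φ (t * u)) (F' := fun t u => (w u * u) * deriv φ (t * u))
    (s := Set.Icc (t₀ - 1) (t₀ + 1)) (bound := fun _ => C)
    (Icc_mem_nhds (by linarith) (by linarith)) ?_ ?_ ?_ ?_ ?_ ?_).2
  · exact Eventually.of_forall fun t => (by fun_prop : Continuous fun u => w u * φ (t * u)).aestronglyMeasurable
  · exact (by fun_prop : Continuous fun u => w u * φ (t₀ * u)).intervalIntegrable _ _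
  · exact (by fun_prop : Continuous fun u => (w u * u) * deriv φ (t₀ * u)).aestronglyMeasurable
  · refine Eventually.of_forall fun u hu t ht => ?_
    rw [Set.uIoc_of_le zero_le_one] at hu
    exact hC (t, u) ⟨ht, hu.1.le, hu.2⟩
  · simp
  · refine Eventually.of_forall fun u hu t ht => ?_
    have h1 : HasDerivAt (fun t : ℝ => t * u) u t := by simpa using (hasDerivAt_id t).mul_const u
    have h2 := ((hd (t * u)).hasDerivAt.comp t h1).const_mul (w u)
    exact HasDerivAt.congr_deriv h2 (by ring)

lemma par_contDiff_nat (n : ℕ) : ∀ (w φ : ℝ → ℝ) (_ : Continuous w) (_ : ContDiff ℝ (⊤ : ℕ∞) φ),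
    ContDiff ℝ n (fun t => ∫ u in (0:ℝ)..1, w u * φ (t * u)) := by
  induction n with
  | zero =>
    intro w φ hw hφ
    exact contDiff_zero.2 (continuous_iff_continuousAt.2 fun t =>
      (par_hasDeriv w φ hw hφ t).continuousAt)
  | succ n ih =>
    intro w φ hw hφ
    push_cast
    refine contDiff_succ_iff_deriv.2 ⟨fun t => (par_hasDeriv w φ hw hφ t).differentiableAt,
      fun h => by simp at h, ?_⟩
    have : deriv (fun t => ∫ u in (0:ℝ)..1, w u * φ (t * u))
      = fun t => ∫ u in (0:ℝ)..1, (w u * u) * deriv φ (t * u) :=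
      funext fun t => (par_hasDeriv w φ hw hφ t).deriv
    rw [this]
    exact ih (fun u => w u * u) (deriv φ) (by fun_prop) (contDiff_infty_iff_deriv.1 hφ).2

lemma par_contDiff (w φ : ℝ → ℝ) (hw : Continuous w) (hφ : ContDiff ℝ (⊤ : ℕ∞) φ) :
    ContDiff ℝ (⊤ : ℕ∞) (fun t => ∫ u in (0:ℝ)..1, w u * φ (t * u)) :=
  contDiff_infty.2 fun n => par_contDiff_nat n w φ hw hφ

lemma smooth_taylor (n : ℕ) : ∀ (F : ℝ → ℝ) (_ : ContDiff ℝ (⊤ : ℕ∞) F),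
    ∃ R : ℝ → ℝ, ContDiff ℝ (⊤ : ℕ∞) R ∧ ∀ t, F t =
      ∑ i ∈ Finset.range n, iteratedDeriv i F 0 / (i.factorial : ℝ) * t ^ i + t ^ n * R t := by
  induction n with
  | zero => exact fun F hF => ⟨F, hF, fun t => by simp⟩
  | succ n ih =>
    intro F hF
    obtain ⟨hd, hF'⟩ := contDiff_infty_iff_deriv.1 hF
    obtain ⟨R, hR, hRe⟩ := ih (deriv F) hF'
    refine ⟨_, par_contDiff (fun u => u ^ n) R (by fun_prop) hR, fun t => ?_⟩
    have hRc := hR.continuous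
    have hc' := hF'.continuous
    have e1 : ∫ u in (0:ℝ)..1, t * deriv F (t * u) = F t - F 0 := by
      have := intervalIntegral.integral_eq_sub_of_hasDerivAt (a := 0) (b := 1)
        (f := fun u => F (t * u)) (f' := fun u => t * deriv F (t * u)) (fun u _ => by
          have h1 : HasDerivAt (fun u : ℝ => t * u) t u := by
            simpa using (hasDerivAt_id u).const_mul t
          have h2 := (hd (t * u)).hasDerivAt.comp u h1
          exact HasDerivAt.congr_deriv h2 (by ring)) ((by fun_prop : Continuous fun u => t * deriv F (t * u)).intervalIntegrable _ _)
      simpa using this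
    have e2 : ∀ u, t * deriv F (t * u) = (∑ i ∈ Finset.range n,
        (iteratedDeriv (i+1) F 0 / (i.factorial : ℝ) * t ^ (i+1)) * u ^ i)
        + t ^ (n+1) * (u ^ n * R (t * u)) := by
      intro u
      rw [hRe (t * u), mul_add, Finset.mul_sum]
      congr 1
      · refine Finset.sum_congr rfl fun i _ => ?_
        rw [iteratedDeriv_succ']
        ring
      · ring
    rw [intervalIntegral.integral_congr (fun u _ => e2 u), intervalIntegral.integral_add,
      intervalIntegral.integral_finsetSum, intervalIntegral.integral_const_mul] at e1
    · rw [Finset.sum_range_succ']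
      simp only [intervalIntegral.integral_const_mul, integral_pow] at e1
      have e3 : ∀ i ∈ Finset.range n, iteratedDeriv (i + 1) F 0 / (i.factorial:ℝ) * t ^ (i + 1) *
          ((1 ^ (i + 1) - 0 ^ (i + 1)) / ((i:ℝ) + 1)) =
          iteratedDeriv (i + 1) F 0 / ((i+1).factorial:ℝ) * t ^ (i + 1) := by
        intro i _
        have : (i.factorial : ℝ) ≠ 0 := by positivity
        have h2 : (i : ℝ) + 1 ≠ 0 := by positivity
        rw [Nat.factorial_succ]
        push_cast
        simp only [one_pow, zero_pow (Nat.succ_ne_zero i)]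
        field_simp
        ring
      rw [Finset.sum_congr rfl e3] at e1
      simp
      linarith
    · intro i _
      exact (by fun_prop : Continuous _).intervalIntegrable _ _
    · exact (by fun_prop : Continuous _).intervalIntegrable _ _
    · exact (by fun_prop : Continuous _).intervalIntegrable _ _

lemma inv_lemma (g : ℝ → ℝ) (hg : ContDiff ℝ (⊤ : ℕ∞) g) (hg0 : g 0 = 1 / 2) :
    HasStrictDerivAt (fun t => t * √(2 * g t)) 1 0 ∧
    ∃ δ > (0 : ℝ), ∃ σ : ℝ → ℝ, ContDiffOn ℝ (⊤ : ℕ∞) σ (Set.Ioo (-δ) δ) ∧ σ 0 = 0 ∧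
      HasDerivAt σ (-1) 0 ∧ ∀ t ∈ Set.Ioo (-δ) δ, 0 < g t ∧ 0 < g (σ t) ∧
        σ t * √(2 * g (σ t)) = - (t * √(2 * g t)) := by
  set h : ℝ → ℝ := fun t => t * √(2 * g t) with hh
  have hgc : Continuous g := hg.continuous
  have hsm : ∀ t, 0 < g t → ContDiffAt ℝ (⊤ : ℕ∞) h t := fun t ht =>
    contDiffAt_id.mul ((contDiffAt_const.mul hg.contDiffAt).sqrt (by positivity))
  have hpos0 : 0 < g 0 := by rw [hg0]; norm_num
  have hh0 : h 0 = 0 := by simp [hh]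
  have hd0 : HasDerivAt h 1 0 := by
    have h1 : DifferentiableAt ℝ (fun t => √(2 * g t)) 0 :=
      ((contDiffAt_const.mul hg.contDiffAt).sqrt (by positivity) :
        ContDiffAt ℝ (⊤ : ℕ∞) (fun t => √(2 * g t)) 0).differentiableAt (by simp)
    have h2 := (hasDerivAt_id (0:ℝ)).mul h1.hasDerivAt
    exact HasDerivAt.congr_deriv h2 (by simp [hg0])
  have hs : HasStrictDerivAt h 1 0 := by
    have := (hsm 0 hpos0).hasStrictDerivAt (by simp)
    rwa [hd0.deriv] at this
  refine ⟨hs, ?_⟩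
  have hse := hs.hasStrictFDerivAt_equiv one_ne_zero
  set e := hse.toOpenPartialHomeomorph h with he
  have hecoe : ∀ t, e t = h t := fun t => rfl
  have h0s : (0:ℝ) ∈ e.source := hse.mem_toOpenPartialHomeomorph_source
  have h0t : (0:ℝ) ∈ e.target := by
    have := e.map_source h0s
    rwa [hecoe, hh0] at this
  have hes0 : e.symm 0 = 0 := by
    have := e.left_inv h0s
    rwa [hecoe, hh0] at this
  have hesd : HasDerivAt e.symm 1 0 := by
    have := hs.to_localInverse one_ne_zero
    rw [hh0] at this
    have h2 := this.hasDerivAt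
    rw [inv_one] at h2
    exact h2
  have hnc : ContinuousAt (fun t => - h t) 0 := hd0.continuousAt.neg
  have hσd : HasDerivAt (fun t => e.symm (- h t)) (-1) 0 := by
    have h1 : HasDerivAt e.symm 1 ((fun t => - h t) 0) := by simpa [hh0] using hesd
    have := h1.comp (0:ℝ) hd0.neg
    exact HasDerivAt.congr_deriv this (by simp)
  have hσ0 : e.symm (- h 0) = 0 := by simp [hh0, hes0]
  have hdc : ContinuousAt (deriv h) 0 := by
    have h1 : ContDiffAt ℝ 1 (fderiv ℝ h) 0 := (hsm 0 hpos0).fderiv_right (by norm_cast)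
    exact h1.continuousAt.clm_apply continuousAt_const
  have E1 : ∀ᶠ t in 𝓝 (0:ℝ), 0 < g t := hgc.continuousAt.eventually (lt_mem_nhds hpos0)
  have E1' : ∀ᶠ t in 𝓝 (0:ℝ), deriv h t ≠ 0 :=
    hdc.eventually_ne (by rw [hd0.deriv]; exact one_ne_zero)
  have hT : Tendsto (fun t => e.symm (- h t)) (𝓝 0) (𝓝 0) := by
    have := hσd.continuousAt.tendsto
    rwa [hσ0] at this
  have E2 : ∀ᶠ t in 𝓝 (0:ℝ), - h t ∈ e.target :=
    hnc.eventually_mem (by simpa [hh0] using e.open_target.mem_nhds h0t)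
  obtain ⟨δ, hδ, H⟩ := Metric.eventually_nhds_iff_ball.1
    (E1.and ((hT.eventually E1).and ((hT.eventually E1').and E2)))
  refine ⟨δ, hδ, fun t => e.symm (- h t), ?_, hσ0, hσd, ?_⟩
  · intro t ht
    obtain ⟨a1, a2, a3, a4⟩ := H t (by rw [Real.ball_eq_Ioo]; simpa using ht)
    refine ContDiffAt.contDiffWithinAt ?_
    have b1 : ContDiffAt ℝ (⊤ : ℕ∞) e.symm (- h t) :=
      e.contDiffAt_symm_deriv a3 a4 ((hsm _ a2).differentiableAt (by simp)).hasDerivAt (hsm _ a2)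
    exact b1.comp t (hsm t a1).neg
  · intro t ht
    obtain ⟨a1, a2, a3, a4⟩ := H t (by rw [Real.ball_eq_Ioo]; simpa using ht)
    exact ⟨a1, a2, e.right_inv a4⟩

lemma key (F : ℝ → ℝ) (hF : ContDiff ℝ (⊤ : ℕ∞) F) (k k' : ℝ)
    (f0 : iteratedDeriv 0 F 0 = 0) (f1 : iteratedDeriv 1 F 0 = 0) (f2 : iteratedDeriv 2 F 0 = 1)
    (f3 : iteratedDeriv 3 F 0 = 0) (f4 : iteratedDeriv 4 F 0 = -k)
    (f5 : iteratedDeriv 5 F 0 = -2 * k') :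
    ∃ δ > (0 : ℝ), ∃ σ : ℝ → ℝ, ContDiffOn ℝ (⊤ : ℕ∞) σ (Set.Ioo (-δ) δ) ∧ σ 0 = 0 ∧
      HasDerivAt σ (-1) 0 ∧ (∀ t ∈ Set.Ioo (-δ) δ, F (σ t) = F t) ∧
      (fun t => σ t - (-t + (1/30) * k' * t ^ 4)) =o[𝓝 0] fun t => t ^ 5 := by
  obtain ⟨R, hR, hRe⟩ := smooth_taylor 7 F hF
  obtain ⟨c, hc⟩ : ∃ c, iteratedDeriv 6 F 0 = 720 * c := ⟨iteratedDeriv 6 F 0 / 720, by ring⟩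
  have hFe : ∀ t, F t = t^2/2 - k * t^4/24 - k' * t^5/60 + c * t^6 + t^7 * R t := by
    intro t
    rw [hRe t]
    simp only [Finset.sum_range_succ, Finset.sum_range_zero, f0, f1, f2, f3, f4, f5, hc,
      Nat.factorial]
    push_cast
    ring
  clear hRe
  set g : ℝ → ℝ := fun t => 1/2 - k * t^2/24 - k' * t^3/60 + c * t^4 + t^5 * R t with hg
  have hgs : ContDiff ℝ (⊤ : ℕ∞) g := by fun_prop
  have hg0 : g 0 = 1/2 := by simp [hg]
  have hFg : ∀ t, F t = t^2 * g t := fun t => by rw [hFe]; simp only [hg]; ring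
  obtain ⟨hs, δ, hδ, σ, h1, h2, h3, h4⟩ := inv_lemma g hgs hg0
  set h : ℝ → ℝ := fun t => t * √(2 * g t) with hh
  have hsq : ∀ t, 0 < g t → h t ^ 2 = 2 * F t := by
    intro t ht
    simp only [hh]
    rw [mul_pow, Real.sq_sqrt (by positivity), hFg]; ring
  refine ⟨δ, hδ, σ, h1, h2, h3, ?_, ?_⟩
  · intro t ht
    obtain ⟨a1, a2, a3⟩ := h4 t ht
    have b1 := hsq _ a1
    have b2 := hsq _ a2
    have b3 : h (σ t) = - h t := a3
    rw [b3] at b2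
    nlinarith
  have hgc : Continuous g := hgs.continuous
  have hRc : Continuous R := hR.continuous
  obtain ⟨a, ha⟩ : ∃ a, a = (1/30) * k' := ⟨_, rfl⟩
  have hk' : k' = 30 * a := by linarith
  rw [← ha]
  set q : ℝ → ℝ := fun t => -t + a * t^4 with hq
  have hqc : Continuous q := by fun_prop
  have hq0 : q 0 = 0 := by simp [hq]
  obtain ⟨S, hSc, hS⟩ : ∃ S : ℝ → ℝ, Continuous S ∧ ∀ t, F (q t) - F t = t^7 * S t := by
    refine ⟨fun t => a^2 * t / 2 - k/24 * (-4 * a + 6 * a^2 * t^3 - 4 * a^3 * t^6 + a^4 * t^9)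
      - a/2 * (5 * a * t - 10 * a^2 * t^4 + 10 * a^3 * t^7 - 5 * a^4 * t^10 + a^5 * t^13)
      + c * (-6 * a * t^2 + 15 * a^2 * t^5 - 20 * a^3 * t^8 + 15 * a^4 * t^11 - 6 * a^5 * t^14
        + a^6 * t^17) + (-1 + a * t^3)^7 * R (q t) - R t, by fun_prop, fun t => ?_⟩
    rw [hFe, hFe, hk']
    beta_reduce
    generalize R (q t) = r
    simp only [hq]
    ring
  set m : ℝ → ℝ := fun t => (-1 + a * t^3) * √(2 * g (q t)) - √(2 * g t) with hm
  have hmc : Continuous m := by fun_prop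
  have hm0 : m 0 = -2 := by simp [hm, hq0, hg0]; norm_num
  have hV : (fun t => h (q t) + h t) =ᶠ[𝓝 0] fun t => t^6 * (2 * S t / m t) := by
    have E1 : ∀ᶠ t in 𝓝 (0:ℝ), 0 < g t :=
      hgc.continuousAt.eventually (lt_mem_nhds (by rw [hg0]; norm_num))
    have hqT : Tendsto q (𝓝 0) (𝓝 0) := by
      have := hqc.tendsto 0
      rwa [hq0] at this
    have E3 : ∀ᶠ t in 𝓝 (0:ℝ), m t ≠ 0 :=
      hmc.continuousAt.eventually_ne (by rw [hm0]; norm_num)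
    filter_upwards [E1, hqT.eventually E1, E3] with t e1 e2 e3
    by_cases ht : t = 0
    · subst ht; simp [hh, hq0]
    have b1 := hsq _ e1
    have b2 := hsq _ e2
    have b3 : h (q t) - h t = t * m t := by
      simp only [hh, hm]
      generalize √(2 * g (q t)) = r
      simp only [hq]; ring
    have b4 : (h (q t) + h t) * (t * m t) = 2 * (t^7 * S t) := by
      rw [← b3, ← hS]; linarith
    rw [mul_div_assoc', eq_div_iff e3]
    apply mul_right_cancel₀ ht
    linarith
  have hO : (fun t => h (q t) + h t) =o[𝓝 0] fun t : ℝ => t^5 := by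
    refine hV.trans_isLittleO ?_
    have : (fun t : ℝ => t * (2 * S t / m t)) =o[𝓝 0] fun t => (1:ℝ) := by
      rw [Asymptotics.isLittleO_one_iff]
      have : ContinuousAt (fun t : ℝ => t * (2 * S t / m t)) 0 :=
        continuousAt_id.mul ((continuous_const.mul hSc).continuousAt.div hmc.continuousAt
          (by rw [hm0]; norm_num))
      simpa [ContinuousAt] using this
    have h5 := (Asymptotics.isBigO_refl (fun t : ℝ => t^5) (𝓝 0)).mul_isLittleO this
    refine h5.congr (fun t => by ring) (fun t => by ring)
  have hB := (HasDerivAtFilter.isTheta_sub hs one_ne_zero).isBigO_symm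
  have hT : Tendsto (fun t => (σ t, q t)) (𝓝 0) (𝓝 ((0:ℝ), (0:ℝ))) := by
    have t1 := h3.continuousAt.tendsto
    have t2 := hqc.tendsto 0
    rw [h2] at t1
    rw [hq0] at t2
    exact t1.prodMk_nhds t2
  have hB2 := hB.comp_tendsto hT
  refine hB2.trans_isLittleO (hO.neg_left.congr' ?_ EventuallyEq.rfl)
  filter_upwards [Ioo_mem_nhds (neg_lt_zero.2 hδ) hδ] with t ht
  have b3 : h (σ t) = - h t := (h4 t ht).2.2
  simp only [Function.comp]
  rw [b3]; ring

lemma om_hasDeriv {u v : ℝ → ℝ × ℝ} {u' v' : ℝ × ℝ} {s : ℝ} (hu : HasDerivAt u u' s)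
    (hv : HasDerivAt v v' s) :
    HasDerivAt (fun s => om (u s) (v s)) (om u' (v s) + om (u s) v') s := by
  have u1 : HasDerivAt (fun s => (u s).1) u'.1 s := (ContinuousLinearMap.fst ℝ ℝ ℝ).hasFDerivAt.comp_hasDerivAt s hu
  have u2 : HasDerivAt (fun s => (u s).2) u'.2 s := (ContinuousLinearMap.snd ℝ ℝ ℝ).hasFDerivAt.comp_hasDerivAt s hu
  have v1 : HasDerivAt (fun s => (v s).1) v'.1 s := (ContinuousLinearMap.fst ℝ ℝ ℝ).hasFDerivAt.comp_hasDerivAt s hv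
  have v2 : HasDerivAt (fun s => (v s).2) v'.2 s := (ContinuousLinearMap.snd ℝ ℝ ℝ).hasFDerivAt.comp_hasDerivAt s hv
  exact HasDerivAt.congr_deriv ((u1.mul v2).sub (u2.mul v1)) (by simp only [om]; ring)

theorem stmt_4 (x : ℝ → ℝ × ℝ) (hx : ContDiff ℝ (⊤ : ℕ∞) x)
    (haff : ∀ s : ℝ, om (deriv x s) (iteratedDeriv 2 x s) = 1)
    (k : ℝ → ℝ) (hk : ∀ s : ℝ, k s = om (iteratedDeriv 2 x s) (iteratedDeriv 3 x s))
    (s₀ : ℝ) :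
    ∃ δ > (0 : ℝ), ∃ τ : ℝ → ℝ,
      ContDiffOn ℝ (⊤ : ℕ∞) τ (Set.Ioo (s₀ - δ) (s₀ + δ)) ∧
      τ s₀ = s₀ ∧ deriv τ s₀ = -1 ∧
      (∀ s ∈ Set.Ioo (s₀ - δ) (s₀ + δ), om (x s - x (τ s)) (deriv x s₀) = 0) ∧
      (fun s : ℝ => τ s - (2 * s₀ - s + (1 / 30) * deriv k s₀ * (s - s₀) ^ 4))
        =o[𝓝 s₀] fun s : ℝ => (s - s₀) ^ 5 := by
  have hD : ∀ n s, HasDerivAt (iteratedDeriv n x) (iteratedDeriv (n+1) x s) s := by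
    intro n s
    rw [iteratedDeriv_succ]
    exact ((hx.differentiable_iteratedDeriv n (by exact_mod_cast WithTop.coe_lt_top n)) s).hasDerivAt
  set D : ℕ → ℝ → ℝ × ℝ := fun n => iteratedDeriv n x with hDdef
  have hD' : ∀ n s, HasDerivAt (D n) (D (n+1) s) s := hD
  have d1 : deriv x = D 1 := iteratedDeriv_one.symm
  have self0 : ∀ u, om u u = 0 := fun u => by simp only [om]; ring
  have A2 : ∀ s, om (D 1 s) (D 2 s) = 1 := fun s => by rw [← d1]; exact haff s
  have cst : ∀ {f : ℝ → ℝ} {c f' s : ℝ}, (∀ s, f s = c) → HasDerivAt f f' s → f' = 0 := by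
    intro f c f' s hf hf'
    have : f = fun _ => c := funext hf
    rw [this] at hf'
    exact hf'.unique (hasDerivAt_const s c)
  have A3 : ∀ s, om (D 1 s) (D 3 s) = 0 := fun s => by
    have := cst A2 (om_hasDeriv (hD' 1 s) (hD' 2 s))
    rwa [self0, zero_add] at this
  have A4 : ∀ s, om (D 2 s) (D 3 s) + om (D 1 s) (D 4 s) = 0 := fun s =>
    cst A3 (om_hasDeriv (hD' 1 s) (hD' 3 s))
  have hk' : deriv k s₀ = om (D 2 s₀) (D 4 s₀) := by
    have : k = fun s => om (D 2 s) (D 3 s) := funext hk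
    rw [this, (om_hasDeriv (hD' 2 s₀) (hD' 3 s₀)).deriv, self0, zero_add]
  have A5 : om (D 1 s₀) (D 5 s₀) = -2 * deriv k s₀ := by
    have := cst A4 ((om_hasDeriv (hD' 2 s₀) (hD' 3 s₀)).add (om_hasDeriv (hD' 1 s₀) (hD' 4 s₀)))
    rw [self0] at this
    rw [hk']; linarith
  set F : ℝ → ℝ := fun t => om (D 1 s₀) (x (s₀ + t) - x s₀) with hF
  have hFs : ContDiff ℝ (⊤ : ℕ∞) F := by
    simp only [hF, om]
    fun_prop
  have hit : ∀ n, iteratedDeriv (n+1) F = fun t => om (D 1 s₀) (D (n+1) (s₀ + t)) := by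
    have hs : ∀ t, HasDerivAt (fun t : ℝ => s₀ + t) 1 t := fun t => (hasDerivAt_id t).const_add s₀
    have hcz : ∀ t, HasDerivAt (fun _ : ℝ => D 1 s₀) 0 t := fun t => hasDerivAt_const t _
    have om0 : ∀ u, om 0 u = 0 := fun u => by simp [om]
    intro n
    induction n with
    | zero =>
      rw [zero_add, iteratedDeriv_one]
      funext t
      have h0 : HasDerivAt x (D 1 (s₀ + t)) (s₀ + t) := by
        have h00 := hD 0 (s₀ + t)
        rw [iteratedDeriv_zero] at h00
        exact h00
      have h1 := (h0.comp_const_add s₀ t).sub_const (x s₀)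
      rw [(om_hasDeriv (hcz t) h1).deriv, om0, zero_add]
    | succ n ih =>
      rw [iteratedDeriv_succ, ih]
      funext t
      have h1 := (hD' (n+1) (s₀ + t)).comp_const_add s₀ t
      rw [(om_hasDeriv (hcz t) h1).deriv, om0, zero_add]
  obtain ⟨δ, hδ, σ, c1, c2, c3, c4, c5⟩ := key F hFs (k s₀) (deriv k s₀)
    (by simp [hF, om]) (by rw [hit 0]; simp [self0]) (by rw [hit 1]; simpa using A2 s₀)
    (by rw [hit 2]; simpa using A3 s₀)
    (by rw [hit 3, hk s₀]
        have := A4 s₀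
        simp only [add_zero]
        linarith)
    (by rw [hit 4]; simpa using A5)
  refine ⟨δ, hδ, fun s => s₀ + σ (s - s₀), ?_, ?_, ?_, ?_, ?_⟩
  · refine contDiffOn_const.add (c1.comp (contDiff_id.sub contDiff_const).contDiffOn ?_)
    intro s hs
    simp only [Set.mem_Ioo, id] at hs ⊢
    constructor <;> linarith [hs.1, hs.2]
  · simp [c2]
  · have h1 : HasDerivAt σ (-1) (s₀ - s₀) := by rwa [sub_self]
    exact ((h1.comp_sub_const s₀ s₀).const_add s₀).deriv
  · intro s hs
    have := c4 (s - s₀) ⟨by linarith [hs.1], by linarith [hs.2]⟩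
    rw [d1]
    simp only [hF, add_sub_cancel] at this
    simp only [om, Prod.fst_sub, Prod.snd_sub] at this ⊢
    linarith
  · have hT : Tendsto (fun s => s - s₀) (𝓝 s₀) (𝓝 0) := by
      have : Continuous fun s : ℝ => s - s₀ := by fun_prop
      simpa using this.tendsto s₀
    refine (c5.comp_tendsto hT).congr (fun s => ?_) (fun s => rfl)
    simp only [Function.comp]
    ring
end

section
/- Let C be a compact strictly convex planar body whose boundary is traced by a C^∞, λ-periodic, affinely parametrized curve x with affine curvature k. For each n ≥ 3, let 0 ≤ s_{n,1} < … < s_{n,n} < λ be parameters of the vertices of a best approximating inscribed polygon with at most n vertices, indices extended cyclically by s_{n,i+n} = s_{n,i} + λ, and set λ_{n,i} := s_{n,i} − s_{n,i−1}. Then λ_{n,i+1} = λ_{n,i} + (1/30)·k'(s_{n,i})·λ_{n,i}⁴ + ε₁(n,i), where lim_{n→∞} max_{1 ≤ i ≤ n} |ε₁(n,i)| / λ_{n,i}⁵ = 0. -/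
open Filter MeasureTheory
open scoped Topology

lemma om_hasDerivAt_s5 {u v : ℝ → ℝ × ℝ} {u' v' : ℝ × ℝ} {t : ℝ} (hu : HasDerivAt u u' t)
    (hv : HasDerivAt v v' t) :
    HasDerivAt (fun t => om (u t) (v t)) (om u' (v t) + om (u t) v') t := by
  have h1 : HasDerivAt (fun t => (u t).1) u'.1 t := by simpa using hu.hasFDerivAt.fst.hasDerivAt
  have h2 : HasDerivAt (fun t => (u t).2) u'.2 t := by simpa using hu.hasFDerivAt.snd.hasDerivAt
  have h3 : HasDerivAt (fun t => (v t).1) v'.1 t := by simpa using hv.hasFDerivAt.fst.hasDerivAt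
  have h4 : HasDerivAt (fun t => (v t).2) v'.2 t := by simpa using hv.hasFDerivAt.snd.hasDerivAt
  have := (h1.mul h4).sub (h2.mul h3)
  unfold om
  exact this.congr_deriv (by ring)

lemma int_bound {g g' : ℝ → ℝ} {M : ℝ} {m : ℕ} (hg : ∀ h, HasDerivAt g (g' h) h)
    (h0 : g 0 = 0) (hb : ∀ h, |g' h| ≤ M * |h| ^ m) (h : ℝ) : |g h| ≤ M * |h| ^ (m + 1) := by
  have hM : 0 ≤ M := by
    have := (abs_nonneg _).trans (hb 1)
    simpa using this
  have := Convex.norm_image_sub_le_of_norm_hasDerivWithin_le (f := g) (f' := g')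
    (C := M * |h| ^ m) (s := Set.uIcc 0 h) (x := 0) (y := h)
    (fun t _ => (hg t).hasDerivWithinAt) (fun t ht => by
      rw [Real.norm_eq_abs]
      refine (hb t).trans ?_
      have : |t| ≤ |h| := by
        have := Set.abs_sub_left_of_mem_uIcc ht
        simpa using this
      gcongr) (convex_uIcc 0 h) (by simp) (by simp)
  rw [h0] at this
  simp only [sub_zero, Real.norm_eq_abs] at this
  rw [pow_succ, ← mul_assoc]
  exact this

lemma taylor_seq (m : ℕ) : ∀ (f : ℕ → ℝ → ℝ) (M : ℝ)
    (_ : ∀ j h, HasDerivAt (f j) (f (j + 1) h) h) (_ : ∀ h, |f m h| ≤ M) (h : ℝ),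
    |f 0 h - ∑ j ∈ Finset.range m, f j 0 * h ^ j / (j.factorial : ℝ)| ≤ M * |h| ^ m := by
  induction m with
  | zero => intro f M hf hM h; simpa using hM h
  | succ m ih =>
    intro f M hf hM
    have h1 := ih (fun j => f (j + 1)) M (fun j h => hf (j + 1) h) hM
    have h2 := int_bound (m := m) (M := M)
      (g := fun h => f 0 h - ∑ j ∈ Finset.range (m + 1), f j 0 * h ^ j / (j.factorial : ℝ))
      (g' := fun h => f 1 h - ∑ j ∈ Finset.range m, f (j + 1) 0 * h ^ j / (j.factorial : ℝ))
      (fun h => ?_) ?_ h1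
    · exact h2
    · refine (hf 0 h).sub ?_
      simp_rw [Finset.sum_range_succ']
      simp only [pow_zero]
      refine HasDerivAt.add_const _ ?_
      refine HasDerivAt.fun_sum fun j _ => ?_
      have := ((hasDerivAt_pow (j + 1) h).const_mul (f (j + 1) 0)).div_const
        ((j + 1).factorial : ℝ)
      refine this.congr_deriv ?_
      have : ((j.factorial : ℕ) : ℝ) ≠ 0 := by positivity
      rw [Nat.factorial_succ]
      push_cast
      have : (j : ℝ) + 1 ≠ 0 := by positivity
      field_simp
    · simp [Finset.sum_range_succ']

/-- abstract smooth affine-parametrized periodic curve with all derivatives -/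
structure Crv (y : ℕ → ℝ → ℝ × ℝ) (lam : ℝ) : Prop where
  pos : 0 < lam
  der : ∀ j t, HasDerivAt (y j) (y (j + 1) t) t
  aff : ∀ t, om (y 1 t) (y 2 t) = 1
  per : ∀ j t, y j (t + lam) = y j t

section
variable {y : ℕ → ℝ → ℝ × ℝ} {lam : ℝ}

lemma Crv.c3 (hy : Crv y lam) (t : ℝ) : om (y 1 t) (y 3 t) = 0 := by
  have h := om_hasDerivAt_s5 (hy.der 1 t) (hy.der 2 t)
  have h2 : (fun t => om (y 1 t) (y 2 t)) = fun _ => 1 := funext hy.aff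
  rw [h2] at h
  have := h.unique (hasDerivAt_const t 1)
  simp only [om] at this ⊢
  linarith

lemma Crv.c4 (hy : Crv y lam) (t : ℝ) : om (y 1 t) (y 4 t) = - om (y 2 t) (y 3 t) := by
  have h := om_hasDerivAt_s5 (hy.der 1 t) (hy.der 3 t)
  have h2 : (fun t => om (y 1 t) (y 3 t)) = fun _ => 0 := funext hy.c3
  rw [h2] at h
  have := h.unique (hasDerivAt_const t 0)
  simp only [om] at this ⊢
  linarith

lemma Crv.dk (hy : Crv y lam) (t : ℝ) :
    HasDerivAt (fun t => om (y 2 t) (y 3 t)) (om (y 2 t) (y 4 t)) t := by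
  have h := om_hasDerivAt_s5 (hy.der 2 t) (hy.der 3 t)
  refine h.congr_deriv ?_
  simp only [om]
  ring

lemma Crv.c5 (hy : Crv y lam) (t : ℝ) : om (y 1 t) (y 5 t) = - 2 * om (y 2 t) (y 4 t) := by
  have h := om_hasDerivAt_s5 (hy.der 1 t) (hy.der 4 t)
  have h2 : (fun t => om (y 1 t) (y 4 t)) = fun t => - om (y 2 t) (y 3 t) := funext hy.c4
  rw [h2] at h
  have := h.unique (hy.dk t).neg
  simp only [om] at this ⊢
  linarith

lemma Crv.cont (hy : Crv y lam) (j : ℕ) : Continuous (y j) :=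
  continuous_iff_continuousAt.2 fun t => (hy.der j t).continuousAt

lemma Crv.bdd1 (hy : Crv y lam) (j : ℕ) : ∃ M, ∀ t, |(y j t).1| ≤ M ∧ |(y j t).2| ≤ M := by
  obtain ⟨M, hM⟩ := (isCompact_Icc (a := (0:ℝ)) (b := lam)).exists_bound_of_continuousOn
    (hy.cont j).continuousOn
  refine ⟨M, fun t => ?_⟩
  obtain ⟨u, hu, he⟩ := Function.Periodic.exists_mem_Ico₀ (f := y j) (hy.per j) hy.pos t
  rw [he]
  have := hM u ⟨hu.1, hu.2.le⟩
  exact ⟨(norm_fst_le _).trans this, (norm_snd_le _).trans this⟩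

lemma Crv.bdd (hy : Crv y lam) (i j : ℕ) : ∃ M, ∀ t u, |om (y i t) (y j u)| ≤ M := by
  obtain ⟨M, hM⟩ := hy.bdd1 i
  obtain ⟨N, hN⟩ := hy.bdd1 j
  refine ⟨M * N + M * N, fun t u => ?_⟩
  have hM0 := (abs_nonneg _).trans (hM 0).1
  unfold om
  refine (abs_sub _ _).trans ?_
  rw [abs_mul, abs_mul]
  have := hM t
  have := hN u
  gcongr <;> tauto

lemma Crv.derF (hy : Crv y lam) (s : ℝ) (i j : ℕ) (h : ℝ) :
    HasDerivAt (fun h => om (y i s) (y j (s + h))) (om (y i s) (y (j+1) (s + h))) h := by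
  have h1 : HasDerivAt (fun h => y j (s + h)) (y (j+1) (s + h)) h :=
    HasDerivAt.comp_const_add s h (hy.der j (s + h))
  have := om_hasDerivAt_s5 (hasDerivAt_const h (y i s)) h1
  refine this.congr_deriv ?_
  simp [om]

/-- tangent function -/
noncomputable def tF (y : ℕ → ℝ → ℝ × ℝ) (s h : ℝ) : ℝ := om (y 1 s) (y 0 (s + h) - y 0 s)

lemma Crv.tay (hy : Crv y lam) : ∃ M, 1 ≤ M ∧ (∀ t, |om (y 2 t) (y 3 t)| ≤ M) ∧
    (∀ t, |om (y 2 t) (y 4 t)| ≤ M) ∧ (∀ t, |om (y 1 t) (y 6 t) / 720| ≤ M) ∧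
    (∀ s h, |om (y 1 s) (y 1 (s + h)) - h| ≤ M * |h| ^ 2) ∧
    ∀ s h, |tF y s h - (h ^ 2 / 2 - om (y 2 s) (y 3 s) * h ^ 4 / 24 -
      om (y 2 s) (y 4 s) * h ^ 5 / 60 + om (y 1 s) (y 6 s) / 720 * h ^ 6)| ≤ M * |h| ^ 7 := by
  obtain ⟨M1, h1⟩ := hy.bdd 2 3
  obtain ⟨M2, h2⟩ := hy.bdd 2 4
  obtain ⟨M3, h3⟩ := hy.bdd 1 6
  obtain ⟨M4, h4⟩ := hy.bdd 1 7
  obtain ⟨M5, h5⟩ := hy.bdd 1 3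
  have p1 := (abs_nonneg _).trans (h1 0 0)
  have p2 := (abs_nonneg _).trans (h2 0 0)
  have p3 := (abs_nonneg _).trans (h3 0 0)
  have p4 := (abs_nonneg _).trans (h4 0 0)
  have p5 := (abs_nonneg _).trans (h5 0 0)
  refine ⟨1 + M1 + M2 + M3 + M4 + M5, by linarith, fun t => (h1 t t).trans (by linarith),
    fun t => (h2 t t).trans (by linarith), fun t => ?_, fun s h => ?_, fun s h => ?_⟩
  · rw [abs_div]
    have := h3 t t
    norm_num
    linarith
  · have := taylor_seq 2 (fun j h => om (y 1 s) (y (j + 1) (s + h))) M5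
      (fun j h => hy.derF s 1 (j+1) h) (fun h => h5 _ _) h
    simp [Finset.sum_range_succ, hy.aff] at this
    have e : om (y 1 s) (y 1 s) = 0 := by simp [om]; ring
    rw [e, zero_add] at this
    rw [sq_abs]
    refine this.trans ?_
    gcongr
    linarith
  · have := taylor_seq 7 (fun j h => om (y 1 s) (y j (s + h))) M4
      (fun j h => hy.derF s 1 j h) (fun h => h4 _ _) h
    have e : om (y 1 s) (y 1 s) = 0 := by simp [om]; ring
    simp [Finset.sum_range_succ, hy.aff, hy.c3, hy.c4, hy.c5, e, Nat.factorial] at this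
    have e2 : tF y s h = om (y 1 s) (y 0 (s + h)) - om (y 1 s) (y 0 s) := by
      simp [tF, om]; ring
    rw [e2]
    refine (le_of_eq ?_).trans (this.trans ?_)
    · congr 1; ring
    · gcongr
      linarith

end

lemma abs_mul_le' {u v A B : ℝ} (hu : |u| ≤ A) (hv : |v| ≤ B) : |u * v| ≤ A * B := by
  rw [abs_mul]
  exact mul_le_mul hu hv (abs_nonneg _) ((abs_nonneg _).trans hu)

set_option maxHeartbeats 800000 in
lemma rec_real {M κ κ' c Fb Fa a b : ℝ} (hM : 1 ≤ M) (hκ : |κ| ≤ M) (hκ' : |κ'| ≤ M)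
    (hc : |c| ≤ M) (ha : 0 < a) (har : M * a ≤ 1 / 100) (hb : 0 < b) (hba : b ≤ 2 * a)
    (h1 : |Fb - (b ^ 2 / 2 - κ * b ^ 4 / 24 - κ' * b ^ 5 / 60 + c * b ^ 6)| ≤ M * b ^ 7)
    (h2 : |Fa - (a ^ 2 / 2 - κ * a ^ 4 / 24 + κ' * a ^ 5 / 60 + c * a ^ 6)| ≤ M * a ^ 7)
    (hF : Fb = Fa) :
    |b - a - (1 / 30) * κ' * a ^ 4| ≤ 400 * M ^ 2 * a ^ 6 := by
  have ha1 : a ≤ 1 / 100 := by nlinarith only [hM, ha, har]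
  obtain ⟨R1, hR1⟩ : ∃ R, R = Fb - (b ^ 2 / 2 - κ * b ^ 4 / 24 - κ' * b ^ 5 / 60 + c * b ^ 6) :=
    ⟨_, rfl⟩
  obtain ⟨R2, hR2⟩ : ∃ R, R = Fa - (a ^ 2 / 2 - κ * a ^ 4 / 24 + κ' * a ^ 5 / 60 + c * a ^ 6) :=
    ⟨_, rfl⟩
  rw [← hR1] at h1
  rw [← hR2] at h2
  have hb2 : b ^ 2 ≤ 4 * a ^ 2 := (pow_le_pow_left₀ hb.le hba 2).trans (le_of_eq (by ring))
  have hb3 : b ^ 3 ≤ 8 * a ^ 3 := (pow_le_pow_left₀ hb.le hba 3).trans (le_of_eq (by ring))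
  have hb4 : b ^ 4 ≤ 16 * a ^ 4 := (pow_le_pow_left₀ hb.le hba 4).trans (le_of_eq (by ring))
  have hb5 : b ^ 5 ≤ 32 * a ^ 5 := (pow_le_pow_left₀ hb.le hba 5).trans (le_of_eq (by ring))
  have hb7 : b ^ 7 ≤ 128 * a ^ 7 := (pow_le_pow_left₀ hb.le hba 7).trans (le_of_eq (by ring))
  obtain ⟨R, hR⟩ : ∃ R, R = R2 - R1 := ⟨_, rfl⟩
  have hRb : |R| ≤ 129 * M * a ^ 7 := by
    rw [hR]
    refine (abs_sub _ _).trans ?_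
    have := mul_le_mul_of_nonneg_left hb7 (show 0 ≤ M by linarith)
    linarith only [this, h1, h2]
  obtain ⟨d, hd⟩ : ∃ d, d = b - a := ⟨_, rfl⟩
  have key : d * (a + b) / 2 = κ * (d * ((a + b) * (a ^ 2 + b ^ 2))) / 24
      + κ' * (a ^ 5 + b ^ 5) / 60 - c * (d * ((a + b) * (a ^ 4 + a ^ 2 * b ^ 2 + b ^ 4))) + R := by
    rw [hR, hR1, hR2, hF, hd]; ring
  have ha2 : a ^ 2 ≤ a / 100 := by nlinarith only [ha, ha1]
  have hab2 : |(a + b) * (a ^ 2 + b ^ 2)| ≤ (3 * a) * (5 * a ^ 2) := by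
    rw [abs_of_pos (by positivity)]
    gcongr <;> linarith
  have hab4 : |(a + b) * (a ^ 4 + a ^ 2 * b ^ 2 + b ^ 4)| ≤ (3 * a) * (21 * a ^ 4) := by
    rw [abs_of_pos (by positivity)]
    have : a ^ 2 * b ^ 2 ≤ a ^ 2 * (4 * a ^ 2) := by gcongr
    gcongr
    · linarith
    · linarith only [this, hb4]
  -- first crude bound
  have hcr : |d| ≤ 4 * M * a ^ 4 := by
    have t1 : |κ' * (a ^ 5 + b ^ 5)| ≤ M * (33 * a ^ 5) := by
      refine abs_mul_le' hκ' ?_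
      rw [abs_of_pos (by positivity)]; linarith
    have e1 : |κ * (d * ((a + b) * (a ^ 2 + b ^ 2)))| ≤ M * (|d| * ((3 * a) * (5 * a ^ 2))) :=
      abs_mul_le' hκ (abs_mul_le' le_rfl hab2)
    have e2 : |c * (d * ((a + b) * (a ^ 4 + a ^ 2 * b ^ 2 + b ^ 4)))| ≤
        M * (|d| * ((3 * a) * (21 * a ^ 4))) :=
      abs_mul_le' hc (abs_mul_le' le_rfl hab4)
    have e3 : |d| * a / 2 ≤ |d * (a + b) / 2| := by
      rw [abs_div, abs_mul, abs_of_pos (show 0 < a + b by positivity)]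
      norm_num
      have : |d| * a ≤ |d| * (a + b) := by
        gcongr; linarith
      linarith
    have e4 : |d * (a + b) / 2| ≤ |κ * (d * ((a + b) * (a ^ 2 + b ^ 2)))| / 24
      + |κ' * (a ^ 5 + b ^ 5)| / 60 + |c * (d * ((a + b) * (a ^ 4 + a ^ 2 * b ^ 2 + b ^ 4)))|
      + |R| := by
      rw [key]
      refine (abs_add_le _ _).trans ?_
      gcongr
      refine (abs_sub _ _).trans ?_
      gcongr
      refine (abs_add_le _ _).trans ?_
      rw [abs_div, abs_div]
      norm_num
    have q1 : M * (|d| * ((3 * a) * (5 * a ^ 2))) ≤ |d| * a := by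
      have : M * (|d| * ((3 * a) * (5 * a ^ 2))) = |d| * a * ((M * a) * (15 * a)) := by ring
      rw [this]
      have : (M * a) * (15 * a) ≤ (1/100) * (15 * (1/100)) := by gcongr
      have h0 : 0 ≤ |d| * a := by positivity
      have := mul_le_mul_of_nonneg_left this h0
      linarith only [this, h0]
    have q2 : M * (|d| * ((3 * a) * (21 * a ^ 4))) ≤ |d| * a / 100 := by
      have : M * (|d| * ((3 * a) * (21 * a ^ 4))) = |d| * a * ((M * a) * (63 * a ^ 3)) := by ring
      rw [this]
      have : (M * a) * (63 * a ^ 3) ≤ (1/100) * (63 * (1/100) ^ 3) := by gcongr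
      have h0 : 0 ≤ |d| * a := by positivity
      have := mul_le_mul_of_nonneg_left this h0
      linarith only [this, h0]
    have q3 : 129 * M * a ^ 7 ≤ M * a ^ 5 / 10 := by
      have : 129 * M * a ^ 7 = M * a ^ 5 * (129 * a ^ 2) := by ring
      rw [this]
      have : 129 * a ^ 2 ≤ 129 * (1/100) ^ 2 := by gcongr
      have h0 : 0 ≤ M * a ^ 5 := by positivity
      have := mul_le_mul_of_nonneg_left this h0
      linarith only [this, h0]
    have h0 : 0 ≤ M * a ^ 5 := by positivity
    have fin : |d| * a ≤ (4 * M * a ^ 4) * a := by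
      have : (4 * M * a ^ 4) * a = 4 * (M * a ^ 5) := by ring
      linarith
    exact le_of_mul_le_mul_right fin ha
  have key2 : (d - (1 / 30) * κ' * a ^ 4) * a = -(d * d) / 2
      + κ * (d * ((a + b) * (a ^ 2 + b ^ 2))) / 24
      + κ' * (d * (b ^ 4 + b ^ 3 * a + b ^ 2 * a ^ 2 + b * a ^ 3 + a ^ 4)) / 60
      - c * (d * ((a + b) * (a ^ 4 + a ^ 2 * b ^ 2 + b ^ 4))) + R := by
    have : d * (a + b) / 2 = d * a + d * d / 2 := by
      have : b = a + d := by linarith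
      rw [this]; ring
    have h3 : κ' * (a ^ 5 + b ^ 5) / 60 = κ' * a ^ 5 / 30 + κ' * (d * (b ^ 4 + b ^ 3 * a + b ^ 2 * a ^ 2 + b * a ^ 3 + a ^ 4)) / 60 := by
      rw [hd]; ring
    rw [h3, this] at key
    linarith
  have hb31 : |b ^ 4 + b ^ 3 * a + b ^ 2 * a ^ 2 + b * a ^ 3 + a ^ 4| ≤ 31 * a ^ 4 := by
    rw [abs_of_pos (by positivity)]
    have u1 : b ^ 3 * a ≤ 8 * a ^ 3 * a := by gcongr
    have u2 : b ^ 2 * a ^ 2 ≤ 4 * a ^ 2 * a ^ 2 := by gcongr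
    have u3 : b * a ^ 3 ≤ 2 * a * a ^ 3 := by gcongr
    linarith only [u1, u2, u3, hb4]
  have w1 : |d * d| ≤ (4 * M * a ^ 4) * (4 * M * a ^ 4) := abs_mul_le' hcr hcr
  have w2 : |κ * (d * ((a + b) * (a ^ 2 + b ^ 2)))| ≤ M * ((4 * M * a ^ 4) * ((3 * a) * (5 * a ^ 2))) :=
      abs_mul_le' hκ (abs_mul_le' hcr hab2)
  have w3 : |κ' * (d * (b ^ 4 + b ^ 3 * a + b ^ 2 * a ^ 2 + b * a ^ 3 + a ^ 4))| ≤
      M * ((4 * M * a ^ 4) * (31 * a ^ 4)) := abs_mul_le' hκ' (abs_mul_le' hcr hb31)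
  have w4 : |c * (d * ((a + b) * (a ^ 4 + a ^ 2 * b ^ 2 + b ^ 4)))| ≤
        M * ((4 * M * a ^ 4) * ((3 * a) * (21 * a ^ 4))) :=
      abs_mul_le' hc (abs_mul_le' hcr hab4)
  obtain ⟨Q, hQ⟩ : ∃ Q, Q = M ^ 2 * a ^ 7 := ⟨_, rfl⟩
  have hQ0 : 0 ≤ Q := by rw [hQ]; positivity
  have hQa : Q * a ≤ Q := mul_le_of_le_one_right hQ0 (by linarith)
  have hQa2 : Q * a ^ 2 ≤ Q := mul_le_of_le_one_right hQ0 (by linarith)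
  have z1 : (4 * M * a ^ 4) * (4 * M * a ^ 4) = 16 * (Q * a) := by rw [hQ]; ring
  have z2 : M * ((4 * M * a ^ 4) * ((3 * a) * (5 * a ^ 2))) = 60 * Q := by rw [hQ]; ring
  have z3 : M * ((4 * M * a ^ 4) * (31 * a ^ 4)) = 124 * (Q * a) := by rw [hQ]; ring
  have z4 : M * ((4 * M * a ^ 4) * ((3 * a) * (21 * a ^ 4))) = 252 * (Q * a ^ 2) := by
    rw [hQ]; ring
  have z5 : 129 * M * a ^ 7 ≤ 129 * Q := by
    rw [hQ]
    have : M ≤ M ^ 2 := by nlinarith only [hM]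
    have h7 : 0 ≤ a ^ 7 := by positivity
    have := mul_le_mul_of_nonneg_right this h7
    linarith only [this]
  rw [z1] at w1
  rw [z2] at w2
  rw [z3] at w3
  rw [z4] at w4
  have fin : |(d - (1 / 30) * κ' * a ^ 4) * a| ≤ 400 * Q := by
    rw [key2]
    have hh := hRb.trans z5
    rw [abs_le] at *
    constructor <;> linarith
  rw [abs_mul, abs_of_pos ha] at fin
  rw [← hd]
  refine le_of_mul_le_mul_right (fin.trans (le_of_eq ?_)) ha
  rw [hQ]; ring

lemma quad_real {M κ κ' c F h : ℝ} (hM : 1 ≤ M) (hκ : |κ| ≤ M) (hκ' : |κ'| ≤ M)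
    (hc : |c| ≤ M) (har : M * |h| ≤ 1 / 100)
    (h1 : |F - (h ^ 2 / 2 - κ * h ^ 4 / 24 - κ' * h ^ 5 / 60 + c * h ^ 6)| ≤ M * |h| ^ 7) :
    h ^ 2 / 4 ≤ F ∧ F ≤ 3 * h ^ 2 / 4 := by
  obtain ⟨a, ha⟩ : ∃ a, a = |h| := ⟨_, rfl⟩
  have ha0 : 0 ≤ a := ha ▸ abs_nonneg h
  have e2 : h ^ 2 = a ^ 2 := by rw [ha, sq_abs]
  have ha1 : a ≤ 1 / 100 := by rw [← ha] at har; nlinarith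
  have w1 : |κ * h ^ 4| ≤ M * a ^ 4 := abs_mul_le' hκ (by rw [abs_pow, ha])
  have w2 : |κ' * h ^ 5| ≤ M * a ^ 5 := abs_mul_le' hκ' (by rw [abs_pow, ha])
  have w3 : |c * h ^ 6| ≤ M * a ^ 6 := abs_mul_le' hc (by rw [abs_pow, ha])
  rw [← ha] at h1 har
  have z (j : ℕ) : M * a ^ (j + 3) ≤ a ^ 2 / 100 := by
    have : M * a ^ (j + 3) = a ^ 2 * ((M * a) * a ^ j) := by ring
    rw [this]
    have h3 : a ^ j ≤ 1 := pow_le_one₀ ha0 (by linarith)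
    have h4 : (M * a) * a ^ j ≤ 1 / 100 * 1 := by gcongr
    nlinarith [sq_nonneg a]
  have z4 := z 1
  have z5 := z 2
  have z6 := z 3
  have z7 := z 4
  norm_num at z4 z5 z6 z7
  have := sq_nonneg a
  rw [e2] at h1 ⊢
  rw [abs_le] at *
  constructor <;> linarith

section
variable {y : ℕ → ℝ → ℝ × ℝ} {lam : ℝ}

lemma Crv.tF_cont (hy : Crv y lam) : Continuous (fun p : ℝ × ℝ => tF y p.1 p.2) := by
  have h0 := hy.cont 0
  have h1 := hy.cont 1
  unfold tF om
  fun_prop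

lemma Crv.tF_per (hy : Crv y lam) (s h : ℝ) : tF y (s + lam) h = tF y s h := by
  unfold tF
  rw [hy.per, hy.per, show s + lam + h = (s + h) + lam by ring, hy.per]

lemma Crv.tF_per2 (hy : Crv y lam) (s h : ℝ) : tF y s (h + lam) = tF y s h := by
  unfold tF
  rw [show s + (h + lam) = (s + h) + lam by ring, hy.per]

lemma Crv.lower (hy : Crv y lam) (hP : ∀ s h, 0 < h → h < lam → 0 < tF y s h) (r : ℝ)
    (hr : 0 < r) : ∃ c > 0, ∀ s h, r ≤ h → h ≤ lam - r → c ≤ tF y s h := by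
  by_cases hrl : r ≤ lam - r
  · have hne : (Set.Icc 0 lam ×ˢ Set.Icc r (lam - r)).Nonempty :=
      ⟨(0, r), ⟨⟨le_rfl, hy.pos.le⟩, ⟨le_rfl, hrl⟩⟩⟩
    obtain ⟨p, hp, hmin⟩ := (isCompact_Icc.prod isCompact_Icc).exists_isMinOn hne
      hy.tF_cont.continuousOn
    refine ⟨tF y p.1 p.2, hP _ _ (hr.trans_le hp.2.1) (hp.2.2.trans_lt (by linarith)),
      fun s h h1 h2 => ?_⟩
    obtain ⟨u, hu, he⟩ := Function.Periodic.exists_mem_Ico₀ (f := fun s => tF y s h)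
      (fun s => hy.tF_per s h) hy.pos s
    rw [he]
    exact hmin (show (u, h) ∈ _ from ⟨⟨hu.1, hu.2.le⟩, ⟨h1, h2⟩⟩)
  · exact ⟨1, one_pos, fun s h h1 h2 => absurd (h1.trans h2) hrl⟩

lemma Crv.tF_der (hy : Crv y lam) (s h : ℝ) :
    HasDerivAt (fun h => tF y s h) (om (y 1 s) (y 1 (s + h))) h := by
  have := (hy.derF s 1 0 h).sub_const (om (y 1 s) (y 0 s))
  refine this.congr_of_eventuallyEq (Eventually.of_forall fun h => ?_)
  simp [tF, om]; ring

lemma Crv.step (hy : Crv y lam) (hP : ∀ s h, 0 < h → h < lam → 0 < tF y s h) :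
    ∃ r > 0, ∃ K > 0, (∀ s, |om (y 2 s) (y 4 s)| ≤ K) ∧
    ∀ s a b, 0 < a → a ≤ r → 0 < b → a + b < lam → tF y s b = tF y s (-a) →
      |b - a - (1 / 30) * om (y 2 s) (y 4 s) * a ^ 4| ≤ K * a ^ 6 := by
  obtain ⟨M, hM, hk, hk', hc, hG, hF⟩ := hy.tay
  have hM0 : 0 < M := by linarith
  have hr' : (0:ℝ) < 1 / (100 * M) := by positivity
  obtain ⟨r', hr'e⟩ : ∃ r, r = 1 / (100 * M) := ⟨_, rfl⟩
  rw [← hr'e] at hr'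
  have hMr : M * r' = 1 / 100 := by rw [hr'e]; field_simp
  obtain ⟨c, hc0, hcl⟩ := hy.lower hP r' hr'
  refine ⟨min r' (min 1 c), by positivity, 400 * M ^ 2, by positivity,
    fun s => (hk' s).trans (by nlinarith), fun s a b ha har hb hab he => ?_⟩
  have ha1 : a ≤ r' := har.trans (min_le_left _ _)
  have ha2 : a ≤ 1 := har.trans ((min_le_right _ _).trans (min_le_left _ _))
  have ha3 : a ≤ c := har.trans ((min_le_right _ _).trans (min_le_right _ _))
  have hMa : M * |(-a)| ≤ 1 / 100 := by
    rw [abs_neg, abs_of_pos ha, ← hMr]; gcongr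
  have qa := quad_real hM (hk s) (hk' s) (hc s) hMa (hF s (-a))
  have hlt : tF y s b < c := by
    rw [he]
    refine qa.2.trans_lt ?_
    nlinarith
  have hcase : b < r' ∨ lam - r' < b := by
    by_contra hcon
    push Not at hcon
    exact absurd (hcl s b hcon.1 hcon.2) (not_le.2 hlt)
  rcases hcase with hb1 | hb1
  · have hMb : M * |b| ≤ 1 / 100 := by
      rw [abs_of_pos hb, ← hMr]; gcongr
    have qb := quad_real hM (hk s) (hk' s) (hc s) hMb (hF s b)
    have hba : b ≤ 2 * a := by
      have h3 : b ^ 2 ≤ (2 * a) ^ 2 := by nlinarith [qa.2, qb.1]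
      exact le_of_sq_le_sq h3 (by positivity)
    have hMa' : M * a ≤ 1 / 100 := by rwa [abs_neg, abs_of_pos ha] at hMa
    refine rec_real hM (hk s) (hk' s) (hc s) ha hMa' hb hba
      (Fb := tF y s b) (Fa := tF y s (-a)) ?_ ?_ he
    · have := hF s b
      rwa [abs_of_pos hb] at this
    · have := hF s (-a)
      rw [abs_neg, abs_of_pos ha] at this
      convert this using 2
      ring
  · exfalso
    have e1 : tF y s b = tF y s (-(lam - b)) := by
      rw [← hy.tF_per2 s (-(lam - b))]; congr 1; ring
    have hanti : StrictAntiOn (fun h => tF y s h) (Set.Icc (-(lam - b)) (-a)) := by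
      refine strictAntiOn_of_deriv_neg (convex_Icc _ _)
        (fun h _ => (hy.tF_der s h).continuousAt.continuousWithinAt) fun h hh => ?_
      rw [interior_Icc] at hh
      rw [(hy.tF_der s h).deriv]
      have h1 := (abs_le.1 (hG s h)).2
      rw [sq_abs] at h1
      have h2 : h < 0 := by linarith [hh.2]
      have h3 : -r' < h := by linarith [hh.1]
      have h4 : M * (-h) < 1 / 100 := by rw [← hMr]; gcongr; linarith
      nlinarith
    have := hanti ⟨le_rfl, by linarith⟩ ⟨by linarith, le_rfl⟩ (show -(lam - b) < -a by linarith)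
    simp only at this
    linarith

lemma Crv.D_pos (hy : Crv y lam) (hP : ∀ s h, 0 < h → h < lam → 0 < tF y s h) {t1 t2 t3 : ℝ}
    (h12 : t1 < t2) (h23 : t2 < t3) (h3 : t3 < t1 + lam) :
    0 < om (y 0 t2 - y 0 t1) (y 0 t3 - y 0 t1) := by
  have hpos : ∀ t, t1 < t → t < t1 + lam → 0 < om (y 1 t1) (y 0 t - y 0 t1) := by
    intro t ht ht'
    have := hP t1 (t - t1) (by linarith) (by linarith)
    unfold tF at this
    rwa [add_sub_cancel] at this
  have hder : ∀ t, t1 < t → t < t1 + lam →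
      HasDerivAt (fun t => om (y 0 t - y 0 t1) (y 0 t3 - y 0 t1) / om (y 1 t1) (y 0 t - y 0 t1))
        (om (y 1 t) (y 0 t - y 0 t1) * om (y 1 t1) (y 0 t3 - y 0 t1) /
          (om (y 1 t1) (y 0 t - y 0 t1)) ^ 2) t := by
    intro t ht ht'
    have a1 := (hy.der 0 t).sub_const (y 0 t1)
    have a2 := om_hasDerivAt_s5 a1 (hasDerivAt_const t (y 0 t3 - y 0 t1))
    have a3 := om_hasDerivAt_s5 (hasDerivAt_const t (y 1 t1)) a1
    refine (a2.div a3 (hpos t ht ht').ne').congr_deriv ?_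
    congr 1
    simp only [om, Prod.fst_sub, Prod.snd_sub, Prod.fst_zero, Prod.snd_zero]
    ring
  have hanti : StrictAntiOn (fun t => om (y 0 t - y 0 t1) (y 0 t3 - y 0 t1) /
      om (y 1 t1) (y 0 t - y 0 t1)) (Set.Icc t2 t3) := by
    refine strictAntiOn_of_deriv_neg (convex_Icc _ _)
      (fun t ht => (hder t (h12.trans_le ht.1) (ht.2.trans_lt h3)).continuousAt.continuousWithinAt)
      fun t ht => ?_
    rw [interior_Icc] at ht
    have u1 := h12.trans ht.1
    have u2 := ht.2.trans h3
    rw [(hder t u1 u2).deriv]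
    refine div_neg_of_neg_of_pos (mul_neg_of_neg_of_pos ?_ (hpos t3 (h12.trans h23) h3))
      (pow_pos (hpos t u1 u2) 2)
    have := hP t (t1 + lam - t) (by linarith) (by linarith)
    unfold tF at this
    rw [add_sub_cancel, hy.per] at this
    simp only [om, Prod.fst_sub, Prod.snd_sub] at this ⊢
    linarith
  have := hanti ⟨le_rfl, h23.le⟩ ⟨h23.le, le_rfl⟩ h23
  have e : om (y 0 t3 - y 0 t1) (y 0 t3 - y 0 t1) = 0 := by unfold om; ring
  simp only [e, zero_div] at this
  exact (div_pos_iff_of_pos_right (hpos t2 h12 (h23.trans h3))).1 this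

lemma Crv.D_nonneg (hy : Crv y lam) (hP : ∀ s h, 0 < h → h < lam → 0 < tF y s h) {t1 t2 t3 : ℝ}
    (h12 : t1 ≤ t2) (h23 : t2 ≤ t3) (h3 : t3 ≤ t1 + lam) :
    0 ≤ om (y 0 t2 - y 0 t1) (y 0 t3 - y 0 t1) := by
  rcases h12.eq_or_lt with rfl | h12
  · simp [om]
  rcases h23.eq_or_lt with rfl | h23
  · apply le_of_eq; unfold om; ring
  rcases h3.eq_or_lt with rfl | h3
  · rw [hy.per]; simp [om]
  exact (hy.D_pos hP h12 h23 h3).le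

end

/-- half-open standard triangle -/
def T0 : Set (ℝ × ℝ) := {q | 0 < q.1 ∧ 0 ≤ q.2 ∧ q.1 + q.2 ≤ 1}

lemma T0_vol_ne_top : volume T0 ≠ ⊤ := by
  have : T0 ⊆ Set.Icc (0, 0) (1, 1) := by
    rintro ⟨a, b⟩ ⟨h1, h2, h3⟩
    simp only at h1 h2 h3
    exact ⟨⟨h1.le, h2⟩, ⟨by simp only; linarith, by simp only; linarith⟩⟩
  exact ((measure_mono this).trans_lt isCompact_Icc.measure_lt_top).ne

lemma T0_vol_pos : 0 < (volume T0).toReal := by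
  refine ENNReal.toReal_pos ?_ T0_vol_ne_top
  have hsub : (Set.Ioo (0:ℝ) (1/2)) ×ˢ (Set.Ioo (0:ℝ) (1/2)) ⊆ T0 := by
    rintro ⟨a, b⟩ ⟨h1, h2⟩
    simp only [Set.mem_Ioo] at h1 h2
    exact ⟨h1.1, h2.1.le, by simp only; linarith [h1.2, h2.2]⟩
  have h1 : 0 < volume ((Set.Ioo (0:ℝ) (1/2)) ×ˢ (Set.Ioo (0:ℝ) (1/2))) :=
    (isOpen_Ioo.prod isOpen_Ioo).measure_pos volume
      ⟨(1/4, 1/4), by constructor <;> constructor <;> norm_num⟩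
  exact (h1.trans_le (measure_mono hsub)).ne'

lemma T0_img_vol (A u v : ℝ × ℝ) :
    volume ((fun q : ℝ × ℝ => A + (q.1 • u + q.2 • v)) '' T0) =
      ENNReal.ofReal |om u v| * volume T0 := by
  have h := Measure.addHaar_image_linearMap (volume : Measure (ℝ × ℝ))
    (Matrix.toLin (Module.Basis.finTwoProd ℝ) (Module.Basis.finTwoProd ℝ) !![u.1, v.1; u.2, v.2]) T0
  rw [LinearMap.det_toLin, Matrix.det_fin_two_of] at h
  have e : (fun q : ℝ × ℝ => A + (q.1 • u + q.2 • v)) = (fun z => A + z) ∘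
      (Matrix.toLin (Module.Basis.finTwoProd ℝ) (Module.Basis.finTwoProd ℝ)
        !![u.1, v.1; u.2, v.2]) := by
    funext q
    simp only [Function.comp, Matrix.toLin_finTwoProd_apply]
    congr 1
    ext <;> simp <;> ring
  rw [e, Set.image_comp, Set.image_add_left, measure_preimage_add, h]
  congr 3
  unfold om; ring

lemma area_insert {S : Set (ℝ × ℝ)} (hS : S.Finite) {A B p : ℝ × ℝ} (hA : A ∈ S) (hB : B ∈ S)
    (hp : 0 < om (p - A) (B - A)) (h1 : ∀ z ∈ S, 0 ≤ om (B - A) (z - A))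
    (h2 : ∀ z ∈ S, 0 ≤ om (p - A) (z - A)) (h3 : ∀ z ∈ S, 0 ≤ om (B - p) (z - p)) :
    (volume (convexHull ℝ (insert p S))).toReal =
      (volume (convexHull ℝ S)).toReal + om (p - A) (B - A) * (volume T0).toReal := by
  obtain ⟨Δ, hΔ⟩ : ∃ Δ, Δ = om (p - A) (B - A) := ⟨_, rfl⟩
  rw [← hΔ] at hp
  -- coordinates on the hull
  have hK : ∀ z ∈ convexHull ℝ S, ∃ α β : ℝ, z = A + (α • (p - A) + β • (B - A)) ∧ α ≤ 0 ∧ 0 ≤ β ∧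
      α + β ≤ 1 := by
    have hsub : convexHull ℝ S ⊆ {z | 0 ≤ om (B - A) (z - A) ∧ 0 ≤ om (p - A) (z - A) ∧
        0 ≤ om (B - p) (z - p)} := by
      refine convexHull_min (fun z hz => ⟨h1 z hz, h2 z hz, h3 z hz⟩) ?_
      have hcv : ∀ u w : ℝ × ℝ, Convex ℝ {z | 0 ≤ om u (z - w)} := by
        intro u w z hz z' hz' a b ha hb hab
        simp only [Set.mem_ofPred_eq] at *
        have : om u (a • z + b • z' - w) = a * om u (z - w) + b * om u (z' - w) := by
          have : b = 1 - a := by linarith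
          subst this
          simp [om]; ring
        rw [this]; positivity
      exact (hcv _ _).inter ((hcv _ _).inter (hcv _ _))
    intro z hz
    obtain ⟨g1, g2, g3⟩ := hsub hz
    refine ⟨om (z - A) (B - A) / Δ, om (p - A) (z - A) / Δ, ?_, ?_, div_nonneg g2 hp.le, ?_⟩
    · have hΔ' := hΔ
      have hne : Δ ≠ 0 := hp.ne'
      ext
      · simp only [Prod.fst_add, Prod.smul_fst, Prod.fst_sub, smul_eq_mul]
        field_simp
        rw [hΔ]
        simp only [om, Prod.fst_sub, Prod.snd_sub]
        ring
      · simp only [Prod.snd_add, Prod.smul_snd, Prod.snd_sub, smul_eq_mul]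
        field_simp
        rw [hΔ]
        simp only [om, Prod.fst_sub, Prod.snd_sub]
        ring
    · refine div_nonpos_of_nonpos_of_nonneg ?_ hp.le
      simp only [om, Prod.fst_sub, Prod.snd_sub] at g1 ⊢
      linarith
    · rw [← add_div, div_le_one hp, hΔ]
      simp only [om, Prod.fst_sub, Prod.snd_sub] at g3 ⊢
      linarith
  have hAK := subset_convexHull ℝ S hA
  have hBK := subset_convexHull ℝ S hB
  have hKc := convex_convexHull ℝ S
  have hEq : convexHull ℝ (insert p S) = convexHull ℝ S ∪
      ((fun q : ℝ × ℝ => A + (q.1 • (p - A) + q.2 • (B - A))) '' T0) := by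
    apply Set.Subset.antisymm
    · rw [convexHull_insert ⟨A, hA⟩]
      intro w hw
      rw [mem_convexJoin] at hw
      obtain ⟨p', hp', z, hz, hw⟩ := hw
      rw [Set.mem_singleton_iff] at hp'
      subst hp'
      obtain ⟨a, b, ha, hb, hab, rfl⟩ := hw
      obtain ⟨α, β, hzz, g1, g2, g3⟩ := hK z hz
      by_cases hpos : 0 < a + b * α
      · right
        refine ⟨(a + b * α, b * β), ⟨hpos, by positivity, ?_⟩, ?_⟩
        · simp only
          nlinarith
        · have : a = 1 - b := by linarith
          rw [hzz, this]
          ext <;> simp <;> ring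
      · left
        push Not at hpos
        rcases g1.eq_or_lt with h0 | h0
        · rw [h0] at hpos
          have ha0 : a = 0 := by linarith
          have hb1 : b = 1 := by linarith
          rw [ha0, hb1]
          simpa using hz
        · have h1α : 0 < 1 - α := by linarith
          -- crossing point on the segment from A to B
          have hq : A + (β / (1 - α)) • (B - A) ∈ convexHull ℝ S := by
            have := hKc hAK hBK (show 0 ≤ 1 - β / (1 - α) by
              rw [sub_nonneg, div_le_one h1α]; linarith) (show 0 ≤ β / (1 - α) by positivity)
              (by ring)
            convert this using 1
            ext <;> simp <;> ring
          -- weight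
          have hmu : 0 ≤ (1 - (a + b * α) / α) := by
            rw [sub_nonneg, div_le_one_of_neg h0]
            nlinarith
          have := hKc hq hz hmu (show 0 ≤ (a + b * α) / α from
            div_nonneg_of_nonpos hpos h0.le) (by ring)
          convert this using 1
          have : a = 1 - b := by linarith
          have h0' : α ≠ 0 := h0.ne
          have h1' : 1 - α ≠ 0 := h1α.ne'
          rw [hzz, this]
          ext
          · simp only [Prod.fst_add, Prod.smul_fst, Prod.fst_sub, smul_eq_mul]
            field_simp
            ring
          · simp only [Prod.snd_add, Prod.smul_snd, Prod.snd_sub, smul_eq_mul]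
            field_simp
            ring
    · apply Set.union_subset (convexHull_mono (Set.subset_insert _ _))
      rintro _ ⟨⟨a, b⟩, ⟨g1, g2, g3⟩, rfl⟩
      simp only at g1 g2 g3
      have hc := convex_convexHull ℝ (insert p S)
      have k1 := subset_convexHull ℝ _ (Set.mem_insert p S)
      have k2 := subset_convexHull ℝ _ (Set.mem_insert_of_mem p hA)
      have k3 := subset_convexHull ℝ _ (Set.mem_insert_of_mem p hB)
      have := Convex.sum_mem hc (t := Finset.univ) (w := ![1 - a - b, a, b]) (z := ![A, p, B])
        (by intro i _; fin_cases i <;> simp <;> linarith) (by simp [Fin.sum_univ_three]; ring)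
        (by intro i _; fin_cases i <;> simp [k1, k2, k3])
      simp only [Fin.sum_univ_three] at this
      convert this using 1
      ext <;> simp <;> ring
  have hdisj : Disjoint (convexHull ℝ S)
      ((fun q : ℝ × ℝ => A + (q.1 • (p - A) + q.2 • (B - A))) '' T0) := by
    rw [Set.disjoint_left]
    rintro _ hz ⟨⟨a, b⟩, ⟨g1, g2, g3⟩, rfl⟩
    obtain ⟨α, β, e, f1, f2, f3⟩ := hK _ hz
    simp only at g1 e
    have e1 : om (a • (p - A) + b • (B - A)) (B - A) = om (α • (p - A) + β • (B - A)) (B - A) := by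
      rw [add_left_cancel e]
    have e2 : ∀ a b : ℝ, om (a • (p - A) + b • (B - A)) (B - A) = a * Δ := by
      intro a b; rw [hΔ]; simp [om]; ring
    rw [e2, e2] at e1
    have := mul_right_cancel₀ hp.ne' e1
    linarith
  have hcomp : IsCompact (convexHull ℝ S) := hS.isCompact_convexHull ℝ
  have hmeas : MeasurableSet (convexHull ℝ S) := hcomp.isClosed.measurableSet
  rw [hEq, measure_union' hdisj hmeas, T0_img_vol, ← hΔ, abs_of_pos hp, ENNReal.toReal_add
    hcomp.measure_lt_top.ne (ENNReal.mul_ne_top ENNReal.ofReal_ne_top T0_vol_ne_top),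
    ENNReal.toReal_mul, ENNReal.toReal_ofReal hp.le]

section
variable {y : ℕ → ℝ → ℝ × ℝ} {lam : ℝ}

lemma Crv.stationary (hy : Crv y lam) (hP : ∀ s h, 0 < h → h < lam → 0 < tF y s h)
    {n : ℕ} (hn : 3 ≤ n) {σ : ℤ → ℝ} (hσ : StrictMono σ) (hcyc : ∀ i, σ (i + n) = σ i + lam)
    (hmax : ∀ S : Finset (ℝ × ℝ), (S : Set (ℝ × ℝ)) ⊆ Set.range (y 0) → S.card ≤ n →
      (volume (convexHull ℝ (S : Set (ℝ × ℝ)))).toReal ≤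
      (volume (convexHull ℝ (((Finset.Icc (1 : ℤ) (n : ℤ)).image fun i => y 0 (σ i) :
        Finset (ℝ × ℝ)) : Set (ℝ × ℝ)))).toReal)
    {i : ℤ} (h1 : 1 ≤ i) (h2 : i ≤ n) :
    om (y 1 (σ i)) (y 0 (σ (i + 1)) - y 0 (σ (i - 1))) = 0 := by
  have hn' : (3 : ℤ) ≤ n := by exact_mod_cast hn
  obtain ⟨S, hS⟩ : ∃ S : Finset (ℝ × ℝ),
    S = ((Finset.Icc (1 : ℤ) (n : ℤ)).erase i).image fun i => y 0 (σ i) := ⟨_, rfl⟩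
  have hins : (Finset.Icc (1 : ℤ) (n : ℤ)).image (fun i => y 0 (σ i)) = insert (y 0 (σ i)) S := by
    rw [hS, ← Finset.image_insert (fun i => y 0 (σ i)),
      Finset.insert_erase (Finset.mem_Icc.2 ⟨h1, h2⟩)]
  have hcard : S.card + 1 ≤ n := by
    have : S.card ≤ ((Finset.Icc (1 : ℤ) (n : ℤ)).erase i).card := by
      rw [hS]; exact Finset.card_image_le
    rw [Finset.card_erase_of_mem (Finset.mem_Icc.2 ⟨h1, h2⟩), Int.card_Icc] at this
    omega
  have hperi : ∀ j : ℤ, y 0 (σ (j + n)) = y 0 (σ j) := fun j => by rw [hcyc, hy.per]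
  have hmem : ∀ j : ℤ, 1 ≤ j → j ≤ (n:ℤ) → j ≠ i → y 0 (σ j) ∈ S := fun j a b c => by
    rw [hS]
    exact Finset.mem_image_of_mem (fun i => y 0 (σ i))
      (Finset.mem_erase.2 ⟨c, Finset.mem_Icc.2 ⟨a, b⟩⟩)
  have hA : y 0 (σ (i - 1)) ∈ S := by
    by_cases h : i = 1
    · rw [← hperi]; exact hmem _ (by omega) (by omega) (by omega)
    · exact hmem _ (by omega) (by omega) (by omega)
  have hB : y 0 (σ (i + 1)) ∈ S := by
    by_cases h : i = n
    · rw [show i + 1 = 1 + (n : ℤ) by omega, hperi]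
      exact hmem _ (by omega) (by omega) (by omega)
    · exact hmem _ (by omega) (by omega) (by omega)
  have hlast : σ (i + 1) < σ (i - 1) + lam := by
    rw [← hcyc]; exact hσ (by omega)
  have hz : ∀ z ∈ S, ∃ u, z = y 0 u ∧ σ (i + 1) ≤ u ∧ u ≤ σ (i - 1) + lam := by
    intro z hz
    rw [hS] at hz
    obtain ⟨j, hj, rfl⟩ := Finset.mem_image.1 hz
    rw [Finset.mem_erase, Finset.mem_Icc] at hj
    obtain ⟨hji, hj1, hj2⟩ := hj
    rcases lt_or_gt_of_ne hji with h | h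
    · refine ⟨σ (j + n), (hperi j).symm, hσ.monotone (by omega), ?_⟩
      rw [← hcyc]; exact hσ.monotone (by omega)
    · refine ⟨σ j, rfl, hσ.monotone (by omega), ?_⟩
      rw [← hcyc]; exact hσ.monotone (by omega)
  have harea : ∀ t, σ (i - 1) < t → t < σ (i + 1) →
      (volume (convexHull ℝ ((insert (y 0 t) S : Finset (ℝ × ℝ)) : Set (ℝ × ℝ)))).toReal =
      (volume (convexHull ℝ (S : Set (ℝ × ℝ)))).toReal +
        om (y 0 t - y 0 (σ (i - 1))) (y 0 (σ (i + 1)) - y 0 (σ (i - 1))) * (volume T0).toReal := by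
    intro t ht1 ht2
    rw [Finset.coe_insert]
    refine area_insert S.finite_toSet hA hB (hy.D_pos hP ht1 ht2 hlast) ?_ ?_ ?_
    · intro z hzS
      obtain ⟨u, rfl, hu1, hu2⟩ := hz z hzS
      exact hy.D_nonneg hP (by linarith) hu1 hu2
    · intro z hzS
      obtain ⟨u, rfl, hu1, hu2⟩ := hz z hzS
      exact hy.D_nonneg hP (by linarith) (by linarith) hu2
    · intro z hzS
      obtain ⟨u, rfl, hu1, hu2⟩ := hz z hzS
      exact hy.D_nonneg hP (by linarith) hu1 (by linarith)
  have hi1 : σ (i - 1) < σ i := hσ (by omega)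
  have hi2 : σ i < σ (i + 1) := hσ (by omega)
  have hloc : IsLocalMax (fun t => om (y 0 t - y 0 (σ (i - 1)))
      (y 0 (σ (i + 1)) - y 0 (σ (i - 1)))) (σ i) := by
    filter_upwards [Ioo_mem_nhds hi1 hi2] with t ht
    have hm := hmax (insert (y 0 t) S) ?_ ((Finset.card_insert_le _ _).trans hcard)
    · rw [hins, harea t ht.1 ht.2, harea _ hi1 hi2] at hm
      have := T0_vol_pos
      exact le_of_mul_le_mul_right (by linarith) this
    · rw [Finset.coe_insert]
      refine Set.insert_subset ⟨t, rfl⟩ fun z hzS => ?_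
      obtain ⟨u, rfl, _⟩ := hz z hzS
      exact ⟨u, rfl⟩
  have hder := om_hasDerivAt_s5 ((hy.der 0 (σ i)).sub_const (y 0 (σ (i - 1))))
    (hasDerivAt_const (σ i) (y 0 (σ (i + 1)) - y 0 (σ (i - 1))))
  have := hloc.hasDerivAt_eq_zero hder
  simp only [om, Prod.fst_sub, Prod.snd_sub, Prod.fst_zero, Prod.snd_zero] at this ⊢
  linarith

lemma Crv.stationary' (hy : Crv y lam) {a b s : ℝ}
    (h : om (y 1 s) (y 0 (s + b) - y 0 (s - a)) = 0) : tF y s b = tF y s (-a) := by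
  unfold tF
  rw [← sub_eq_add_neg]
  simp only [om, Prod.fst_sub, Prod.snd_sub] at h ⊢
  linarith

lemma Crv.pos_of_convex (hy : Crv y lam) {C : Set (ℝ × ℝ)} (hconv : StrictConvex ℝ C)
    (hclosed : IsClosed C)
    (hfr : ∀ t, y 0 t ∈ frontier C) (hinj : Set.InjOn (y 0) (Set.Ico 0 lam)) :
    ∀ s h, 0 < h → h < lam → 0 < tF y s h := by
  intro s h h0 h1
  obtain ⟨u, hu, he⟩ := Function.Periodic.exists_mem_Ico₀ (f := fun s => tF y s h)
      (fun s => hy.tF_per s h) hy.pos s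
  rw [he]
  clear he s
  have hne : ∀ h, 0 < h → h < lam → y 0 (u + h) ≠ y 0 u := by
    intro h h0 h1 heq
    by_cases hc : u + h < lam
    · have := hinj ⟨by linarith [hu.1], hc⟩ hu heq
      linarith
    · have h2 : y 0 (u + h - lam) = y 0 u := by
        rw [← heq, ← hy.per 0 (u + h - lam), sub_add_cancel]
      have := hinj ⟨by linarith [hu.1], by linarith [hu.2]⟩ hu h2
      linarith
  have hmemC : ∀ t, y 0 t ∈ C := fun t => hclosed.frontier_subset (hfr t)
  obtain ⟨f, hf⟩ := geometric_hahn_banach_open_point hconv.convex.interior isOpen_interior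
    (x := y 0 u) (fun hh => (hfr u).2 hh)
  have hflt : ∀ h, 0 < h → h < lam → f (y 0 (u + h)) < f (y 0 u) := by
    intro h h0 h1
    have := hf _ (hconv (hmemC (u + h)) (hmemC u) (hne h h0 h1) (show (0:ℝ) < 1/2 by norm_num)
      (show (0:ℝ) < 1/2 by norm_num) (by norm_num))
    rw [map_add, map_smul, map_smul, smul_eq_mul, smul_eq_mul] at this
    linarith
  have hloc : IsLocalMax (fun t => f (y 0 t)) u := by
    filter_upwards [Ioo_mem_nhds (show u - lam < u by linarith [hy.pos])
      (show u < u + lam by linarith [hy.pos])] with t ht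
    rcases lt_trichotomy t u with h | h | h
    · have := hflt (t + lam - u) (by linarith [ht.1]) (by linarith)
      rw [show u + (t + lam - u) = t + lam by ring, hy.per] at this
      exact this.le
    · rw [h]
    · have := hflt (t - u) (by linarith) (by linarith [ht.2])
      rw [add_sub_cancel] at this
      exact this.le
  have hfd : HasDerivAt (fun t => f (y 0 t)) (f (y 1 u)) u :=
    f.hasFDerivAt.comp_hasDerivAt u (hy.der 0 u)
  have hf1 : f (y 1 u) = 0 := hloc.hasDerivAt_eq_zero hfd
  have hW : ∀ h, f (y 0 (u + h)) - f (y 0 u) = tF y u h * f (y 2 u) := by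
    intro h
    have e : y 0 (u + h) - y 0 u = om (y 0 (u + h) - y 0 u) (y 2 u) • y 1 u
        + tF y u h • y 2 u := by
      have ha := hy.aff u
      unfold tF
      generalize y 0 (u + h) - y 0 u = W
      unfold om at ha ⊢
      ext
      · simp only [Prod.fst_add, Prod.smul_fst, smul_eq_mul]
        linear_combination (-W.1) * ha
      · simp only [Prod.snd_add, Prod.smul_snd, smul_eq_mul]
        linear_combination (-W.2) * ha
    rw [← map_sub, e, map_add, map_smul, map_smul, hf1]
    simp
  have hneg : f (y 2 u) < 0 := by
    obtain ⟨M, hM, hk, hk', hc, hG, hF⟩ := hy.tay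
    have hM0 : 0 < M := by linarith
    obtain ⟨r, hr⟩ : ∃ r, r = min (1 / (100 * M)) (lam / 2) := ⟨_, rfl⟩
    have hr0 : 0 < r := by rw [hr]; have := hy.pos; positivity
    have hr1 : r < lam := by
      rw [hr]; exact (min_le_right _ _).trans_lt (by linarith [hy.pos])
    have hr2 : M * |r| ≤ 1 / 100 := by
      rw [abs_of_pos hr0]
      calc M * r ≤ M * (1 / (100 * M)) := by rw [hr]; gcongr; exact min_le_left _ _
        _ = 1 / 100 := by field_simp
    have q := (quad_real hM (hk u) (hk' u) (hc u) hr2 (hF u r)).1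
    have h3 := hflt r hr0 hr1
    have h4 := hW r
    have h5 : 0 < tF y u r := lt_of_lt_of_le (by positivity) q
    by_contra hcon
    push Not at hcon
    have := mul_nonneg h5.le hcon
    linarith
  have h3 := hflt h h0 h1
  have h4 := hW h
  by_contra hcon
  push Not at hcon
  have := mul_nonneg_of_nonpos_of_nonpos hcon hneg.le
  linarith

end

lemma cyc_q {σ : ℤ → ℝ} {n : ℕ} {lam : ℝ} (hcyc : ∀ i, σ (i + n) = σ i + lam) (i q : ℤ) :
    σ (i + q * n) = σ i + q * lam := by
  induction q using Int.induction_on with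
  | zero => simp
  | succ q ih =>
    rw [show i + ((q : ℤ) + 1) * n = (i + q * n) + n by ring, hcyc, ih]
    push_cast; ring
  | pred q ih =>
    have := hcyc (i + (-(q : ℤ) - 1) * n)
    rw [show i + (-(q : ℤ) - 1) * n + n = i + (-(q:ℤ)) * n by ring, ih] at this
    push_cast at this ⊢
    linarith

lemma rep_q {n : ℕ} (hn : 3 ≤ n) (i : ℤ) : ∃ j q : ℤ, 1 ≤ j ∧ j ≤ n ∧ i = j + q * n := by
  have hn0 : (0 : ℤ) < n := by omega
  refine ⟨(i - 1) % n + 1, (i - 1) / n, ?_, ?_, ?_⟩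
  · have := Int.emod_nonneg (i - 1) hn0.ne'
    omega
  · have := Int.emod_lt_of_pos (i - 1) hn0
    omega
  · have := Int.emod_add_mul_ediv (i - 1) n
    linarith

lemma gaps_small {σ : ℤ → ℝ} {n : ℕ} {lam r K : ℝ} (hn : 3 ≤ n) (hlam : 0 < lam) (hK : 0 < K)
    (hcyc : ∀ i, σ (i + n) = σ i + lam)
    (hpos : ∀ i, 0 < σ i - σ (i - 1))
    (hstep : ∀ i, σ i - σ (i - 1) ≤ r →
      σ (i + 1) - σ i ≤ (σ i - σ (i - 1)) + 2 * K * (σ i - σ (i - 1)) ^ 4)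
    (hr : 2 * (lam / n) ≤ r) (hd1 : lam / n ≤ 1) (hd2 : 32 * K * lam * (lam / n) ≤ 1) :
    ∀ i, 1 ≤ i → i ≤ (n : ℤ) → σ i - σ (i - 1) ≤ 2 * (lam / n) := by
  have hn0 : (0 : ℝ) < n := by exact_mod_cast (show 0 < n by omega)
  obtain ⟨δ, hδ⟩ : ∃ δ, δ = lam / n := ⟨_, rfl⟩
  have hδn : n * δ = lam := by rw [hδ]; field_simp
  rw [← hδ] at hr hd1 hd2 ⊢
  have hδ0 : 0 < δ := by rw [hδ]; positivity
  obtain ⟨i0, hi1, hi2, hi3⟩ : ∃ i0 : ℤ, 1 ≤ i0 ∧ i0 ≤ n ∧ σ i0 - σ (i0 - 1) ≤ δ := by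
    by_contra hcon
    push Not at hcon
    have hind : ∀ m : ℕ, m + 1 ≤ n → σ 0 + (m + 1) * δ < σ (m + 1) := by
      intro m
      induction m with
      | zero =>
        intro h
        have := hcon 1 le_rfl (by omega)
        simp at this ⊢
        linarith
      | succ m ih =>
        intro h
        have h1 := ih (by omega)
        have := hcon (((m + 1 : ℕ) : ℤ) + 1) (by omega) (by exact_mod_cast h)
        rw [add_sub_cancel_right] at this
        push_cast at this ⊢
        linarith
    have h1 := hind (n - 1) (by omega)
    have e1 : (((n - 1 : ℕ) : ℤ) + 1) = 0 + n := by omega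
    have e2 : (((n - 1 : ℕ) : ℝ) + 1) = n := by
      have : n - 1 + 1 = n := by omega
      exact_mod_cast this
    rw [e1, e2, hcyc, hδn] at h1
    linarith
  have hind : ∀ m : ℕ, m ≤ n → σ (i0 + m) - σ (i0 + m - 1) ≤ δ + m * (2 * K * (2 * δ) ^ 4) := by
    intro m
    induction m with
    | zero => intro _; simpa using hi3
    | succ m ih =>
      intro h
      have h1 := ih (by omega)
      have hm : (m : ℝ) ≤ n := by exact_mod_cast (show m ≤ n by omega)
      have h2 : (m : ℝ) * (2 * K * (2 * δ) ^ 4) ≤ δ := by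
        calc (m : ℝ) * (2 * K * (2 * δ) ^ 4) ≤ n * (2 * K * (2 * δ) ^ 4) := by gcongr
          _ = 32 * K * lam * δ * (δ * δ) := by rw [← hδn]; ring
          _ ≤ 1 * (δ * 1) := by gcongr
          _ = δ := by ring
      have h3 : σ (i0 + m) - σ (i0 + m - 1) ≤ 2 * δ := by linarith
      have h4 := hstep (i0 + m) (h3.trans hr)
      have h5 := hpos (i0 + m)
      have h6 : 2 * K * (σ (i0 + m) - σ (i0 + m - 1)) ^ 4 ≤ 2 * K * (2 * δ) ^ 4 := by gcongr
      push_cast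
      rw [← add_assoc, add_sub_cancel_right]
      linarith
  have hfin : ∀ m : ℕ, m ≤ n → σ (i0 + m) - σ (i0 + m - 1) ≤ 2 * δ := by
    intro m h
    have h1 := hind m h
    have hm : (m : ℝ) ≤ n := by exact_mod_cast h
    have h2 : (m : ℝ) * (2 * K * (2 * δ) ^ 4) ≤ δ := by
      calc (m : ℝ) * (2 * K * (2 * δ) ^ 4) ≤ n * (2 * K * (2 * δ) ^ 4) := by gcongr
        _ = 32 * K * lam * δ * (δ * δ) := by rw [← hδn]; ring
        _ ≤ 1 * (δ * 1) := by gcongr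
        _ = δ := by ring
    linarith
  intro i h1 h2
  by_cases hc : i0 ≤ i
  · have := hfin (i - i0).toNat (by omega)
    rwa [Int.toNat_of_nonneg (by omega), add_sub_cancel] at this
  · have := hfin (i + n - i0).toNat (by omega)
    rw [Int.toNat_of_nonneg (by omega), add_sub_cancel, hcyc,
      show i + (n:ℤ) - 1 = i - 1 + n by ring, hcyc] at this
    linarith

theorem stmt_5 (x : ℝ → ℝ × ℝ) (lam : ℝ) (hlam : 0 < lam)
    (hx : ContDiff ℝ (⊤ : ℕ∞) x)
    (haff : ∀ t : ℝ, om (deriv x t) (iteratedDeriv 2 x t) = 1)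
    (hper : ∀ t : ℝ, x (t + lam) = x t)
    (hinj : Set.InjOn x (Set.Ico 0 lam))
    (C : Set (ℝ × ℝ)) (hC : C = convexHull ℝ (x '' Set.Icc 0 lam))
    (hcomp : IsCompact C) (hconv : StrictConvex ℝ C)
    (hbd : x '' Set.Icc 0 lam = frontier C)
    (k : ℝ → ℝ) (hk : ∀ t : ℝ, k t = om (iteratedDeriv 2 x t) (iteratedDeriv 3 x t))
    -- the vertex parameters of best approximating inscribed polygons
    (s : ℕ → ℤ → ℝ)
    (hs0 : ∀ n : ℕ, 3 ≤ n → 0 ≤ s n 1)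
    (hmono : ∀ n : ℕ, 3 ≤ n → ∀ i : ℤ, 1 ≤ i → i < (n : ℤ) → s n i < s n (i + 1))
    (hlast : ∀ n : ℕ, 3 ≤ n → s n (n : ℤ) < lam)
    (hcyc : ∀ n : ℕ, 3 ≤ n → ∀ i : ℤ, s n (i + (n : ℤ)) = s n i + lam)
    (hbest : ∀ n : ℕ, 3 ≤ n →
      (volume (convexHull ℝ
        (((Finset.Icc (1 : ℤ) (n : ℤ)).image fun i => x (s n i) : Finset (ℝ × ℝ)) :
          Set (ℝ × ℝ)))).toReal =
      sSup { A : ℝ | ∃ S : Finset (ℝ × ℝ), ↑S ⊆ frontier C ∧ S.card ≤ n ∧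
        A = (volume (convexHull ℝ (S : Set (ℝ × ℝ)))).toReal })
    -- the arc lengths λ_{n,i}
    (lamn : ℕ → ℤ → ℝ) (hlamn : ∀ n : ℕ, ∀ i : ℤ, lamn n i = s n i - s n (i - 1)) :
    -- conclusion: λ_{n,i+1} = λ_{n,i} + (1/30) k'(s_{n,i}) λ_{n,i}⁴ + ε₁(n,i) with
    -- max_{1 ≤ i ≤ n} |ε₁(n,i)| / λ_{n,i}⁵ → 0 as n → ∞
    ∀ ε > (0 : ℝ), ∃ N : ℕ, ∀ n : ℕ, N ≤ n → ∀ i : ℤ, 1 ≤ i → i ≤ (n : ℤ) →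
      |lamn n (i + 1) - lamn n i - (1 / 30) * deriv k (s n i) * (lamn n i) ^ 4| ≤
        ε * (lamn n i) ^ 5 := by
  intro ε hε
  have hy : Crv (fun j => iteratedDeriv j x) lam := by
    refine ⟨hlam, fun j t => ?_, fun t => ?_, fun j t => ?_⟩
    · have hd : Differentiable ℝ (iteratedDeriv j x) :=
        hx.differentiable_iteratedDeriv j (by exact_mod_cast WithTop.coe_lt_top j)
      rw [iteratedDeriv_succ]
      exact (hd t).hasDerivAt
    · simp only [iteratedDeriv_one]; exact haff t
    · have := iteratedDeriv_comp_add_const j x lam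
      rw [← congrFun this t, show (fun z => x (z + lam)) = x from funext hper]
  have hfr : ∀ t, x t ∈ frontier C := by
    intro t
    obtain ⟨u, hu, he⟩ := Function.Periodic.exists_mem_Ico₀ (f := x) hper hlam t
    rw [he, ← hbd]
    exact ⟨u, ⟨hu.1, hu.2.le⟩, rfl⟩
  have hP := hy.pos_of_convex hconv hcomp.isClosed (by simpa using hfr) (by simpa using hinj)
  obtain ⟨r, hr, K, hK, hkK, hst⟩ := hy.step hP
  have hkd : ∀ t, deriv k t = om (iteratedDeriv 2 x t) (iteratedDeriv 4 x t) := by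
    intro t
    have : k = fun t => om (iteratedDeriv 2 x t) (iteratedDeriv 3 x t) := funext hk
    rw [this]
    exact (hy.dk t).deriv
  obtain ⟨η, hη⟩ : ∃ η, η = min (min (r / 2) (1 / 2)) (min (1 / (32 * K * lam)) (ε / (2 * K))) :=
    ⟨_, rfl⟩
  have hη0 : 0 < η := by rw [hη]; positivity
  obtain ⟨N, hN⟩ := exists_nat_ge (lam / η)
  refine ⟨max 3 N, fun n hn i hi1 hi2 => ?_⟩
  have hn3 : 3 ≤ n := (le_max_left _ _).trans hn
  have hn0 : (0 : ℝ) < n := by exact_mod_cast (show 0 < n by omega)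
  have hδ : lam / n ≤ η := by
    rw [div_le_iff₀ hn0]
    rw [div_le_iff₀ hη0] at hN
    have : (N : ℝ) ≤ n := by exact_mod_cast (le_max_right _ _).trans hn
    nlinarith
  have hδ1 : lam / n ≤ r / 2 :=
    hδ.trans (hη ▸ (min_le_left _ _).trans (min_le_left _ _))
  have hδ2 : lam / n ≤ 1 / 2 :=
    hδ.trans (hη ▸ (min_le_left _ _).trans (min_le_right _ _))
  have hδ3 : lam / n ≤ 1 / (32 * K * lam) :=
    hδ.trans (hη ▸ (min_le_right _ _).trans (min_le_left _ _))
  have hδ4 : lam / n ≤ ε / (2 * K) :=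
    hδ.trans (hη ▸ (min_le_right _ _).trans (min_le_right _ _))
  obtain ⟨σ, hσe⟩ : ∃ σ, σ = s n := ⟨_, rfl⟩
  have hcyc' : ∀ i, σ (i + n) = σ i + lam := by rw [hσe]; exact hcyc n hn3
  have hmono' : StrictMono σ := by
    refine strictMono_int_of_lt_succ fun i => ?_
    obtain ⟨j, q, hj1, hj2, rfl⟩ := rep_q hn3 i
    rw [show j + q * n + 1 = (j + 1) + q * n by ring, cyc_q hcyc', cyc_q hcyc']
    have : σ j < σ (j + 1) := by
      rcases hj2.eq_or_lt with h | h
      · rw [h, add_comm (n : ℤ) 1, hcyc' 1, hσe]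
        linarith [hs0 n hn3, hlast n hn3]
      · rw [hσe]; exact hmono n hn3 j hj1 h
    linarith
  have hmax : ∀ S : Finset (ℝ × ℝ), (S : Set (ℝ × ℝ)) ⊆ Set.range (iteratedDeriv 0 x) →
      S.card ≤ n → (volume (convexHull ℝ (S : Set (ℝ × ℝ)))).toReal ≤
      (volume (convexHull ℝ (((Finset.Icc (1 : ℤ) (n : ℤ)).image fun i => iteratedDeriv 0 x (σ i) :
        Finset (ℝ × ℝ)) : Set (ℝ × ℝ)))).toReal := by
    intro S hS hc
    simp only [iteratedDeriv_zero] at hS ⊢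
    rw [hσe, hbest n hn3]
    refine le_csSup ⟨(volume C).toReal, ?_⟩ ⟨S, ?_, hc, rfl⟩
    · rintro _ ⟨S, hS, -, rfl⟩
      refine ENNReal.toReal_mono hcomp.measure_lt_top.ne (measure_mono ?_)
      exact convexHull_min (hS.trans hcomp.isClosed.frontier_subset) hconv.convex
    · refine hS.trans ?_
      rintro _ ⟨t, rfl⟩
      exact hfr t
  have htF : ∀ i, tF (fun j => iteratedDeriv j x) (σ i) (σ (i + 1) - σ i) =
      tF (fun j => iteratedDeriv j x) (σ i) (-(σ i - σ (i - 1))) := by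
    intro i
    have main : ∀ j : ℤ, 1 ≤ j → j ≤ n →
        tF (fun j => iteratedDeriv j x) (σ j) (σ (j + 1) - σ j) =
        tF (fun j => iteratedDeriv j x) (σ j) (-(σ j - σ (j - 1))) := by
      intro j hj1 hj2
      refine hy.stationary' ?_
      rw [add_sub_cancel, sub_sub_cancel]
      exact hy.stationary hP hn3 hmono' hcyc' hmax hj1 hj2
    obtain ⟨j, q, hj1, hj2, rfl⟩ := rep_q hn3 i
    have := main j hj1 hj2
    rw [show j + q * n + 1 = (j + 1) + q * n by ring,
      show j + q * n - 1 = (j - 1) + q * n by ring, cyc_q hcyc', cyc_q hcyc', cyc_q hcyc']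
    have hp : ∀ h, tF (fun j => iteratedDeriv j x) (σ j + q * lam) h =
        tF (fun j => iteratedDeriv j x) (σ j) h := by
      intro h
      have hper' : Function.Periodic (fun s => tF (fun j => iteratedDeriv j x) s h) lam :=
        fun s => hy.tF_per s h
      have := hper'.int_mul q (σ j)
      simpa using this
    rw [hp, hp]
    convert this using 2 <;> ring
  have hpos : ∀ i, 0 < σ i - σ (i - 1) := fun i => sub_pos.2 (hmono' (by omega))
  have hest : ∀ i, σ i - σ (i - 1) ≤ r →
      |(σ (i + 1) - σ i) - (σ i - σ (i - 1)) - (1 / 30) * deriv k (σ i) *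
        (σ i - σ (i - 1)) ^ 4| ≤ K * (σ i - σ (i - 1)) ^ 6 := by
    intro i hi
    rw [hkd]
    refine hst (σ i) _ _ (hpos i) hi (sub_pos.2 (hmono' (by omega))) ?_ (htF i)
    have : σ (i + 1) < σ (i - 1 + n) := hmono' (by omega)
    rw [hcyc'] at this
    linarith
  have hgap := gaps_small (r := min r 1) hn3 hlam hK hcyc' hpos (fun i hi => ?_)
    (le_min (by linarith) (by linarith)) (by linarith)
    (by
      rw [le_div_iff₀ (by positivity)] at hδ3
      linarith) i hi1 hi2
  · have h1 := hest i (hgap.trans (by linarith))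
    have h2 := hpos i
    rw [hlamn, hlamn, add_sub_cancel_right, ← hσe]
    refine h1.trans ?_
    have h3 : K * (σ i - σ (i - 1)) ≤ ε := by
      rw [le_div_iff₀ (by positivity)] at hδ4
      nlinarith
    calc K * (σ i - σ (i - 1)) ^ 6 = K * (σ i - σ (i - 1)) * (σ i - σ (i - 1)) ^ 5 := by ring
      _ ≤ ε * (σ i - σ (i - 1)) ^ 5 := by gcongr
  · have h1 := hest i (hi.trans (min_le_left _ _))
    have h2 := hpos i
    have h3 := hi.trans (min_le_right _ _)
    have hk1 : |deriv k (σ i)| ≤ K := by rw [hkd]; exact hkK (σ i)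
    obtain ⟨a, ha⟩ : ∃ a, a = σ i - σ (i - 1) := ⟨_, rfl⟩
    rw [← ha] at h1 h2 h3 ⊢
    have h4 := (abs_le.1 h1).2
    have h5 := (abs_le.1 hk1).2
    have h6 : deriv k (σ i) * a ^ 4 ≤ K * a ^ 4 := by gcongr
    have h7 : K * a ^ 6 ≤ K * a ^ 4 := by
      have : a ^ 6 ≤ a ^ 4 := pow_le_pow_of_le_one h2.le h3 (by norm_num)
      gcongr
    have h8 : 0 ≤ K * a ^ 4 := by positivity
    linarith
end

section
/- Let C be a compact strictly convex planar body whose boundary is traced by a C^∞, λ-periodic, affinely parametrized curve x with affine curvature k. For each n ≥ 3, let 0 ≤ s_{n,1} < … < s_{n,n} < λ be parameters of the vertices of a best approximating inscribed polygon with at most n vertices, indices extended cyclically by s_{n,i+n} = s_{n,i} + λ, and set λ_{n,i} := s_{n,i} − s_{n,i−1}. Then there exist a constant D > 0 and an integer N such that for all n ≥ N and all 1 ≤ i ≤ n: |λ_{n,i} − λ/n| ≤ D/n³. -/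
open Filter MeasureTheory
open scoped Topology

section PA
theorem om_hasDeriv_right (v : ℝ × ℝ) {f : ℝ → ℝ × ℝ} {f' : ℝ × ℝ} {t : ℝ} (h : HasDerivAt f f' t) :
    HasDerivAt (fun t => om v (f t)) (om v f') t := by
  have := ((v.1 • ContinuousLinearMap.snd ℝ ℝ ℝ - v.2 • ContinuousLinearMap.fst ℝ ℝ ℝ).hasFDerivAt
    (x := f t)).comp_hasDerivAt t h
  simpa [om, Function.comp_def] using this

theorem om_hasDeriv_left (v : ℝ × ℝ) {f : ℝ → ℝ × ℝ} {f' : ℝ × ℝ} {t : ℝ} (h : HasDerivAt f f' t) :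
    HasDerivAt (fun t => om (f t) v) (om f' v) t := by
  have := (om_hasDeriv_right (-v) h)
  have e : ∀ w, om (-v) w = om w v := by intro w; simp [om]; ring
  simpa only [e] using this

theorem om_hasDeriv_s6 {f g : ℝ → ℝ × ℝ} {f' g' : ℝ × ℝ} {t : ℝ} (h : HasDerivAt f f' t)
    (h2 : HasDerivAt g g' t) :
    HasDerivAt (fun t => om (f t) (g t)) (om f' (g t) + om (f t) g') t := by
  have a1 := ((ContinuousLinearMap.fst ℝ ℝ ℝ).hasFDerivAt (x := f t)).comp_hasDerivAt t h
  have a2 := ((ContinuousLinearMap.snd ℝ ℝ ℝ).hasFDerivAt (x := f t)).comp_hasDerivAt t h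
  have b1 := ((ContinuousLinearMap.fst ℝ ℝ ℝ).hasFDerivAt (x := g t)).comp_hasDerivAt t h2
  have b2 := ((ContinuousLinearMap.snd ℝ ℝ ℝ).hasFDerivAt (x := g t)).comp_hasDerivAt t h2
  exact ((a1.mul b2).sub (a2.mul b1)).congr_deriv (by simp [om]; ring)

theorem om_abs_le (u v : ℝ × ℝ) : |om u v| ≤ 2 * (‖u‖ * ‖v‖) := by
  have h1 := norm_fst_le u
  have h2 := norm_snd_le u
  have h3 := norm_fst_le v
  have h4 := norm_snd_le v
  calc |om u v| ≤ |u.1 * v.2| + |u.2 * v.1| := abs_sub _ _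
    _ = ‖u.1‖ * ‖v.2‖ + ‖u.2‖ * ‖v.1‖ := by simp [abs_mul]
    _ ≤ ‖u‖ * ‖v‖ + ‖u‖ * ‖v‖ := by gcongr
    _ = _ := by ring

theorem om_cont {α : Type*} [TopologicalSpace α] {f g : α → ℝ × ℝ} (hf : Continuous f) (hg : Continuous g) :
    Continuous fun a => om (f a) (g a) := by
  unfold om; fun_prop

theorem pow_step {g g' : ℝ → ℝ} (K : ℝ) (hK : 0 ≤ K) (m : ℕ) (hg : ∀ t, HasDerivAt g (g' t) t) (h0 : g 0 = 0)
    (hb : ∀ t, |g' t| ≤ K * |t| ^ m) (t : ℝ) : |g t| ≤ K * |t| ^ (m+1) := by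
  have := (convex_segment (𝕜 := ℝ) (0:ℝ) t).norm_image_sub_le_of_norm_hasDerivWithin_le (f := g) (f' := g')
    (C := K * |t| ^ m) (fun y _ => (hg y).hasDerivWithinAt) (fun y hy => by
      refine (hb y).trans ?_
      have : |y| ≤ |t| := by
        rw [segment_eq_uIcc] at hy
        have := Set.abs_sub_left_of_mem_uIcc hy
        simpa using this
      gcongr) (left_mem_segment ℝ 0 t) (right_mem_segment ℝ 0 t)
  simp only [h0, sub_zero, Real.norm_eq_abs] at this
  rw [pow_succ]; linarith

theorem iter_hasDeriv {x : ℝ → ℝ × ℝ} (hx : ContDiff ℝ (⊤ : ℕ∞) x) (j : ℕ) (t : ℝ) :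
    HasDerivAt (iteratedDeriv j x) (iteratedDeriv (j+1) x t) t := by
  rw [iteratedDeriv_succ]
  exact (hx.differentiable_iteratedDeriv j (by exact_mod_cast WithTop.coe_lt_top j) t).hasDerivAt

theorem iter_bdd {x : ℝ → ℝ × ℝ} (hx : ContDiff ℝ (⊤ : ℕ∞) x) {lam : ℝ} (hlam : 0 < lam)
    (hper : ∀ t : ℝ, x (t + lam) = x t) (j : ℕ) : ∃ K, 0 ≤ K ∧ ∀ t, ‖iteratedDeriv j x t‖ ≤ K := by
  have hp : Function.Periodic (iteratedDeriv j x) lam := by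
    intro t
    have := iteratedDeriv_comp_add_const (𝕜 := ℝ) j x lam
    have e : (fun z => x (z + lam)) = x := funext hper
    rw [e] at this
    exact (congrFun this t).symm
  have hb := hp.isBounded_of_continuous hlam.ne' (continuous_iff_continuousAt.2 fun t => (iter_hasDeriv hx j t).continuousAt)
  obtain ⟨K, hK⟩ := hb.exists_norm_le
  exact ⟨K, (norm_nonneg _).trans (hK _ ⟨0, rfl⟩), fun t => hK _ ⟨t, rfl⟩⟩

/-- Taylor expansion -/
theorem taylor_phi {x : ℝ → ℝ × ℝ} {lam : ℝ} (hlam : 0 < lam)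
    (hx : ContDiff ℝ (⊤ : ℕ∞) x)
    (haff : ∀ t : ℝ, om (deriv x t) (iteratedDeriv 2 x t) = 1)
    (hper : ∀ t : ℝ, x (t + lam) = x t) :
    ∃ K > 0, ∀ s, ∃ κ, |κ| ≤ K ∧ ∀ h,
      |om (deriv x s) (deriv x (s+h)) - h - κ * h^3/6| ≤ K * |h|^4 ∧
      |om (deriv x s) (x (s+h) - x s) - h^2/2 - κ * h^4/24| ≤ K * |h|^5 := by
  obtain ⟨K1, hK1, hb1⟩ := iter_bdd hx hlam hper 1
  obtain ⟨K4, hK4, hb4⟩ := iter_bdd hx hlam hper 4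
  obtain ⟨K5, hK5, hb5⟩ := iter_bdd hx hlam hper 5
  have d0 : ∀ t, HasDerivAt x (iteratedDeriv 1 x t) t := fun t => by
    have := iter_hasDeriv hx 0 t; simpa using this
  rw [← iteratedDeriv_one (𝕜 := ℝ)] at *
  have d1 := iter_hasDeriv hx 1
  have d2 := iter_hasDeriv hx 2
  have d3 := iter_hasDeriv hx 3
  have d4 := iter_hasDeriv hx 4
  have h3 : ∀ t, om (iteratedDeriv 1 x t) (iteratedDeriv 3 x t) = 0 := by
    intro t
    have := om_hasDeriv_s6 (d1 t) (d2 t)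
    have e : (fun t => om (iteratedDeriv 1 x t) (iteratedDeriv 2 x t)) = fun _ => 1 := funext haff
    rw [e] at this
    have := this.unique (hasDerivAt_const t 1)
    simp [om] at this ⊢; linarith
  set K := 2 * (K1 * K5) + 2 * (K1 * K4) + 1
  have hK : 0 ≤ K := by positivity
  refine ⟨K, by positivity, fun s => ⟨om (iteratedDeriv 1 x s) (iteratedDeriv 4 x s), ?_, fun h => ?_⟩⟩
  · refine (om_abs_le _ _).trans ?_
    have := mul_le_mul (hb1 s) (hb4 s) (norm_nonneg _) hK1
    have : 0 ≤ K1 * K5 := by positivity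
    simp only [K]; linarith
  set v := iteratedDeriv 1 x s
  set κ := om v (iteratedDeriv 4 x s)
  have sh : ∀ (f f' : ℝ → ℝ × ℝ), (∀ t, HasDerivAt f (f' t) t) → ∀ t, HasDerivAt (fun h => om v (f (s+h))) (om v (f' (s+t))) t := by
    intro f f' hf t
    exact om_hasDeriv_right v (by simpa using (hf (s+t)).comp_const_add s t)
  have b5 : ∀ t, |om v (iteratedDeriv 5 x (s+t))| ≤ K * |t|^0 := by
    intro t
    refine (om_abs_le _ _).trans ?_
    have := mul_le_mul (hb1 s) (hb5 (s+t)) (norm_nonneg _) hK1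
    have : 0 ≤ K1 * K4 := by positivity
    simp only [K, pow_zero]; linarith
  have s4 := pow_step (g := fun h => om v (iteratedDeriv 4 x (s+h)) - κ) K hK 0 (fun t => (sh _ _ d4 t).sub_const κ) (by simp [κ]) b5
  have s3 := pow_step (g := fun h => om v (iteratedDeriv 3 x (s+h)) - κ * h) K hK 1
    (fun t => (sh _ _ d3 t).sub (by simpa using (hasDerivAt_id t).const_mul κ)) (by simpa [v] using h3 s) s4
  have s2 := pow_step (g := fun h => om v (iteratedDeriv 2 x (s+h)) - 1 - κ * h^2/2) K hK 2
    (fun t => ((sh _ _ d2 t).sub_const 1).sub (by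
      exact (((hasDerivAt_pow 2 t).const_mul κ).div_const 2).congr_deriv (by simp; ring))) (by simpa [v, sub_eq_zero] using haff s) s3
  have s1 := pow_step (g := fun h => om v (iteratedDeriv 1 x (s+h)) - h - κ * h^3/6) K hK 3
    (fun t => ((sh _ _ d1 t).sub (hasDerivAt_id t)).sub (by
      exact (((hasDerivAt_pow 3 t).const_mul κ).div_const 6).congr_deriv (by simp; ring))) (by simp [v, om]; ring) s2
  have s0 := pow_step (g := fun h => om v (x (s+h) - x s) - h^2/2 - κ * h^4/24) K hK 4
    (fun t => ((sh (fun t => x t - x s) _ (fun t => (d0 t).sub_const _) t).sub (by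
      exact (((hasDerivAt_pow 2 t)).div_const 2).congr_deriv (by simp))).sub (by
      exact (((hasDerivAt_pow 4 t).const_mul κ).div_const 24).congr_deriv (by simp; ring))) (by simp [v, om]) s1
  exact ⟨s1 h, s0 h⟩

end PA

section B
open Set Filter Topology

theorem x_mod {x : ℝ → ℝ × ℝ} {lam : ℝ} (hlam : 0 < lam)
    (hper : ∀ t : ℝ, x (t + lam) = x t) (t : ℝ) : x (toIcoMod hlam 0 t) = x t := by
  have hp : Function.Periodic x lam := hper
  rw [toIcoMod]
  exact hp.sub_zsmul_eq _

theorem x_ne {x : ℝ → ℝ × ℝ} {lam : ℝ} (hlam : 0 < lam)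
    (hper : ∀ t : ℝ, x (t + lam) = x t)
    (hinj : Set.InjOn x (Set.Ico 0 lam)) {s t : ℝ} (h1 : s < t) (h2 : t < s + lam) : x s ≠ x t := by
  intro h
  rw [← x_mod hlam hper s, ← x_mod hlam hper t] at h
  have m : ∀ t, toIcoMod hlam 0 t ∈ Ico 0 lam := fun t => by simpa using toIcoMod_mem_Ico hlam 0 t
  have := hinj (m s) (m t) h
  rw [toIcoMod, toIcoMod] at this
  set a := toIcoDiv hlam 0 s
  set b := toIcoDiv hlam 0 t
  simp only [zsmul_eq_mul] at this
  have e : t - s = ((b - a : ℤ) : ℝ) * lam := by push_cast; linarith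
  have l1 : 0 < ((b - a : ℤ) : ℝ) := by
    by_contra hc
    push Not at hc
    nlinarith
  have l2 : ((b - a : ℤ) : ℝ) < 1 := by
    by_contra hc
    push Not at hc
    nlinarith
  norm_cast at l1 l2
  omega

theorem no_between {C : Set (ℝ × ℝ)} (hconv : StrictConvex ℝ C) {P Q R : ℝ × ℝ} (hP : P ∈ C) (hQ : Q ∈ C)
    (hR : R ∈ frontier C) (hPQ : P ≠ Q) {c : ℝ} (h0 : 0 < c) (h1 : c < 1) (h : R - P = c • (Q - P)) : False := by
  have := hconv hP hQ hPQ (a := 1 - c) (b := c) (by linarith) h0 (by ring)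
  have e : (1 - c) • P + c • Q = R := by
    rw [← sub_add_cancel R P, h]; module
  rw [e] at this
  exact hR.2 this

theorem om_par {u v : ℝ × ℝ} (h : om u v = 0) (hv : v ≠ 0) : ∃ c : ℝ, u = c • v := by
  by_cases h1 : v.1 = 0
  · have h2 : v.2 ≠ 0 := fun h2 => hv (Prod.ext h1 h2)
    refine ⟨u.2 / v.2, Prod.ext ?_ ?_⟩
    · simp [om, h1, h2] at h ⊢; exact h
    · simp; field_simp
  · refine ⟨u.1 / v.1, Prod.ext ?_ ?_⟩
    · simp; field_simp
    · simp [om] at h ⊢; field_simp; linarith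

theorem no_collinear {C : Set (ℝ × ℝ)} (hconv : StrictConvex ℝ C) (hcl : IsClosed C) {P Q R : ℝ × ℝ}
    (hP : P ∈ frontier C) (hQ : Q ∈ frontier C) (hR : R ∈ frontier C)
    (hPQ : P ≠ Q) (hPR : P ≠ R) (hQR : Q ≠ R) : om (Q - P) (R - P) ≠ 0 := by
  intro h
  obtain ⟨c, hc⟩ := om_par h (sub_ne_zero.2 hPR.symm)
  have f := hcl.frontier_subset
  have c0 : c ≠ 0 := by
    rintro rfl; simp [sub_eq_zero] at hc; exact hPQ hc.symm
  have c1 : c ≠ 1 := by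
    rintro rfl; simp at hc; exact hQR hc
  rcases lt_or_gt_of_ne c0 with h0 | h0
  · refine no_between hconv (f hQ) (f hR) hP hQR (c := -c / (1 - c)) (div_pos (by linarith) (by linarith)) ?_ ?_
    · rw [div_lt_one (by linarith)]; linarith
    · have : R - Q = (1 - c) • (R - P) := by rw [sub_smul, ← hc]; module
      rw [this, smul_smul, div_mul_cancel₀ _ (by linarith), neg_smul, ← hc]; module
  rcases lt_or_gt_of_ne c1 with h1 | h1
  · exact no_between hconv (f hP) (f hR) hQ hPR h0 h1 hc
  · refine no_between hconv (f hP) (f hQ) hR hPQ (c := c⁻¹) (by positivity) (inv_lt_one_of_one_lt₀ h1) ?_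
    rw [hc, smul_smul, inv_mul_cancel₀ c0, one_smul]

theorem phi_of_G {x : ℝ → ℝ × ℝ} {lam : ℝ} (hd : Differentiable ℝ x) (σ : ℝ)
    (hG : ∀ s t u, s < t → t < u → u < s + lam → 0 < σ * om (x t - x s) (x u - x s)) (s h : ℝ)
    (h0 : 0 < h) (h1 : h < lam) : 0 ≤ σ * om (deriv x s) (x (s+h) - x s) := by
  have hD : HasDerivAt (fun t => σ * om (x t - x s) (x (s+h) - x s)) (σ * om (deriv x s) (x (s+h) - x s)) s :=
    (om_hasDeriv_left _ ((hd s).hasDerivAt.sub_const (x s))).const_mul σ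
  have := (hasDerivAt_iff_tendsto_slope.1 hD).mono_left (nhdsWithin_mono s (s := Ioi s) (fun y hy => ne_of_gt hy))
  refine ge_of_tendsto this ?_
  filter_upwards [Ioo_mem_nhdsGT (show s < s + h by linarith)] with t ht
  have := hG s t (s+h) ht.1 ht.2 (by linarith)
  rw [slope_def_field]
  refine div_nonneg ?_ (by linarith [ht.1])
  simp [om] at this ⊢
  exact this.le

theorem G_pos {x : ℝ → ℝ × ℝ} {lam : ℝ} (hlam : 0 < lam)
    (hx : ContDiff ℝ (⊤ : ℕ∞) x)
    (haff : ∀ t : ℝ, om (deriv x t) (iteratedDeriv 2 x t) = 1)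
    (hper : ∀ t : ℝ, x (t + lam) = x t)
    (hinj : Set.InjOn x (Set.Ico 0 lam))
    {C : Set (ℝ × ℝ)} (hcl : IsClosed C) (hconv : StrictConvex ℝ C)
    (hf : ∀ t, x t ∈ frontier C) :
    ∀ s t u, s < t → t < u → u < s + lam → 0 < om (x t - x s) (x u - x s) := by
  set U : Set (ℝ × ℝ × ℝ) := {p | p.1 < p.2.1 ∧ p.2.1 < p.2.2 ∧ p.2.2 < p.1 + lam}
  have hU : Convex ℝ U := by
    intro p hp q hq a b ha hb hab
    simp only [U, mem_ofPred_eq, Prod.fst_add, Prod.snd_add, Prod.smul_fst, Prod.smul_snd, smul_eq_mul] at *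
    have key : ∀ c d : ℝ, 0 < c → 0 < d → 0 < a * c + b * d := by
      intro c d hc hd
      rcases ha.eq_or_lt with rfl | ha
      · have : b = 1 := by linarith
        subst this; linarith
      · nlinarith [mul_pos ha hc, mul_nonneg hb hd.le]
    have k1 := key (p.2.1 - p.1) (q.2.1 - q.1) (by linarith) (by linarith)
    have k2 := key (p.2.2 - p.2.1) (q.2.2 - q.2.1) (by linarith) (by linarith)
    have k3 := key (p.1 + lam - p.2.2) (q.1 + lam - q.2.2) (by linarith) (by linarith)
    have k4 : a * lam + b * lam = lam := by rw [← add_mul, hab, one_mul]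
    refine ⟨by linarith, by linarith, by linarith⟩
  have hc : Continuous x := hx.continuous
  have hd : Differentiable ℝ x := hx.differentiable (by simp)
  let G : ℝ × ℝ × ℝ → ℝ := fun p => om (x p.2.1 - x p.1) (x p.2.2 - x p.1)
  have hG : Continuous G := om_cont (by fun_prop) (by fun_prop)
  have hne : ∀ p ∈ U, G p ≠ 0 := by
    rintro ⟨s, t, u⟩ ⟨h1, h2, h3⟩
    simp only at h1 h2 h3
    exact no_collinear hconv hcl (hf s) (hf t) (hf u) (x_ne hlam hper hinj h1 (by linarith))
      (x_ne hlam hper hinj (by linarith) (by linarith)) (x_ne hlam hper hinj h2 (by linarith))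
  intro s t u h1 h2 h3
  by_contra hcon
  have hneg : ∀ p ∈ U, G p < 0 := by
    intro p hp
    by_contra hp2
    push Not at hp2 hcon
    have := hU.isPreconnected.intermediate_value (a := (s,t,u)) (b := p) ⟨h1,h2,h3⟩ hp hG.continuousOn
    obtain ⟨q, hq, hq0⟩ := this ⟨hcon, hp2⟩
    exact hne q hq hq0
  have hphi := phi_of_G (lam := lam) hd (-1) (fun s t u h1 h2 h3 => by
    have := hneg (s,t,u) ⟨h1,h2,h3⟩
    simp only [G] at this; linarith)
  obtain ⟨K, hK, hT⟩ := taylor_phi hlam hx haff hper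
  obtain ⟨κ, hκ, hT⟩ := hT 0
  set h := min (lam/2) (min 1 (1/(4*K)))
  have hh0 : 0 < h := by positivity
  have hh1 : h < lam := (min_le_left _ _).trans_lt (by linarith)
  have hh2 : h ≤ 1 := (min_le_right _ _).trans (min_le_left _ _)
  have hh3 : h ≤ 1/(4*K) := (min_le_right _ _).trans (min_le_right _ _)
  have hh4 : K * h ≤ 1/4 := by rw [le_div_iff₀ (by positivity)] at hh3; linarith
  have := hphi 0 h hh0 hh1
  have t2 := abs_le.1 (hT h).2
  rw [abs_of_pos hh0] at t2
  have a1 := abs_le.1 hκ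
  have hp4 : h^4 ≤ h^3 := pow_le_pow_of_le_one hh0.le hh2 (by norm_num)
  have hp5 : h^5 ≤ h^3 := pow_le_pow_of_le_one hh0.le hh2 (by norm_num)
  have b1 : -(K * h^3) ≤ κ * h^4 := by nlinarith [pow_pos hh0 4]
  have b2 : K * h^5 ≤ K * h^3 := by nlinarith
  have b3 : K * h^3 ≤ h^2/4 := by nlinarith [pow_pos hh0 2]
  nlinarith [pow_pos hh0 2]

theorem phi_pos {x : ℝ → ℝ × ℝ} {lam : ℝ} (hd : Differentiable ℝ x)
    (hx0 : ∀ s, deriv x s ≠ 0)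
    (hG : ∀ s t u, s < t → t < u → u < s + lam → 0 < om (x t - x s) (x u - x s)) (s h : ℝ)
    (h0 : 0 < h) (h1 : h < lam) : 0 < om (deriv x s) (x (s+h) - x s) := by
  have hn := phi_of_G (lam := lam) hd 1 (by simpa using hG) s
  simp only [one_mul] at hn
  refine lt_of_le_of_ne (hn h h0 h1) (fun he => ?_)
  obtain ⟨c, hc⟩ := om_par (u := x (s+h) - x s) (v := deriv x s) (by simp [om] at he ⊢; linarith) (hx0 s)
  have g1 := hG s (s + h/2) (s+h) (by linarith) (by linarith) (by linarith)
  have g2 := hG s (s+h) (s + (h+lam)/2) (by linarith) (by linarith) (by linarith)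
  have n1 := hn (h/2) (by linarith) (by linarith)
  have n2 := hn ((h+lam)/2) (by linarith) (by linarith)
  rw [hc] at g1 g2
  have e1 : om (x (s + h/2) - x s) (c • deriv x s) = - (c * om (deriv x s) (x (s + h/2) - x s)) := by
    simp [om]; ring
  have e2 : om (c • deriv x s) (x (s + (h+lam)/2) - x s) = c * om (deriv x s) (x (s + (h+lam)/2) - x s) := by
    simp [om]; ring
  rw [e1] at g1
  rw [e2] at g2
  have : c < 0 := by nlinarith
  nlinarith

end B

section Cc
open Set Filter Topology MeasureTheory
open scoped Pointwise

theorem tri_vol (A p B : ℝ × ℝ) :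
    (volume (convexHull ℝ ({A, p, B} : Set (ℝ × ℝ)))).toReal =
      |om (p - A) (B - A)| * (volume (convexHull ℝ ({0, (1,0), (0,1)} : Set (ℝ × ℝ)))).toReal := by
  set L : (ℝ × ℝ) →ₗ[ℝ] (ℝ × ℝ) := Matrix.toLin (Module.Basis.finTwoProd ℝ) (Module.Basis.finTwoProd ℝ)
    !![(p-A).1, (B-A).1; (p-A).2, (B-A).2] with hL
  have e : convexHull ℝ ({A, p, B} : Set (ℝ × ℝ)) = A +ᵥ (L '' convexHull ℝ ({0, (1,0), (0,1)} : Set (ℝ × ℝ))) := by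
    rw [L.image_convexHull, ← convexHull_vadd]
    congr 1
    simp [Set.image_insert_eq, hL, Matrix.toLin_finTwoProd_apply, ← Set.image_vadd]
    simp [Prod.ext_iff, Set.ext_iff, Prod.mk.eta]
  rw [e, measure_vadd, Measure.addHaar_image_linearMap, hL, LinearMap.det_toLin, ENNReal.toReal_mul,
    ENNReal.toReal_ofReal (abs_nonneg _)]
  simp [Matrix.det_fin_two, om]
  left; congr 1; ring

theorem std_pos : 0 < (volume (convexHull ℝ ({0, (1,0), (0,1)} : Set (ℝ × ℝ)))).toReal := by
  have hfin : ({0, (1,0), (0,1)} : Set (ℝ × ℝ)).Finite := by simp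
  have hc := hfin.isCompact_convexHull ℝ
  apply ENNReal.toReal_pos _ hc.measure_lt_top.ne
  have : (Ioo (0:ℝ) (1/2)) ×ˢ (Ioo (0:ℝ) (1/2)) ⊆ convexHull ℝ ({0, (1,0), (0,1)} : Set (ℝ × ℝ)) := by
    rintro ⟨a, b⟩ ⟨⟨h1, h2⟩, h3, h4⟩
    simp only at h1 h2 h3 h4
    have hv := convex_convexHull ℝ ({0, (1,0), (0,1)} : Set (ℝ × ℝ))
    have s := subset_convexHull ℝ ({0, (1,0), (0,1)} : Set (ℝ × ℝ))
    have := hv.sum_mem (t := Finset.univ) (w := ![1 - a - b, a, b]) (z := ![0, (1,0), (0,1)])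
      (by intro i _; fin_cases i <;> simp <;> linarith) (by simp [Fin.sum_univ_three]; ring)
      (by intro i _; apply s; fin_cases i <;> simp)
    simpa [Fin.sum_univ_three] using this
  intro h0
  have := measure_mono_null this h0
  rw [Measure.volume_eq_prod, Measure.prod_prod] at this
  simp at this

theorem line_null (A v : ℝ × ℝ) (hv : v ≠ 0) : volume {q : ℝ × ℝ | om (q - A) v = 0} = 0 := by
  let S : AffineSubspace ℝ (ℝ × ℝ) := AffineSubspace.mk' A (LinearMap.ker (v.2 • LinearMap.fst ℝ ℝ ℝ - v.1 • LinearMap.snd ℝ ℝ ℝ))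
  have e : {q : ℝ × ℝ | om (q - A) v = 0} = S := by
    ext q
    simp [S, AffineSubspace.mem_mk', om, mul_comm]
  rw [e]
  apply Measure.addHaar_affineSubspace
  intro htop
  have : ∀ q, q ∈ {q : ℝ × ℝ | om (q - A) v = 0} := by
    intro q; rw [e, htop]; trivial
  have h1 := this (A + (1,0))
  have h2 := this (A + (0,1))
  simp [om] at h1 h2
  exact hv (Prod.ext h2 h1)

theorem mem_or {E : Set (ℝ × ℝ)} (hE : Convex ℝ E) {q m : ℝ × ℝ} (hq : q ∈ E) (hm : m ∈ E) {c : ℝ} (h0 : 0 ≤ c) (h1 : c ≤ 1) :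
    q + c • (m - q) ∈ E := by
  have := hE hq hm (a := 1 - c) (b := c) (by linarith) h0 (by ring)
  convert this using 1; module

theorem decomp {C : Set (ℝ × ℝ)} (hcv : Convex ℝ C)
    {A B p : ℝ × ℝ} {W : Set (ℝ × ℝ)} (hW : W.Finite) (hWC : W ⊆ C) (hA : A ∈ W) (hB : B ∈ W) (hp : p ∈ C)
    (hchord : ∀ q ∈ C, om (q - A) (B - A) = 0 → q ∈ segment ℝ A B)
    (hl : ∀ q ∈ W, om (q - A) (B - A) ≤ 0) (hlp : 0 < om (p - A) (B - A)) :
    (volume (convexHull ℝ (insert p W))).toReal = (volume (convexHull ℝ W)).toReal +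
      om (p - A) (B - A) * (volume (convexHull ℝ ({0, (1,0), (0,1)} : Set (ℝ × ℝ)))).toReal := by
  have hAB : B - A ≠ 0 := by intro h; rw [h] at hlp; simp [om] at hlp
  have hlin : ∀ (q r : ℝ × ℝ) (c : ℝ), om (q + c • (r - q) - A) (B - A) = (1 - c) * om (q - A) (B - A) + c * om (r - A) (B - A) := by
    intro q r c; simp [om]; ring
  have hhalf : Convex ℝ {q : ℝ × ℝ | om (q - A) (B - A) ≤ 0} := by
    intro q hq r hr a b ha hb hab
    have e : a • q + b • r = q + b • (r - q) := by
      have : a = 1 - b := by linarith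
      rw [this]; module
    simp only [mem_ofPred_eq] at *
    rw [e, hlin, show 1 - b = a by linarith]
    nlinarith [mul_nonneg ha (neg_nonneg.2 hq), mul_nonneg hb (neg_nonneg.2 hr)]
  have hhalf2 : Convex ℝ {q : ℝ × ℝ | 0 ≤ om (q - A) (B - A)} := by
    intro q hq r hr a b ha hb hab
    have e : a • q + b • r = q + b • (r - q) := by
      have : a = 1 - b := by linarith
      rw [this]; module
    simp only [mem_ofPred_eq] at *
    rw [e, hlin, show 1 - b = a by linarith]
    positivity
  have hQ : convexHull ℝ W ⊆ {q : ℝ × ℝ | om (q - A) (B - A) ≤ 0} := convexHull_min hl hhalf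
  have hT : convexHull ℝ {A, p, B} ⊆ {q : ℝ × ℝ | 0 ≤ om (q - A) (B - A)} := by
    apply convexHull_min _ hhalf2
    rintro q (rfl | rfl | rfl)
    · simp [om]
    · exact hlp.le
    · simp [om, mul_comm]
  have hQC : convexHull ℝ W ⊆ C := convexHull_min hWC hcv
  have hun : convexHull ℝ (insert p W) = convexHull ℝ W ∪ convexHull ℝ {A, p, B} := by
    apply Subset.antisymm
    · rw [convexHull_insert ⟨A, hA⟩]
      intro z hz
      rw [mem_convexJoin] at hz
      obtain ⟨p', hp', q, hq, hz⟩ := hz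
      rw [mem_singleton_iff] at hp'
      subst p'
      rw [segment_symm, segment_eq_image'] at hz
      obtain ⟨θ, ⟨hθ0, hθ1⟩, rfl⟩ := hz
      simp only
      have hq0 := hQ hq
      simp only [mem_ofPred_eq] at hq0
      set a := om (q - A) (B - A)
      set b := om (p - A) (B - A)
      have hba : 0 < b - a := by linarith
      set τ := -a / (b - a) with hτ
      have hτ0 : 0 ≤ τ := div_nonneg (by linarith) hba.le
      have hτ1 : τ < 1 := by rw [hτ, div_lt_one hba]; linarith
      have hτe : τ * (b - a) = -a := div_mul_cancel₀ _ hba.ne'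
      set m := q + τ • (p - q) with hm
      have hmC : m ∈ C := mem_or hcv (hQC hq) hp hτ0 hτ1.le
      have hms : m ∈ segment ℝ A B := hchord m hmC (by rw [hm, hlin]; linarith)
      have hmW : m ∈ convexHull ℝ W :=
        (convex_convexHull ℝ W).segment_subset (subset_convexHull ℝ W hA) (subset_convexHull ℝ W hB) hms
      have sT := subset_convexHull ℝ ({A, p, B} : Set (ℝ × ℝ))
      have hmT : m ∈ convexHull ℝ {A, p, B} :=
        (convex_convexHull ℝ _).segment_subset (sT (by simp)) (sT (by simp)) hms
      rcases le_or_gt θ τ with h | h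
      · left
        rcases hτ0.eq_or_lt with h0 | h0
        · have : θ = 0 := by linarith
          rw [this]; simpa using hq
        · have := mem_or (convex_convexHull ℝ W) hq hmW (c := θ / τ) (by positivity) (by rw [div_le_one h0]; exact h)
          rw [hm, add_sub_cancel_left, smul_smul, div_mul_cancel₀ _ h0.ne'] at this
          exact this
      · right
        have := mem_or (convex_convexHull ℝ _) hmT (sT (show p ∈ _ by simp)) (c := (θ - τ) / (1 - τ))
          (div_nonneg (by linarith) (by linarith)) (by rw [div_le_one (by linarith)]; linarith)
        have e : p - m = (1 - τ) • (p - q) := by rw [hm]; module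
        rw [e, smul_smul, div_mul_cancel₀ _ (by linarith), hm] at this
        convert this using 1; module
    · apply union_subset (convexHull_mono (subset_insert _ _))
      apply convexHull_mono
      rintro q (rfl | rfl | rfl)
      · exact Or.inr hA
      · exact Or.inl rfl
      · exact Or.inr hB
  have hcl : IsClosed (convexHull ℝ ({A, p, B} : Set (ℝ × ℝ))) :=
    Set.Finite.isClosed_convexHull ℝ (by simp)
  have hd : AEDisjoint volume (convexHull ℝ W) (convexHull ℝ {A, p, B}) := by
    refine measure_mono_null ?_ (line_null A (B - A) hAB)
    rintro q ⟨h1, h2⟩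
    exact le_antisymm (hQ h1) (hT h2)
  rw [hun, measure_union₀ hcl.measurableSet.nullMeasurableSet hd, ENNReal.toReal_add, tri_vol, abs_of_pos hlp]
  · exact (hW.isCompact_convexHull ℝ).measure_lt_top.ne
  · exact ((show ({A, p, B} : Set (ℝ × ℝ)).Finite by simp).isCompact_convexHull ℝ).measure_lt_top.ne

end Cc

section D
open Set Filter Topology MeasureTheory

theorem chord_mem {C : Set (ℝ × ℝ)} (hconv : StrictConvex ℝ C) {A B : ℝ × ℝ} (hAC : A ∈ C) (hBC : B ∈ C)
    (hA : A ∈ frontier C) (hB : B ∈ frontier C) (hAB : A ≠ B) :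
    ∀ q ∈ C, om (q - A) (B - A) = 0 → q ∈ segment ℝ A B := by
  intro q hq h
  obtain ⟨c, hc⟩ := om_par h (sub_ne_zero.2 hAB.symm)
  have hqe : q = A + c • (B - A) := by rw [← hc]; module
  rcases lt_or_ge c 0 with h0 | h0
  · exfalso
    refine no_between hconv hq hBC hA ?_ (c := -c / (1 - c)) (div_pos (by linarith) (by linarith)) ?_ ?_
    · rintro rfl
      have : (1 - c) • (q - A) = 0 := by rw [sub_smul, ← hc]; module
      rcases smul_eq_zero.1 this with h | h
      · linarith
      · exact hAB (sub_eq_zero.1 h).symm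
    · rw [div_lt_one (by linarith)]; linarith
    · have : B - q = (1 - c) • (B - A) := by rw [sub_smul, ← hc]; module
      rw [this, smul_smul, div_mul_cancel₀ _ (by linarith), neg_smul, ← hc]; module
  rcases le_or_gt c 1 with h1 | h1
  · rw [segment_eq_image']
    exact ⟨c, ⟨h0, h1⟩, hqe.symm⟩
  · exfalso
    refine no_between hconv hAC hq hB ?_ (c := c⁻¹) (by positivity) (inv_lt_one_of_one_lt₀ h1) ?_
    · rintro rfl
      rw [sub_self] at hc
      rcases smul_eq_zero.1 hc.symm with h | h
      · linarith
      · exact hAB (sub_eq_zero.1 h).symm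
    · rw [hc, smul_smul, inv_mul_cancel₀ (by linarith), one_smul]

theorem range_eq {f : ℤ → ℝ × ℝ} {n : ℤ} (hn : 0 < n) (hf : ∀ j, f (j + n) = f j) (i : ℤ) :
    range f = insert (f i) (((Finset.Ioo i (i+n)).image f : Finset (ℝ × ℝ)) : Set (ℝ × ℝ)) := by
  have hp : Function.Periodic f n := hf
  ext z
  constructor
  · rintro ⟨j, rfl⟩
    have e : f j = f (i + (j - i) % n) := by
      have := hp.sub_zsmul_eq (x := j) ((j - i) / n)
      rw [← this]; congr 1
      have := Int.emod_add_mul_ediv (j - i) n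
      simp only [smul_eq_mul]
      linarith
    rw [e]
    have h1 := Int.emod_nonneg (j - i) hn.ne'
    have h2 := Int.emod_lt_of_pos (j - i) hn
    rcases h1.eq_or_lt with h | h
    · left; rw [← h]; simp
    · right
      simp only [Finset.coe_image, Finset.coe_Ioo]
      exact ⟨_, ⟨by linarith, by linarith⟩, rfl⟩
  · rintro (rfl | h)
    · exact ⟨i, rfl⟩
    · simp only [Finset.coe_image, Finset.coe_Ioo] at h
      obtain ⟨j, _, rfl⟩ := h
      exact ⟨j, rfl⟩

theorem stationary {x : ℝ → ℝ × ℝ} {lam : ℝ} (hlam : 0 < lam)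
    (hd : Differentiable ℝ x)
    (hper : ∀ t : ℝ, x (t + lam) = x t)
    (hinj : Set.InjOn x (Set.Ico 0 lam))
    {C : Set (ℝ × ℝ)} (hcl : IsClosed C) (hconv : StrictConvex ℝ C)
    (hf : ∀ t, x t ∈ frontier C)
    (hG : ∀ s t u, s < t → t < u → u < s + lam → 0 < om (x t - x s) (x u - x s))
    (n : ℕ) (hn : 3 ≤ n) (s : ℤ → ℝ) (hs : StrictMono s) (hcyc : ∀ i : ℤ, s (i + (n : ℤ)) = s i + lam)
    (hmax : ∀ S : Finset (ℝ × ℝ), (S : Set (ℝ × ℝ)) ⊆ frontier C → S.card ≤ n →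
      (volume (convexHull ℝ (S : Set (ℝ × ℝ)))).toReal ≤ (volume (convexHull ℝ (range fun i => x (s i)))).toReal)
    (i : ℤ) : om (deriv x (s i)) (x (s (i+1)) - x (s i)) = om (deriv x (s i)) (x (s (i-1)) - x (s i)) := by
  have hn' : (3:ℤ) ≤ n := by exact_mod_cast hn
  have hfp : ∀ j, x (s (j + n)) = x (s j) := fun j => by rw [hcyc, hper]
  set W := (Finset.Ioo i (i+n)).image (fun i => x (s i)) with hW
  have hV : range (fun i => x (s i)) = insert (x (s i)) (W : Set (ℝ × ℝ)) :=
    range_eq (by linarith) hfp i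
  have hWc : W.card + 1 ≤ n := by
    have : W.card ≤ _ := Finset.card_image_le
    rw [Int.card_Ioo] at this
    omega
  have m1 : s (i-1) < s i := hs (by linarith)
  have m2 : s i < s (i+1) := hs (by linarith)
  have e3 : s (i + n - 1) = s (i-1) + lam := by rw [← hcyc]; congr 1; ring
  have m3 : s (i+1) < s (i-1) + lam := by rw [← e3]; exact hs (by linarith)
  set A := x (s (i-1)) with hA
  set B := x (s (i+1)) with hB
  have hAB : A ≠ B := x_ne hlam hper hinj (by linarith) m3
  have fC := hcl.frontier_subset
  have hWf : (W : Set (ℝ × ℝ)) ⊆ frontier C := by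
    intro q hq
    simp only [hW, Finset.coe_image] at hq
    obtain ⟨j, _, rfl⟩ := hq
    exact hf _
  have hAW : A ∈ (W : Set (ℝ × ℝ)) := by
    simp only [hW, Finset.coe_image, Finset.coe_Ioo]
    exact ⟨i + n - 1, ⟨by linarith, by linarith⟩, by simp only [e3, hper, hA]⟩
  have hBW : B ∈ (W : Set (ℝ × ℝ)) := by
    simp only [hW, Finset.coe_image, Finset.coe_Ioo]
    exact ⟨i + 1, ⟨by linarith, by linarith⟩, rfl⟩
  have hl : ∀ q ∈ (W : Set (ℝ × ℝ)), om (q - A) (B - A) ≤ 0 := by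
    intro q hq
    simp only [hW, Finset.coe_image, Finset.coe_Ioo] at hq
    obtain ⟨j, ⟨hj1, hj2⟩, rfl⟩ := hq
    by_cases h1 : j = i + 1
    · subst h1; simp [om, ← hB, mul_comm]
    by_cases h2 : j = i + n - 1
    · subst h2; simp [om, e3, hper, ← hA]
    have := hG (s (i-1)) (s (i+1)) (s j) (by linarith) (hs (by omega)) (by rw [← e3]; exact hs (by omega))
    simp only [← hA, ← hB] at this
    simp [om] at this ⊢
    linarith
  have hdec : ∀ t ∈ Ioo (s (i-1)) (s (i+1)), _ := fun t ht =>
    decomp hconv.convex (p := x t) W.finite_toSet (hWf.trans fC) hAW hBW (fC (hf t))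
      (chord_mem hconv (fC (hf _)) (fC (hf _)) (hf _) (hf _) hAB) hl (hG _ _ _ ht.1 ht.2 m3)
  have hle : ∀ t ∈ Ioo (s (i-1)) (s (i+1)), om (x t - A) (B - A) ≤ om (x (s i) - A) (B - A) := by
    intro t ht
    have h1 := hdec t ht
    have h2 := hdec (s i) ⟨m1, m2⟩
    have h3 := hmax (insert (x t) W) (by
      rw [Finset.coe_insert]
      exact insert_subset (hf t) hWf) ((Finset.card_insert_le _ _).trans hWc)
    rw [hV, Finset.coe_insert, h1, h2] at h3
    exact le_of_mul_le_mul_right (by linarith) std_pos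
  have hmx : IsLocalMax (fun t => om (x t - A) (B - A)) (s i) := by
    filter_upwards [Ioo_mem_nhds m1 m2] with t ht using hle t ht
  have := hmx.hasDerivAt_eq_zero (om_hasDeriv_left (B - A) ((hd (s i)).hasDerivAt.sub_const A))
  simp [om] at this ⊢
  linarith

set_option maxHeartbeats 1000000 in
theorem key_s6 {x : ℝ → ℝ × ℝ} {lam : ℝ} (hlam : 0 < lam)
    (hx : ContDiff ℝ (⊤ : ℕ∞) x)
    (haff : ∀ t : ℝ, om (deriv x t) (iteratedDeriv 2 x t) = 1)
    (hper : ∀ t : ℝ, x (t + lam) = x t)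
    (hpos : ∀ s h, 0 < h → h < lam → 0 < om (deriv x s) (x (s+h) - x s)) :
    ∃ δ > 0, ∃ K > 0, ∀ s a b, 0 < a → 0 < b → b < δ → a + b < lam →
      om (deriv x s) (x (s+a) - x s) = om (deriv x s) (x (s-b) - x s) → |a - b| ≤ K * b^4 := by
  obtain ⟨K, hK, hT⟩ := taylor_phi hlam hx haff hper
  have hd : Differentiable ℝ x := hx.differentiable (by simp)
  have hc : Continuous x := hx.continuous
  have hc1 : Continuous (deriv x) := hx.continuous_deriv (by simp)
  obtain ⟨ε, hε0, hε1, hεl, hεK⟩ : ∃ ε : ℝ, 0 < ε ∧ ε ≤ 1 ∧ ε < lam / 2 ∧ K * ε ≤ 1/16 := by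
    refine ⟨min 1 (min (lam/4) (1/(16*K))), by positivity, min_le_left _ _, ?_, ?_⟩
    · exact ((min_le_right _ _).trans (min_le_left _ _)).trans_lt (by linarith)
    · have : min 1 (min (lam/4) (1/(16*K))) ≤ 1/(16*K) := (min_le_right _ _).trans (min_le_right _ _)
      rw [le_div_iff₀ (by positivity)] at this
      linarith
  -- lower bound on the middle range
  obtain ⟨m, hm0, hm⟩ : ∃ m > 0, ∀ s h, ε ≤ h → h ≤ lam - ε → m ≤ om (deriv x s) (x (s+h) - x s) := by
    have hcomp : IsCompact (Icc 0 lam ×ˢ Icc ε (lam - ε)) := isCompact_Icc.prod isCompact_Icc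
    have hcont : Continuous fun p : ℝ × ℝ => om (deriv x p.1) (x (p.1 + p.2) - x p.1) :=
      om_cont (by fun_prop) (by fun_prop)
    obtain ⟨p, hp, hmin⟩ := hcomp.exists_isMinOn ⟨(0, ε), by simp [hlam.le]; linarith⟩ hcont.continuousOn
    refine ⟨_, hpos p.1 p.2 (by linarith [hp.2.1]) (by linarith [hp.2.2]), fun s h h1 h2 => ?_⟩
    have hmem := toIcoMod_mem_Ico hlam 0 s
    rw [zero_add] at hmem
    have := hmin (show (toIcoMod hlam 0 s, h) ∈ Icc 0 lam ×ˢ Icc ε (lam - ε) from ⟨⟨hmem.1, hmem.2.le⟩, h1, h2⟩)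
    simp only [mem_ofPred_eq] at this
    have hp1 : ∀ t, deriv x (t + lam) = deriv x t := fun t => by
      rw [← deriv_comp_add_const]; congr 1; exact funext hper
    have hp2 : ∀ t, (fun t => x (t + h)) (t + lam) = (fun t => x (t + h)) t := fun t => by
      simp only []; rw [add_right_comm, hper]
    have e2 : x (toIcoMod hlam 0 s + h) = x (s + h) := by
      have hp : Function.Periodic (fun t => x (t + h)) lam := hp2
      exact hp.sub_zsmul_eq _
    have e1 : deriv x (toIcoMod hlam 0 s) = deriv x s := by
      have hp : Function.Periodic (deriv x) lam := hp1
      exact hp.sub_zsmul_eq _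
    rw [e1, e2, x_mod hlam hper] at this
    exact this
  refine ⟨min ε m, by positivity, 68 * K, by positivity, fun s a b ha hb hbδ hab he => ?_⟩
  have hbε : b < ε := hbδ.trans_le (min_le_left _ _)
  have hbm : b < m := hbδ.trans_le (min_le_right _ _)
  obtain ⟨κ, hκ, hT⟩ := hT s
  have hκ' := abs_le.1 hκ
  have Tb := abs_le.1 (hT (-b)).2
  rw [abs_neg, abs_of_pos hb, ← sub_eq_add_neg] at Tb
  -- a is small
  have haε : a < ε := by
    by_contra hcon
    push Not at hcon
    rcases le_or_gt a (lam - ε) with h | h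
    · have := hm s a hcon h
      rw [he] at this
      have hb1 : b ≤ 1 := by linarith
      have q4 : b^4 ≤ b^2 := pow_le_pow_of_le_one hb.le hb1 (by norm_num)
      have q5 : b^5 ≤ b^3 := pow_le_pow_of_le_one hb.le hb1 (by norm_num)
      have q4' : b^4 ≤ b^3 := pow_le_pow_of_le_one hb.le hb1 (by norm_num)
      have q2 : b^2 ≤ b := by nlinarith
      have k1 : K * b ≤ 1/16 := by nlinarith
      have k3 : K * b^3 ≤ b^2/16 := by nlinarith [pow_pos hb 2]
      have k5 : K * b^5 ≤ K * b^3 := by nlinarith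
      have k4 : κ * b^4 ≤ K * b^3 := by
        have w1 := mul_le_mul_of_nonneg_right hκ'.2 (pow_pos hb 4).le
        have w2 := mul_le_mul_of_nonneg_left q4' hK.le
        linarith
      have w3 : (-b)^2 = b^2 := by ring
      have w4 : (-b)^4 = b^4 := by ring
      rw [w3, w4] at Tb
      linarith [Tb.2]
    · set e := lam - a with hee
      have hpe : x (s + a) = x (s + -e) := by
        rw [← hper (s + -e)]; congr 1; simp only [hee]; ring
      have hbe : -e < -b := by linarith
      have hder : ∀ h, HasDerivAt (fun h => om (deriv x s) (x (s + h) - x s)) (om (deriv x s) (deriv x (s+h))) h :=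
        fun h => om_hasDeriv_right _ (((hd (s+h)).hasDerivAt.comp_const_add s h).sub_const _)
      obtain ⟨h, hh, hz⟩ := exists_hasDerivAt_eq_zero hbe
        (continuous_iff_continuousAt.2 fun h => (hder h).continuousAt).continuousOn
        (by rw [← hpe, he, ← sub_eq_add_neg]) (fun h _ => hder h)
      have h1 := abs_le.1 (hT h).1
      rw [hz] at h1
      have hneg : h < 0 := by linarith [hh.2]
      have hg : -ε < h := by linarith [hh.1]
      obtain ⟨g, rfl⟩ : ∃ g, h = -g := ⟨-h, by ring⟩
      have hg0 : 0 < g := by linarith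
      rw [abs_neg, abs_of_pos hg0] at h1
      have hg1 : g ≤ 1 := by linarith
      have kg : K * g ≤ 1/16 := by nlinarith
      have q3 : g^3 ≤ g^2 := pow_le_pow_of_le_one hg0.le hg1 (by norm_num)
      have q4 : g^4 ≤ g^2 := pow_le_pow_of_le_one hg0.le hg1 (by norm_num)
      have k2 : K * g^2 ≤ g/16 := by nlinarith
      have k4 : K * g^4 ≤ K * g^2 := by nlinarith
      have k3 : -(K * g^2) ≤ κ * g^3 := by
        have w1 := mul_le_mul_of_nonneg_right hκ'.1 (pow_pos hg0 3).le
        have w2 := mul_le_mul_of_nonneg_left q3 hK.le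
        linarith
      have w3 : (-g)^3 = -g^3 := by ring
      rw [w3] at h1
      linarith [h1.2]
  have Ta := abs_le.1 (hT a).2
  rw [abs_of_pos ha] at Ta
  rw [he] at Ta
  have hZ : |(a - b) * (1/2 + κ * (a^2+b^2)/24)| ≤ K * (a^4 + b^4) := by
    have h1 : |(a - b) * (1/2 + κ * (a^2+b^2)/24)| * (a + b) ≤ K * (a^4 + b^4) * (a + b) := by
      rw [← abs_of_pos (add_pos ha hb), ← abs_mul, abs_of_pos (add_pos ha hb)]
      have e5 : a^5 + b^5 ≤ (a^4+b^4) * (a+b) := by nlinarith [mul_pos (pow_pos ha 4) hb, mul_pos (pow_pos hb 4) ha]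
      have e6 := mul_le_mul_of_nonneg_left e5 hK.le
      have e7 : (a - b) * (1/2 + κ * (a^2+b^2)/24) * (a + b) = (a^2/2 + κ * a^4/24) - (b^2/2 + κ * b^4/24) := by ring
      rw [e7, abs_le]
      constructor <;> nlinarith [Ta.1, Ta.2, Tb.1, Tb.2]
    exact le_of_mul_le_mul_right h1 (add_pos ha hb)
  have hcoef : 1/4 ≤ 1/2 + κ * (a^2+b^2)/24 := by
    have ka : K * a^2 ≤ 1/16 := by nlinarith
    have kb : K * b^2 ≤ 1/16 := by nlinarith
    have : -(K * (a^2+b^2)) ≤ κ * (a^2+b^2) := by nlinarith [pow_pos ha 2, pow_pos hb 2]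
    linarith
  rw [abs_mul, abs_of_pos (show 0 < 1/2 + κ * (a^2+b^2)/24 by linarith)] at hZ
  have hab4 : |a - b| ≤ 4 * K * (a^4+b^4) := by
    have := mul_le_mul_of_nonneg_left hcoef (abs_nonneg (a - b))
    linarith
  have small : ∀ c, 0 < c → c < ε → 4 * K * c^4 ≤ c / 4 := by
    intro c hc hcε
    have hc1 : c ≤ 1 := by linarith
    have k1 : K * c ≤ 1/16 := by nlinarith
    have q4 : c^4 ≤ c^2 := pow_le_pow_of_le_one hc.le hc1 (by norm_num)
    have : K * c^4 ≤ K * c^2 := by nlinarith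
    nlinarith
  have sa := small a ha haε
  have sb := small b hb hbε
  have h2b : a ≤ 2 * b := by
    have := (abs_le.1 hab4).2
    nlinarith
  have h4 : a^4 ≤ (2*b)^4 := by gcongr
  have : 4 * K * a^4 ≤ 4 * K * (2*b)^4 := by gcongr
  calc |a - b| ≤ _ := hab4
    _ ≤ 68 * K * b^4 := by nlinarith

theorem cyc_mul {n : ℕ} {lam : ℝ} {s : ℤ → ℝ} (hcyc : ∀ i : ℤ, s (i + (n : ℤ)) = s i + lam) (i q : ℤ) :
    s (i + n * q) = s i + q * lam := by
  induction q using Int.induction_on with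
  | zero => simp
  | succ q ih =>
    have := hcyc (i + n * q)
    rw [show i + n * ((q:ℤ) + 1) = i + n * q + n by ring, this, ih]; push_cast; ring
  | pred q ih =>
    have := hcyc (i + n * (-(q:ℤ) - 1))
    rw [show i + n * (-(q:ℤ) - 1) + n = i + n * (-q) by ring, ih] at this
    push_cast at *
    linarith

theorem s_mono {n : ℕ} (hn : 3 ≤ n) {lam : ℝ} {s : ℤ → ℝ} (h0 : 0 ≤ s 1)
    (hmono : ∀ i : ℤ, 1 ≤ i → i < (n : ℤ) → s i < s (i + 1))
    (hlast : s (n : ℤ) < lam)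
    (hcyc : ∀ i : ℤ, s (i + (n : ℤ)) = s i + lam) : StrictMono s := by
  have hn' : (3:ℤ) ≤ n := by exact_mod_cast hn
  have base : ∀ r : ℤ, 1 ≤ r → r ≤ n → s r < s (r+1) := by
    intro r h1 h2
    rcases h2.eq_or_lt with rfl | h
    · rw [add_comm, hcyc]; linarith
    · exact hmono r h1 h
  apply strictMono_int_of_lt_succ
  intro i
  have e := Int.emod_add_mul_ediv (i - 1) n
  have l1 := Int.emod_nonneg (i - 1) (show (n:ℤ) ≠ 0 by omega)
  have l2 := Int.emod_lt_of_pos (i - 1) (show (0:ℤ) < n by omega)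
  set r := (i-1) % n
  set q := (i-1) / n
  have b := base (r+1) (by linarith) (by linarith)
  have e1 := cyc_mul hcyc (r+1) q
  have e2 := cyc_mul hcyc (r+1+1) q
  rw [show i = r + 1 + n * q by linarith, show r + 1 + n * q + 1 = r + 1 + 1 + n * q by ring, e1, e2]
  linarith

theorem comb {lam δ K : ℝ} (hlam : 0 < lam) (hδ : 0 < δ) (hK : 0 < K) :
    ∃ D > (0 : ℝ), ∃ N : ℕ, 3 ≤ N ∧ ∀ n : ℕ, N ≤ n → ∀ s : ℤ → ℝ, StrictMono s →
      (∀ i : ℤ, s (i + (n : ℤ)) = s i + lam) →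
      (∀ i, s i - s (i-1) < δ → |(s (i+1) - s i) - (s i - s (i-1))| ≤ K * (s i - s (i-1))^4) →
      ∀ i : ℤ, 1 ≤ i → i ≤ n → |s i - s (i-1) - lam / n| ≤ D / (n:ℝ)^3 := by
  set D := 16 * K * lam^4 with hD
  obtain ⟨N, hN⟩ := exists_nat_gt (2 * lam / δ + D / lam + 3)
  have p1 : 0 < 2 * lam / δ := by positivity
  have p2 : 0 < D / lam := by positivity
  refine ⟨D, by positivity, N, by exact_mod_cast (show (3:ℝ) ≤ N by linarith), fun n hn s hs hcyc hstep => ?_⟩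
  have hnR : (N:ℝ) ≤ n := by exact_mod_cast hn
  have hn0 : (0:ℝ) < n := by linarith
  have hn1 : (1:ℝ) ≤ n := by linarith
  have hnZ : (0:ℤ) < n := by exact_mod_cast hn0
  have c1 : 2 * lam / n < δ := by
    rw [div_lt_iff₀ hn0]
    have : 2 * lam / δ < n := by linarith
    rw [div_lt_iff₀ hδ] at this; linarith
  have c2 : D / (n:ℝ)^3 ≤ lam / n := by
    have : D / lam < n := by linarith
    rw [div_lt_iff₀ hlam] at this
    rw [div_le_div_iff₀ (by positivity) hn0]
    calc D * n ≤ (n * lam) * n := by gcongr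
      _ = lam * n^2 * 1 := by ring
      _ ≤ lam * n^2 * n := by gcongr
      _ = lam * n^3 := by ring
  have c3 : (n:ℝ) * (D / (n:ℝ)^4) = D / (n:ℝ)^3 := by field_simp
  set g : ℤ → ℝ := fun i => s i - s (i-1) with hg
  have gpos : ∀ i, 0 < g i := fun i => sub_pos.2 (hs (by linarith))
  have gper : ∀ i, g (i + n) = g i := by
    intro i; simp only [hg]
    rw [show i + n - 1 = (i - 1) + n by ring, hcyc, hcyc]; ring
  have gstep : ∀ i, g i ≤ 2 * lam / n → |g (i+1) - g i| ≤ D / (n:ℝ)^4 := by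
    intro i hi
    have h := hstep i (hi.trans_lt c1)
    simp only [hg, add_sub_cancel_right]
    refine h.trans ?_
    have : (g i)^4 ≤ (2 * lam / n)^4 := pow_le_pow_left₀ (gpos i).le hi 4
    calc K * (g i)^4 ≤ K * (2 * lam / n)^4 := by gcongr
      _ = _ := by rw [hD]; field_simp; ring
  have tel : ∀ c : ℝ, (∀ i, 1 ≤ i → i ≤ (n:ℤ) → c < g i) → c < lam / n := by
    intro c hc
    have : ∀ j : ℕ, 1 ≤ j → (j:ℤ) ≤ n → (j:ℝ) * c < s j - s 0 := by
      intro j hj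
      induction j, hj using Nat.le_induction with
      | base => intro h; have := hc 1 le_rfl h; simp only [hg] at this; simpa using this
      | succ j hj ih =>
        intro h
        have := ih (by push_cast at h; linarith)
        have h2 := hc (j+1) (by omega) (by exact_mod_cast h)
        simp only [hg, add_sub_cancel_right] at h2
        push_cast; linarith
    have h := this n (by exact_mod_cast hnZ) le_rfl
    have e := hcyc 0
    rw [zero_add] at e
    rw [lt_div_iff₀ hn0]; linarith
  have tel2 : ∀ c : ℝ, (∀ i, 1 ≤ i → i ≤ (n:ℤ) → g i < c) → lam / n < c := by
    intro c hc
    have : ∀ j : ℕ, 1 ≤ j → (j:ℤ) ≤ n → s j - s 0 < (j:ℝ) * c := by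
      intro j hj
      induction j, hj using Nat.le_induction with
      | base => intro h; have := hc 1 le_rfl h; simp only [hg] at this; simpa using this
      | succ j hj ih =>
        intro h
        have := ih (by push_cast at h; linarith)
        have h2 := hc (j+1) (by omega) (by exact_mod_cast h)
        simp only [hg, add_sub_cancel_right] at h2
        push_cast; linarith
    have h := this n (by exact_mod_cast hnZ) le_rfl
    have e := hcyc 0
    rw [zero_add] at e
    rw [div_lt_iff₀ hn0]; linarith
  obtain ⟨i0, h01, h02, h03⟩ : ∃ i, 1 ≤ i ∧ i ≤ (n:ℤ) ∧ g i ≤ lam / n := by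
    by_contra hcon; push Not at hcon
    exact lt_irrefl _ (tel _ hcon)
  obtain ⟨i1, h11, h12, h13⟩ : ∃ i, 1 ≤ i ∧ i ≤ (n:ℤ) ∧ lam / n ≤ g i := by
    by_contra hcon; push Not at hcon
    exact lt_irrefl _ (tel2 _ hcon)
  have reach : ∀ i k : ℤ, 1 ≤ i → i ≤ n → 1 ≤ k → k ≤ n → ∃ j : ℕ, j ≤ n ∧ g (k + j) = g i := by
    intro i k _ _ _ _
    rcases le_or_gt k i with h | h
    · refine ⟨(i - k).toNat, by omega, ?_⟩
      congr 1; omega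
    · refine ⟨(i + n - k).toNat, by omega, ?_⟩
      rw [← gper i]; congr 1; omega
  have pn : 0 ≤ D / (n:ℝ)^4 := by positivity
  have hjn : ∀ j : ℕ, j ≤ n → (j:ℝ) * (D / (n:ℝ)^4) ≤ D / (n:ℝ)^3 := by
    intro j hj
    rw [← c3]
    have : (j:ℝ) ≤ n := by exact_mod_cast hj
    gcongr
  have two : 2 * lam / n = lam / n + lam / n := by ring
  have up : ∀ j : ℕ, j ≤ n → g (i0 + j) ≤ lam / n + j * (D / (n:ℝ)^4) := by
    intro j
    induction j with
    | zero => intro _; simpa using h03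
    | succ j ih =>
      intro h
      have h1 := ih (by omega)
      have h2 := (abs_le.1 (gstep (i0 + j) (by linarith [hjn j (by omega)]))).2
      push_cast
      rw [← add_assoc]
      linarith
  have upper : ∀ i, 1 ≤ i → i ≤ (n:ℤ) → g i ≤ lam / n + D / (n:ℝ)^3 := by
    intro i h1 h2
    obtain ⟨j, hj, e⟩ := reach i i0 h1 h2 h01 h02
    rw [← e]; linarith [up j hj, hjn j hj]
  have upper' : ∀ i, 1 ≤ i → i ≤ 2 * (n:ℤ) → g i ≤ 2 * lam / n := by
    intro i h1 h2
    rcases le_or_gt i n with h | h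
    · linarith [upper i h1 h]
    · have := gper (i - n)
      rw [sub_add_cancel] at this
      rw [this]; linarith [upper (i - n) (by omega) (by omega)]
  have lo : ∀ j : ℕ, j ≤ n → lam / n - j * (D / (n:ℝ)^4) ≤ g (i1 + j) := by
    intro j
    induction j with
    | zero => intro _; simpa using h13
    | succ j ih =>
      intro h
      have h1 := ih (by omega)
      have h2 := (abs_le.1 (gstep (i1 + j) (upper' _ (by omega) (by omega)))).1
      push_cast
      rw [← add_assoc]
      linarith
  intro i h1 h2
  obtain ⟨j, hj, e⟩ := reach i i1 h1 h2 h11 h12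
  have l := lo j hj
  have l2 := hjn j hj
  rw [e] at l
  have u := upper i h1 h2
  rw [abs_le]
  constructor <;> simp only [hg] at l u <;> linarith

end D

theorem stmt_6 (x : ℝ → ℝ × ℝ) (lam : ℝ) (hlam : 0 < lam)
    (hx : ContDiff ℝ (⊤ : ℕ∞) x)
    (haff : ∀ t : ℝ, om (deriv x t) (iteratedDeriv 2 x t) = 1)
    (hper : ∀ t : ℝ, x (t + lam) = x t)
    (hinj : Set.InjOn x (Set.Ico 0 lam))
    (C : Set (ℝ × ℝ)) (hC : C = convexHull ℝ (x '' Set.Icc 0 lam))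
    (hcomp : IsCompact C) (hconv : StrictConvex ℝ C)
    (hbd : x '' Set.Icc 0 lam = frontier C)
    (k : ℝ → ℝ) (hk : ∀ t : ℝ, k t = om (iteratedDeriv 2 x t) (iteratedDeriv 3 x t))
    -- the vertex parameters of best approximating inscribed polygons
    (s : ℕ → ℤ → ℝ)
    (hs0 : ∀ n : ℕ, 3 ≤ n → 0 ≤ s n 1)
    (hmono : ∀ n : ℕ, 3 ≤ n → ∀ i : ℤ, 1 ≤ i → i < (n : ℤ) → s n i < s n (i + 1))
    (hlast : ∀ n : ℕ, 3 ≤ n → s n (n : ℤ) < lam)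
    (hcyc : ∀ n : ℕ, 3 ≤ n → ∀ i : ℤ, s n (i + (n : ℤ)) = s n i + lam)
    (hbest : ∀ n : ℕ, 3 ≤ n →
      (volume (convexHull ℝ
        (((Finset.Icc (1 : ℤ) (n : ℤ)).image fun i => x (s n i) : Finset (ℝ × ℝ)) :
          Set (ℝ × ℝ)))).toReal =
      sSup { A : ℝ | ∃ S : Finset (ℝ × ℝ), ↑S ⊆ frontier C ∧ S.card ≤ n ∧
        A = (volume (convexHull ℝ (S : Set (ℝ × ℝ)))).toReal })
    -- the arc lengths λ_{n,i}
    (lamn : ℕ → ℤ → ℝ) (hlamn : ∀ n : ℕ, ∀ i : ℤ, lamn n i = s n i - s n (i - 1)) :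
    -- conclusion: |λ_{n,i} − λ/n| ≤ D/n³ for all n ≥ N, 1 ≤ i ≤ n
    ∃ D > (0 : ℝ), ∃ N : ℕ, ∀ n : ℕ, N ≤ n → ∀ i : ℤ, 1 ≤ i → i ≤ (n : ℤ) →
      |lamn n i - lam / n| ≤ D / (n : ℝ) ^ 3 := by
  have hd : Differentiable ℝ x := hx.differentiable (by simp)
  have hcl : IsClosed C := hcomp.isClosed
  have hf : ∀ t, x t ∈ frontier C := by
    intro t
    rw [← hbd, ← x_mod hlam hper t]
    have := toIcoMod_mem_Ico hlam 0 t
    rw [zero_add] at this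
    exact ⟨_, ⟨this.1, this.2.le⟩, rfl⟩
  have hG := G_pos hlam hx haff hper hinj hcl hconv hf
  have hx0 : ∀ s, deriv x s ≠ 0 := by
    intro s h
    have := haff s
    rw [h] at this
    simp [om] at this
  have hpos := phi_pos hd hx0 hG
  obtain ⟨δ, hδ, K, hK, hkey⟩ := key_s6 hlam hx haff hper hpos
  obtain ⟨D, hD, N, hN3, hcomb⟩ := comb hlam hδ hK
  refine ⟨D, hD, N, fun n hn i h1 h2 => ?_⟩
  have hn3 : 3 ≤ n := hN3.trans hn
  have hnZ : (3:ℤ) ≤ n := by exact_mod_cast hn3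
  have hs := s_mono hn3 (hs0 n hn3) (hmono n hn3) (hlast n hn3) (hcyc n hn3)
  rw [hlamn]
  refine hcomb n hn (s n) hs (hcyc n hn3) (fun i hi => ?_) i h1 h2
  have hrange : (((Finset.Icc (1 : ℤ) (n : ℤ)).image fun i => x (s n i) : Finset (ℝ × ℝ)) :
          Set (ℝ × ℝ)) = Set.range fun i => x (s n i) := by
    rw [range_eq (f := fun i => x (s n i)) (n := n) (by omega)
      (fun j => by simp only [hcyc n hn3, hper]) 1]
    rw [← Finset.coe_insert, ← Finset.image_insert (fun i => x (s n i))]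
    congr 2
    ext j; simp; omega
  have hmax : ∀ S : Finset (ℝ × ℝ), (S : Set (ℝ × ℝ)) ⊆ frontier C → S.card ≤ n →
      (volume (convexHull ℝ (S : Set (ℝ × ℝ)))).toReal ≤
        (volume (convexHull ℝ (Set.range fun i => x (s n i)))).toReal := by
    intro S hS hSn
    rw [← hrange, hbest n hn3]
    refine le_csSup ⟨(volume C).toReal, ?_⟩ ⟨S, hS, hSn, rfl⟩
    rintro A ⟨S, hS, _, rfl⟩
    exact ENNReal.toReal_mono hcomp.measure_lt_top.ne
      (measure_mono (convexHull_min (hS.trans hcl.frontier_subset) hconv.convex))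
  have hst := stationary hlam hd hper hinj hcl hconv hf hG n hn3 (s n) hs (hcyc n hn3) hmax i
  have m1 : s n (i-1) < s n i := hs (by omega)
  have m2 : s n i < s n (i+1) := hs (by omega)
  have m3 : s n (i+1) < s n (i-1) + lam := by
    rw [← hcyc n hn3]; exact hs (by omega)
  refine hkey (s n i) _ _ (by linarith) (by linarith) hi (by linarith) ?_
  rw [add_sub_cancel, sub_sub_cancel]
  exact hst
end
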